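/- For every universal oracle machine U, the cofiniteness probability μ(COF(U)) (the probability that U computes a function with cofinite domain) is a 3-random 0''-left-c.e. real, and the computability probability μ(COM(U)) is a 3-random 0''-left-c.e. real. Conversely, every 3-random 0''-left-c.e. real α ∈ (0,1) equals μ(COF(U)) for some universal oracle machine U, and also equals μ(COM(V)) for some universal oracle machine V. -/

import Mathlib

open scoped Classical
open MeasureTheory

namespace RandProb

/-- Cantor space: the space of infinite binary sequences. -/
abbrev Cantor := ℕ → Bool

/-! ### Oracle partial recursive functions, via codes -/

/-- Codes for partial recursive functions with access to an oracle `O : ℕ → ℕ`.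
These codes play the role of (oracle) Turing machines. -/
inductive CodeO : Type
  | zero : CodeO
  | succ : CodeO
  | left : CodeO
  | right : CodeO
  | oracle : CodeO
  | pair : CodeO → CodeO → CodeO
  | comp : CodeO → CodeO → CodeO
  | prec : CodeO → CodeO → CodeO
  | rfind' : CodeO → CodeO

/-- Evaluation of an oracle code with (total) oracle `O`. -/
def CodeO.eval (O : ℕ → ℕ) : CodeO → ℕ →. ℕ
  | .zero => pure 0
  | .succ => Nat.succ
  | .left => ↑fun n : ℕ => n.unpair.1
  | .right => ↑fun n : ℕ => n.unpair.2
  | .oracle => ↑fun n : ℕ => O n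
  | .pair cf cg => fun n => Nat.pair <$> cf.eval O n <*> cg.eval O n
  | .comp cf cg => fun n => cg.eval O n >>= cf.eval O
  | .prec cf cg =>
    Nat.unpaired fun a n =>
      n.rec (cf.eval O a) fun y IH => do
        let i ← IH
        cg.eval O (Nat.pair a (Nat.pair y i))
  | .rfind' cf =>
    Nat.unpaired fun a m =>
      (Nat.rfind fun n => (fun m => m = 0) <$> cf.eval O (Nat.pair a (n + m))).map (· + m)

/-- A canonical injective numbering of oracle codes. -/
def CodeO.encode : CodeO → ℕ
  | .zero => 0
  | .succ => 1
  | .left => 2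
  | .right => 3
  | .oracle => 4
  | .pair cf cg => 2 * (2 * Nat.pair cf.encode cg.encode) + 5
  | .comp cf cg => 2 * (2 * Nat.pair cf.encode cg.encode + 1) + 5
  | .prec cf cg => 2 * (2 * Nat.pair cf.encode cg.encode) + 6
  | .rfind' cf => 2 * (2 * cf.encode + 1) + 6

/-- The Turing jump of an oracle: the halting problem relative to `O`,
as a `{0,1}`-valued function. -/
noncomputable def jump (O : ℕ → ℕ) : ℕ → ℕ := fun e =>
  if ∃ c : CodeO, c.encode = e ∧ (c.eval O e).Dom then 1 else 0

/-- `iterJump n` is `∅^(n)`, the `n`-th iterate of the halting problem (as an oracle). -/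
noncomputable def iterJump : ℕ → ℕ → ℕ
  | 0 => fun _ => 0
  | n + 1 => jump (iterJump n)

/-- `S ⊆ ℕ` is computably enumerable relative to the oracle `O`. -/
def CeIn (O : ℕ → ℕ) (S : Set ℕ) : Prop := ∃ c : CodeO, S = {m | (c.eval O m).Dom}

/-- The left Dedekind cut of `α` (as a set of codes of rationals) is c.e. in `O`. -/
def LeftCeIn (O : ℕ → ℕ) (α : ℝ) : Prop :=
  CeIn O {m | ∃ q : ℚ, Encodable.encode q = m ∧ (q : ℝ) < α}

/-- The right Dedekind cut of `α` (as a set of codes of rationals) is c.e. in `O`. -/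
def RightCeIn (O : ℕ → ℕ) (α : ℝ) : Prop :=
  CeIn O {m | ∃ q : ℚ, Encodable.encode q = m ∧ α < (q : ℝ)}

/-! ### Martin-Löf randomness for real numbers -/

/-- The `i`-th component of a Martin-Löf test coded by the set `W ⊆ ℕ`:
the union of all open rational intervals whose codes are enumerated into the
`i`-th section of `W`. -/
def testSet (W : Set ℕ) (i : ℕ) : Set ℝ :=
  {x | ∃ p q : ℚ, Nat.pair i (Encodable.encode (p, q)) ∈ W ∧ (p : ℝ) < x ∧ x < (q : ℝ)}

/-- `α` is Martin-Löf random relative to the oracle `O`. -/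
def MLRandomIn (O : ℕ → ℕ) (α : ℝ) : Prop :=
  ∀ W : Set ℕ, CeIn O W →
    (∀ i, volume (testSet W i) ≤ ENNReal.ofReal ((2 : ℝ)⁻¹ ^ i)) →
    ∃ i, α ∉ testSet W i

/-- `α` is `n`-random: Martin-Löf random relative to `∅^(n-1)`. -/
def NRandom (n : ℕ) (α : ℝ) : Prop := MLRandomIn (iterJump (n - 1)) α

/-! ### The uniform measure on Cantor space -/

/-- The binary digits of a real number (meaningful on `[0,1)`). -/
noncomputable def digits (x : ℝ) : Cantor := fun n => decide (⌊x * 2 ^ (n + 1)⌋ % 2 = 1)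

/-- The uniform (Lebesgue) product measure on Cantor space, obtained as the
pushforward of Lebesgue measure on `[0,1)` under the binary-digit map. -/
noncomputable def mu : Measure Cantor :=
  Measure.map digits (volume.restrict (Set.Ico (0 : ℝ) 1))

/-- The uniform measure of a set of elements of Cantor space, as a real number. -/
noncomputable def muR (S : Set Cantor) : ℝ := (mu S).toReal

/-! ### Strings, prefixes and cylinders -/

/-- The length-`n` initial segment of `X ∈ 2^ω`, as a finite binary string. -/
def initSeg (X : Cantor) (n : ℕ) : List Bool := (List.range n).map X

/-- `⟦S⟧`: the elements of Cantor space having a prefix in the set of strings `S`. -/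
def cyl (S : Set (List Bool)) : Set Cantor := {X | ∃ n, initSeg X n ∈ S}

/-- A set of strings is prefix-free if none of its elements properly extends another. -/
def IsPrefixFree (S : Set (List Bool)) : Prop := ∀ σ ∈ S, ∀ τ ∈ S, σ <+: τ → σ = τ

/-- A set of strings is upward closed if it is closed under taking extensions. -/
def UpClosed (S : Set (List Bool)) : Prop := ∀ σ ∈ S, ∀ τ, σ <+: τ → τ ∈ S

/-- Two strings are compatible if one is a prefix of the other. -/
def Compatible (σ τ : List Bool) : Prop := σ <+: τ ∨ τ <+: σ

/-! ### Oracle machines -/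

/-- An element of Cantor space viewed as a `{0,1}`-valued oracle. -/
def oX (X : Cantor) : ℕ → ℕ := fun n => cond (X n) 1 0

/-- `evalO X c n`: the (possibly divergent) output of the oracle machine `c`
on input `n` with oracle `X`. -/
def evalO (X : Cantor) (c : CodeO) (n : ℕ) : Part ℕ := c.eval (oX X) n

/-- The oracle obtained by writing the string `ρ` before the bits of `X`. -/
def prepend (ρ : List Bool) (X : Cantor) : Cantor := fun n =>
  if n < ρ.length then ρ.getD n false else X (n - ρ.length)

/-- `X ∈ 2^ω` extends the finite string `ρ`. -/
def Extends (X : Cantor) (ρ : List Bool) : Prop := initSeg X ρ.length = ρ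

/-- `u` is a universal oracle machine: some effective, prefix-free translation
`c ↦ σ_c` satisfies `u(σ_c * X, n) ≃ c(X, n)` for all machines `c`. -/
def UniversalOM (u : CodeO) : Prop :=
  ∃ σ : CodeO → List Bool,
    (∃ f : ℕ → ℕ, Computable f ∧ ∀ c : CodeO, f c.encode = Encodable.encode (σ c)) ∧
    IsPrefixFree (Set.range σ) ∧
    ∀ (c : CodeO) (X : Cantor) (n : ℕ), evalO (prepend (σ c) X) u n = evalO X c n

/-- `TOT(c)`: the oracles `X` such that the function `c(X)` is total. -/
def TOT (c : CodeO) : Set Cantor := {X | ∀ n, (evalO X c n).Dom}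

/-- The domain of the partial function `c(X)`. -/
def domSet (c : CodeO) (X : Cantor) : Set ℕ := {n | (evalO X c n).Dom}

/-- The range of the partial function `c(X)`. -/
def ranSet (c : CodeO) (X : Cantor) : Set ℕ := {v | ∃ n, v ∈ evalO X c n}

/-- `INF(c)`: the oracles `X` such that `c(X)` has infinite domain. -/
def INF (c : CodeO) : Set Cantor := {X | (domSet c X).Infinite}

/-- `COF(c)`: the oracles `X` such that `c(X)` has cofinite domain. -/
def COF (c : CodeO) : Set Cantor := {X | (domSet c X)ᶜ.Finite}

/-- `COM(c)`: the oracles `X` such that `c(X)` has computable domain. -/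
def COM (c : CodeO) : Set Cantor := {X | ComputablePred fun n => n ∈ domSet c X}

/-- The characteristic function of a set of naturals. -/
noncomputable def chi (A : Set ℕ) : ℕ → ℕ := fun n => if n ∈ A then 1 else 0

/-- Turing reducibility between sets of naturals. -/
def TuringLEs (B A : Set ℕ) : Prop := ∃ c : CodeO, ∀ n, c.eval (chi A) n = Part.some (chi B n)

/-- The halting problem `∅'` as a set of naturals. -/
noncomputable def HaltingSet : Set ℕ := {e | iterJump 1 e = 1}

/-- `COMPL(c)`: the oracles `X` such that the domain of `c(X)` computes the halting problem. -/
noncomputable def COMPL (c : CodeO) : Set Cantor := {X | TuringLEs HaltingSet (domSet c X)}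

/-- Turing reducibility between total functions on ℕ. -/
def TuringLEf (f g : ℕ → ℕ) : Prop := ∃ c : CodeO, ∀ n, c.eval g n = Part.some (f n)

/-- A real number viewed as an oracle, via its binary expansion. -/
noncomputable def realOracle (α : ℝ) : ℕ → ℕ := oX (digits α)

/-- Two reals have Turing-incomparable degrees. -/
noncomputable def TIncompReal (α β : ℝ) : Prop :=
  ¬ TuringLEf (realOracle α) (realOracle β) ∧ ¬ TuringLEf (realOracle β) (realOracle α)

/-! ### Arithmetical hierarchy -/

/-- Evaluation with the trivial (empty) oracle: ordinary partial recursion. -/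
def eval0 (c : CodeO) : ℕ →. ℕ := c.eval fun _ => 0

/-- `SigmaNumIdx n c` is the `Σ^0_{n+1}` subset of `ℕ` with index `c`. -/
def SigmaNumIdx : ℕ → CodeO → Set ℕ
  | 0, c => {m | (eval0 c m).Dom}
  | n + 1, c => {m | ∃ k, Nat.pair m k ∉ SigmaNumIdx n c}

/-- `S ⊆ ℕ` is `Σ^0_n` (intended for `n ≥ 1`). -/
def SigmaN (n : ℕ) (S : Set ℕ) : Prop := ∃ c : CodeO, S = SigmaNumIdx (n - 1) c

/-- The set of codes of the elements of a set of binary strings. -/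
def strCodes (S : Set (List Bool)) : Set ℕ := {m | ∃ σ ∈ S, Encodable.encode σ = m}

/-- A set of binary strings is `Σ^0_n`. -/
def SigmaStr (n : ℕ) (S : Set (List Bool)) : Prop := SigmaN n (strCodes S)

/-- A set of binary strings is `Π^0_n`: its complement is `Σ^0_n`. -/
def PiStr (n : ℕ) (S : Set (List Bool)) : Prop := SigmaStr n Sᶜ

/-- A set of binary strings is c.e. relative to the oracle `O`. -/
def CeStrIn (O : ℕ → ℕ) (S : Set (List Bool)) : Prop := CeIn O (strCodes S)

/-- `SigmaClassIdx n c m` is the `Σ^0_{n+1}` class of elements of Cantor space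
with index `c` and parameter `m`. -/
def SigmaClassIdx : ℕ → CodeO → ℕ → Set Cantor
  | 0, c, m => {X | (evalO X c m).Dom}
  | n + 1, c, m => {X | ∃ k, X ∉ SigmaClassIdx n c (Nat.pair m k)}

/-! ### Monotone machines -/

/-- A monotone machine: a partial computable, monotone map on finite binary strings. -/
structure MonoMachine where
  f : List Bool →. List Bool
  partrec : Partrec f
  mono : ∀ ⦃σ τ a b : List Bool⦄, σ <+: τ → a ∈ f σ → b ∈ f τ → a <+: b

/-- The oracles `X` such that the output of the monotone machine on `X` is infinite. -/
def MonoINF (M : MonoMachine) : Set Cantor :=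
  {X | ∀ k, ∃ n a, a ∈ M.f (initSeg X n) ∧ k ≤ a.length}

/-- The `k`-th bit of the output `M(X)` of a monotone machine is `b`. -/
def MonoMachine.hasBit (M : MonoMachine) (X : Cantor) (k : ℕ) (b : Bool) : Prop :=
  ∃ n a, a ∈ M.f (initSeg X n) ∧ a[k]? = some b

/-- `U` is a universal monotone machine. -/
def UniversalMono (U : MonoMachine) : Prop :=
  ∃ (M : ℕ → MonoMachine) (σ : ℕ → List Bool),
    Partrec₂ (fun (e : ℕ) (τ : List Bool) => (M e).f τ) ∧
    (∀ V : MonoMachine, ∃ e, (M e).f = V.f) ∧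
    Computable σ ∧ IsPrefixFree (Set.range σ) ∧
    ∀ e τ, U.f (σ e ++ τ) = (M e).f τ

/-! ### Infinitary self-delimiting machines -/

/-- Chaitin's infinitary self-delimiting machines: `f σ n` is the `n`-th approximation
of the output on program `σ` (`none` meaning divergence); the convergence relation is
decidable, approximations are monotone, and machines are self-delimiting. -/
structure InfMachine where
  f : List Bool → ℕ → Option (List Bool)
  computable : Computable₂ f
  mono : ∀ σ m n a, n < m → f σ m = some a → ∃ b, f σ n = some b ∧ b <+: a
  sd : ∀ σ τ n a, f σ n = some a → f (σ ++ τ) n = some a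

/-- `M^∞(σ)↓`: all approximations converge. -/
def InfMachine.domInf (M : InfMachine) (σ : List Bool) : Prop := ∀ n, M.f σ n ≠ none

/-- The domain of `M^∞`. -/
def InfMachine.DOM (M : InfMachine) : Set (List Bool) := {σ | M.domInf σ}

/-- The output `M^∞(σ)` is infinite (a stream). -/
def InfMachine.outInf (M : InfMachine) (σ : List Bool) : Prop :=
  ∀ k, ∃ n a, M.f σ n = some a ∧ k ≤ a.length

/-- `FIN(M^∞)`: programs in the domain with finite output. -/
def InfMachine.FIN (M : InfMachine) : Set (List Bool) := {σ | M.domInf σ ∧ ¬ M.outInf σ}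

/-- `INF(M^∞)`: programs in the domain with infinite output. -/
def InfMachine.INF (M : InfMachine) : Set (List Bool) := {σ | M.domInf σ ∧ M.outInf σ}

/-- The `k`-th bit of the output `M^∞(σ)` is `b`. -/
def InfMachine.hasBit (M : InfMachine) (σ : List Bool) (k : ℕ) (b : Bool) : Prop :=
  ∃ n a, M.f σ n = some a ∧ a[k]? = some b

/-- The domain of the prefix-free machine `M^*`: minimal strings in the domain of `M^∞`. -/
def InfMachine.DOMstar (M : InfMachine) : Set (List Bool) :=
  {σ | M.domInf σ ∧ ∀ τ, τ <+: σ → τ ≠ σ → ¬ M.domInf τ}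

/-- Programs whose output is a stream with a tail of 1s. -/
def InfMachine.COFout (M : InfMachine) : Set (List Bool) :=
  {σ | M.domInf σ ∧ M.outInf σ ∧ ∃ t, ∀ k, t ≤ k → M.hasBit σ k true}

/-- `A^∞(σ) ≃ B^∞(τ)`: both converge or both diverge, with equal outputs. -/
def InfAgree (A : InfMachine) (σ : List Bool) (B : InfMachine) (τ : List Bool) : Prop :=
  (A.domInf σ ↔ B.domInf τ) ∧ (A.domInf σ → ∀ k b, (A.hasBit σ k b ↔ B.hasBit τ k b))

/-- `U` is a universal infinitary self-delimiting machine. -/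
def UniversalInf (U : InfMachine) : Prop :=
  ∃ (M : ℕ → InfMachine) (σ : ℕ → List Bool),
    Computable (fun p : ℕ × List Bool × ℕ => (M p.1).f p.2.1 p.2.2) ∧
    (∀ V : InfMachine, ∃ e, ∀ τ, InfAgree (M e) τ V τ) ∧
    Computable σ ∧ IsPrefixFree (Set.range σ) ∧
    ∀ e τ, InfAgree U (σ e ++ τ) (M e) τ

end RandProb


namespace RandProb

/-! ### Automation for primitive recursive functions -/

attribute [fun_prop] Primrec
attribute [fun_prop] PrimrecPred
attribute [fun_prop] Primrec.id Primrec.const Primrec.comp Primrec.fst Primrec.snd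
attribute [fun_prop] PrimrecPred.not PrimrecPred.and PrimrecPred.or

section auto
variable {α β γ σ : Type*} [Primcodable α] [Primcodable β] [Primcodable γ] [Primcodable σ]

@[fun_prop] theorem pr_pair {f : α → β} {g : α → γ} (hf : Primrec f) (hg : Primrec g) :
    Primrec fun a => (f a, g a) := hf.pair hg
@[fun_prop] theorem pr_add {f g : α → ℕ} (hf : Primrec f) (hg : Primrec g) :
    Primrec fun a => f a + g a := Primrec.nat_add.comp hf hg
@[fun_prop] theorem pr_sub {f g : α → ℕ} (hf : Primrec f) (hg : Primrec g) :
    Primrec fun a => f a - g a := Primrec.nat_sub.comp hf hg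
@[fun_prop] theorem pr_mul {f g : α → ℕ} (hf : Primrec f) (hg : Primrec g) :
    Primrec fun a => f a * g a := Primrec.nat_mul.comp hf hg
@[fun_prop] theorem pr_div {f g : α → ℕ} (hf : Primrec f) (hg : Primrec g) :
    Primrec fun a => f a / g a := Primrec.nat_div.comp hf hg
@[fun_prop] theorem pr_mod {f g : α → ℕ} (hf : Primrec f) (hg : Primrec g) :
    Primrec fun a => f a % g a := Primrec.nat_mod.comp hf hg
@[fun_prop] theorem pr_pow {f g : α → ℕ} (hf : Primrec f) (hg : Primrec g) :
    Primrec fun a => f a ^ g a := (Primrec₂.unpaired'.1 Nat.Primrec.pow).comp hf hg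
@[fun_prop] theorem pr_fst {f : α → β × γ} (hf : Primrec f) : Primrec fun a => (f a).1 :=
  Primrec.fst.comp hf
@[fun_prop] theorem pr_snd {f : α → β × γ} (hf : Primrec f) : Primrec fun a => (f a).2 :=
  Primrec.snd.comp hf
@[fun_prop] theorem pr_natpair {f g : α → ℕ} (hf : Primrec f) (hg : Primrec g) :
    Primrec fun a => Nat.pair (f a) (g a) := Primrec₂.natPair.comp hf hg
@[fun_prop] theorem pr_unpair {f : α → ℕ} (hf : Primrec f) : Primrec fun a => (f a).unpair :=
  Primrec.unpair.comp hf
@[fun_prop] theorem pr_len {f : α → List β} (hf : Primrec f) : Primrec fun a => (f a).length :=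
  Primrec.list_length.comp hf
@[fun_prop] theorem pr_encode {f : α → β} (hf : Primrec f) :
    Primrec fun a => Encodable.encode (f a) := Primrec.encode.comp hf
@[fun_prop] theorem pr_some {f : α → β} (hf : Primrec f) : Primrec fun a => some (f a) :=
  Primrec.option_some.comp hf
@[fun_prop] theorem pr_isSome {f : α → Option β} (hf : Primrec f) :
    Primrec fun a => (f a).isSome := Primrec.option_isSome.comp hf
@[fun_prop] theorem pr_get? {f : α → List β} {g : α → ℕ} (hf : Primrec f) (hg : Primrec g) :
    Primrec fun a => (f a)[g a]? := Primrec.list_getElem?.comp hf hg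
@[fun_prop] theorem pr_take {f : α → List β} {g : α → ℕ} (hf : Primrec f) (hg : Primrec g) :
    Primrec fun a => (f a).take (g a) := Primrec.list_take.comp hg hf
@[fun_prop] theorem pr_append {f g : α → List β} (hf : Primrec f) (hg : Primrec g) :
    Primrec fun a => f a ++ g a := Primrec.list_append.comp hf hg
@[fun_prop] theorem pr_cons {f : α → β} {g : α → List β} (hf : Primrec f) (hg : Primrec g) :
    Primrec fun a => f a :: g a := Primrec.list_cons.comp hf hg
@[fun_prop] theorem pr_ite {c : α → Prop} [∀ a, Decidable (c a)] {f g : α → β} (hc : PrimrecPred c) (hf : Primrec f)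
    (hg : Primrec g) : Primrec fun a => if c a then f a else g a :=
  (Primrec.ite hc hf hg).of_eq fun a => by congr
@[fun_prop] theorem pr_map {f : α → List β} {g : α → β → γ} (hf : Primrec f)
    (hg : Primrec fun p : α × β => g p.1 p.2) : Primrec fun a => (f a).map (g a) :=
  Primrec.list_map hf hg
@[fun_prop] theorem pr_range {f : α → ℕ} (hf : Primrec f) : Primrec fun a => List.range (f a) :=
  Primrec.list_range.comp hf
@[fun_prop] theorem pr_getD {f : α → Option β} {g : α → β} (hf : Primrec f) (hg : Primrec g) :
    Primrec fun a => (f a).getD (g a) := Primrec.option_getD.comp hf hg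

theorem pp_of_bool {f : α → Bool} (hf : Primrec f) : PrimrecPred fun a => f a = true :=
  Primrec.eq.comp hf (Primrec.const _)
theorem bool_of_pp {p : α → Prop} (hp : PrimrecPred p) : Primrec fun a => decide (p a) :=
  hp.decide
@[fun_prop] theorem pr_decide {p : α → Prop} [∀ a, Decidable (p a)] (hp : PrimrecPred p) :
    Primrec fun a => decide (p a) := hp.decide
@[fun_prop] theorem pp_const (p : Prop) : PrimrecPred fun _ : α => p :=
  ⟨fun _ => Classical.propDecidable p, Primrec.const _⟩
@[fun_prop] theorem pp_lt {f g : α → ℕ} (hf : Primrec f) (hg : Primrec g) :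
    PrimrecPred fun a => f a < g a := Primrec.nat_lt.comp hf hg
@[fun_prop] theorem pp_le {f g : α → ℕ} (hf : Primrec f) (hg : Primrec g) :
    PrimrecPred fun a => f a ≤ g a := Primrec.nat_le.comp hf hg
@[fun_prop] theorem pp_eq {f g : α → β} (hf : Primrec f) (hg : Primrec g) :
    PrimrecPred fun a => f a = g a := Primrec.eq.comp hf hg
@[fun_prop] theorem pp_imp {p q : α → Prop} (hp : PrimrecPred p) (hq : PrimrecPred q) :
    PrimrecPred fun a => p a → q a := (hp.not.or hq).of_eq fun a => by tauto
@[fun_prop] theorem pp_ex {f : α → ℕ} {P : α → ℕ → Prop} (hf : Primrec f)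
    (hP : PrimrecPred fun p : α × ℕ => P p.1 p.2) :
    PrimrecPred fun a => ∃ x < f a, P a x := by
  refine PrimrecPred.of_eq (PrimrecRel.comp (PrimrecRel.exists_mem_list
    (R := fun (x : ℕ) (a : α) => P a x) (hP.comp (Primrec.snd.pair Primrec.fst)))
    (Primrec.list_range.comp hf) Primrec.id) ?_
  simp
@[fun_prop] theorem pp_all {f : α → ℕ} {P : α → ℕ → Prop} (hf : Primrec f)
    (hP : PrimrecPred fun p : α × ℕ => P p.1 p.2) :
    PrimrecPred fun a => ∀ x < f a, P a x := by
  refine PrimrecPred.of_eq (PrimrecRel.comp (PrimrecRel.forall_mem_list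
    (R := fun (x : ℕ) (a : α) => P a x) (hP.comp (Primrec.snd.pair Primrec.fst)))
    (Primrec.list_range.comp hf) Primrec.id) ?_
  simp

/-- Bounded counting. -/
noncomputable def bcount (P : ℕ → Prop) (n : ℕ) : ℕ := ((List.range n).filter (fun x => P x)).length

@[fun_prop] theorem pr_bcount {f : α → ℕ} {P : α → ℕ → Prop} (hf : Primrec f)
    (hP : PrimrecPred fun p : α × ℕ => P p.1 p.2) :
    Primrec fun a => bcount (P a) (f a) := by
  have h := PrimrecRel.listFilter
    (R := fun (x : ℕ) (a : α) => P a x) (hP.comp (Primrec.snd.pair Primrec.fst))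
  exact Primrec.list_length.comp (Primrec.comp h (Primrec.pair (Primrec.list_range.comp hf) Primrec.id))

theorem bcount_eq (P : ℕ → Prop) (n : ℕ) : bcount P n = ((Finset.range n).filter P).card := by
  unfold bcount
  rw [← Multiset.coe_card, ← Multiset.filter_coe]
  simp only [Finset.card, Finset.filter, Finset.range]
  congr
end auto

/-! ### Translating oracle codes to ordinary codes -/

open Nat.Partrec (Code)

/-- Evaluation with a partial oracle. -/
def evalP (P : ℕ →. ℕ) : CodeO → ℕ →. ℕ
  | .zero => pure 0
  | .succ => Nat.succ
  | .left => ↑fun n : ℕ => n.unpair.1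
  | .right => ↑fun n : ℕ => n.unpair.2
  | .oracle => P
  | .pair cf cg => fun n => Nat.pair <$> evalP P cf n <*> evalP P cg n
  | .comp cf cg => fun n => evalP P cg n >>= evalP P cf
  | .prec cf cg =>
    Nat.unpaired fun a n =>
      n.rec (evalP P cf a) fun y IH => do
        let i ← IH
        evalP P cg (Nat.pair a (Nat.pair y i))
  | .rfind' cf =>
    Nat.unpaired fun a m =>
      (Nat.rfind fun n => (fun m => m = 0) <$> evalP P cf (Nat.pair a (n + m))).map (· + m)

theorem evalP_total (O : ℕ → ℕ) (c : CodeO) : evalP (O : ℕ →. ℕ) c = c.eval O := by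
  induction c with
  | pair a b iha ihb => simp only [evalP, CodeO.eval, iha, ihb]; rfl
  | comp a b iha ihb => simp only [evalP, CodeO.eval, iha, ihb]; rfl
  | prec a b iha ihb => simp only [evalP, CodeO.eval, iha, ihb]; rfl
  | rfind' a iha => simp only [evalP, CodeO.eval, iha]; rfl
  | _ => rfl

/-- Finite prefix of an oracle. -/
def pre (O : ℕ → ℕ) (k : ℕ) : List ℕ := (List.range k).map O

/-- A finite list as a partial oracle. -/
def lo (L : List ℕ) : ℕ →. ℕ := fun n => (L[n]? : Part ℕ)

theorem mem_seq_pair {a b : Part ℕ} {v : ℕ} :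
    v ∈ (Nat.pair <$> a <*> b : Part ℕ) ↔ ∃ x ∈ a, ∃ y ∈ b, Nat.pair x y = v := by
  simp only [Seq.seq, Part.map_eq_map, Part.mem_bind_iff, Part.mem_map_iff]
  constructor
  · rintro ⟨f, ⟨x, hx, rfl⟩, y, hy, rfl⟩; exact ⟨x, hx, y, hy, rfl⟩
  · rintro ⟨x, hx, y, hy, rfl⟩; exact ⟨_, ⟨x, hx, rfl⟩, y, hy, rfl⟩

theorem mem_comp {P : ℕ →. ℕ} {a b : CodeO} {n v : ℕ} :
    v ∈ evalP P (.comp a b) n ↔ ∃ x ∈ evalP P b n, v ∈ evalP P a x := Part.mem_bind_iff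

theorem mem_rfind' {P : ℕ →. ℕ} {a : CodeO} {n v : ℕ} :
    v ∈ evalP P (.rfind' a) n ↔ ∃ w, ((∃ x ∈ evalP P a (Nat.pair n.unpair.1 (w + n.unpair.2)), x = 0)
      ∧ ∀ m, m < w → ∃ y ∈ evalP P a (Nat.pair n.unpair.1 (m + n.unpair.2)), y ≠ 0)
      ∧ w + n.unpair.2 = v := by
  refine (Part.mem_map_iff _).trans (exists_congr fun w => and_congr_left fun _ => ?_)
  refine Nat.mem_rfind.trans (and_congr ?_ (forall_congr' fun m => forall_congr' fun _ => ?_))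
  · refine (Part.mem_map_iff _).trans (exists_congr fun x => and_congr_right fun _ => ?_)
    simp
  · refine (Part.mem_map_iff _).trans (exists_congr fun x => and_congr_right fun _ => ?_)
    simp

/-- Use principle for partial oracles. -/
theorem evalP_cont {P : ℕ →. ℕ} {Q : ℕ → ℕ →. ℕ}
    (hmono : ∀ {i j n v}, i ≤ j → v ∈ Q i n → v ∈ Q j n)
    (hQ : ∀ n v, v ∈ P n ↔ ∃ i, v ∈ Q i n) (c : CodeO) :
    (∀ i j n v, i ≤ j → v ∈ evalP (Q i) c n → v ∈ evalP (Q j) c n) ∧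
    (∀ n v, v ∈ evalP P c n ↔ ∃ i, v ∈ evalP (Q i) c n) := by
  induction c with
  | zero => exact ⟨fun i j n v _ h => h, fun n v => ⟨fun h => ⟨0, h⟩, fun ⟨_, h⟩ => h⟩⟩
  | succ => exact ⟨fun i j n v _ h => h, fun n v => ⟨fun h => ⟨0, h⟩, fun ⟨_, h⟩ => h⟩⟩
  | left => exact ⟨fun i j n v _ h => h, fun n v => ⟨fun h => ⟨0, h⟩, fun ⟨_, h⟩ => h⟩⟩
  | right => exact ⟨fun i j n v _ h => h, fun n v => ⟨fun h => ⟨0, h⟩, fun ⟨_, h⟩ => h⟩⟩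
  | oracle => exact ⟨fun i j n v hij h => hmono hij h, hQ⟩
  | pair a b iha ihb =>
    obtain ⟨am, ac⟩ := iha
    obtain ⟨bm, bc⟩ := ihb
    simp only [evalP, mem_seq_pair]
    refine ⟨fun i j n v hij ⟨x, hx, y, hy, e⟩ => ⟨x, am _ _ _ _ hij hx, y, bm _ _ _ _ hij hy, e⟩,
      fun n v => ⟨?_, ?_⟩⟩
    · rintro ⟨x, hx, y, hy, e⟩
      obtain ⟨i, hi⟩ := (ac _ _).1 hx
      obtain ⟨j, hj⟩ := (bc _ _).1 hy
      exact ⟨max i j, x, am _ _ _ _ (le_max_left _ _) hi, y, bm _ _ _ _ (le_max_right _ _) hj, e⟩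
    · rintro ⟨i, x, hx, y, hy, e⟩
      exact ⟨x, (ac _ _).2 ⟨_, hx⟩, y, (bc _ _).2 ⟨_, hy⟩, e⟩
  | comp a b iha ihb =>
    obtain ⟨am, ac⟩ := iha
    obtain ⟨bm, bc⟩ := ihb
    simp only [mem_comp]
    refine ⟨fun i j n v hij ⟨x, hx, hy⟩ => ⟨x, bm _ _ _ _ hij hx, am _ _ _ _ hij hy⟩,
      fun n v => ⟨?_, ?_⟩⟩
    · rintro ⟨x, hx, hy⟩
      obtain ⟨i, hi⟩ := (bc _ _).1 hx
      obtain ⟨j, hj⟩ := (ac _ _).1 hy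
      exact ⟨max i j, x, bm _ _ _ _ (le_max_left _ _) hi, am _ _ _ _ (le_max_right _ _) hj⟩
    · rintro ⟨i, x, hx, hy⟩
      exact ⟨x, (bc _ _).2 ⟨_, hx⟩, (ac _ _).2 ⟨_, hy⟩⟩
  | prec a b iha ihb =>
    obtain ⟨am, ac⟩ := iha
    obtain ⟨bm, bc⟩ := ihb
    simp only [evalP, Nat.unpaired]
    have key1 : ∀ i j x m v, i ≤ j →
        v ∈ (Nat.rec (evalP (Q i) a x) (fun y IH => do
          let i' ← IH
          evalP (Q i) b (Nat.pair x (Nat.pair y i'))) m : Part ℕ) →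
        v ∈ (Nat.rec (evalP (Q j) a x) (fun y IH => do
          let i' ← IH
          evalP (Q j) b (Nat.pair x (Nat.pair y i'))) m : Part ℕ) := by
      intro i j x m
      induction m with
      | zero => intro v hij h; exact am _ _ _ _ hij h
      | succ m ih =>
        intro v hij h
        simp only [Part.bind_eq_bind, Part.mem_bind_iff] at h ih ⊢
        obtain ⟨w, hw, hv⟩ := h
        exact ⟨w, ih w hij hw, bm _ _ _ _ hij hv⟩
    refine ⟨fun i j n v hij h => key1 i j _ _ v hij h, fun n v => ⟨?_, ?_⟩⟩
    · generalize (Nat.unpair n).1 = x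
      generalize (Nat.unpair n).2 = m
      induction m generalizing v with
      | zero => intro h; exact (ac _ _).1 h
      | succ m ih =>
        intro h
        simp only [Part.bind_eq_bind, Part.mem_bind_iff] at h ih key1 ⊢
        obtain ⟨w, hw, hv⟩ := h
        obtain ⟨i, hi⟩ := ih w hw
        obtain ⟨j, hj⟩ := (bc _ _).1 hv
        exact ⟨max i j, w, key1 _ _ _ _ _ (le_max_left _ _) hi, bm _ _ _ _ (le_max_right _ _) hj⟩
    · rintro ⟨i, h⟩
      revert h
      generalize (Nat.unpair n).1 = x
      generalize (Nat.unpair n).2 = m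
      induction m generalizing v with
      | zero => intro h; exact (ac _ _).2 ⟨i, h⟩
      | succ m ih =>
        intro h
        simp only [Part.bind_eq_bind, Part.mem_bind_iff] at h ih ⊢
        obtain ⟨w, hw, hv⟩ := h
        exact ⟨w, ih w hw, (bc _ _).2 ⟨i, hv⟩⟩
  | rfind' a iha =>
    obtain ⟨am, ac⟩ := iha
    simp only [mem_rfind']
    refine ⟨?_, fun n v => ⟨?_, ?_⟩⟩
    · rintro i j n v hij ⟨w, ⟨⟨x, hx, ex⟩, h2⟩, e⟩
      refine ⟨w, ⟨⟨x, am _ _ _ _ hij hx, ex⟩, fun m hm => ?_⟩, e⟩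
      obtain ⟨y, hy, ey⟩ := h2 _ hm
      exact ⟨y, am _ _ _ _ hij hy, ey⟩
    · rintro ⟨w, ⟨⟨x, hx, ex⟩, h2⟩, e⟩
      obtain ⟨i, hi⟩ := (ac _ _).1 hx
      have h3 : ∀ m, ∃ j, m < w → ∃ y ∈ evalP (Q j) a (Nat.pair (Nat.unpair n).1
          (m + (Nat.unpair n).2)), y ≠ 0 := by
        intro m
        by_cases hm : m < w
        · obtain ⟨y, hy, ey⟩ := h2 _ hm
          obtain ⟨j, hj⟩ := (ac _ _).1 hy
          exact ⟨j, fun _ => ⟨y, hj, ey⟩⟩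
        · exact ⟨0, fun h => absurd h hm⟩
      choose J hJ using h3
      refine ⟨max i ((Finset.range w).sup J), w, ⟨⟨x, am _ _ _ _ (le_max_left _ _) hi, ex⟩,
        fun m hm => ?_⟩, e⟩
      obtain ⟨y, hy, ey⟩ := hJ m hm
      exact ⟨y, am _ _ _ _ (le_trans (Finset.le_sup (Finset.mem_range.2 hm)) (le_max_right _ _)) hy,
        ey⟩
    · rintro ⟨i, w, ⟨⟨x, hx, ex⟩, h2⟩, e⟩
      refine ⟨w, ⟨⟨x, (ac _ _).2 ⟨i, hx⟩, ex⟩, fun m hm => ?_⟩, e⟩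
      obtain ⟨y, hy, ey⟩ := h2 _ hm
      exact ⟨y, (ac _ _).2 ⟨i, hy⟩, ey⟩

@[simp] theorem pre_length (O : ℕ → ℕ) (k : ℕ) : (pre O k).length = k := by simp [pre]

theorem pre_get (O : ℕ → ℕ) (k n : ℕ) : (pre O k)[n]? = if n < k then some (O n) else none := by
  unfold pre
  split_ifs with h
  · simp [h]
  · simp; omega

theorem pre_take (O : ℕ → ℕ) (k j : ℕ) : (pre O k).take j = pre O (min j k) := by
  unfold pre
  rw [← List.map_take, List.take_range]

theorem pre_succ (O : ℕ → ℕ) (k : ℕ) : pre O (k+1) = pre O k ++ [O k] := by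
  simp [pre, List.range_succ]

theorem mem_eval_iff (O : ℕ → ℕ) (c : CodeO) (n v : ℕ) :
    v ∈ c.eval O n ↔ ∃ k, v ∈ evalP (lo (pre O k)) c n := by
  rw [← evalP_total]
  refine (evalP_cont (Q := fun k => lo (pre O k)) ?_ ?_ c).2 n v
  · intro i j n v hij h
    simp only [lo, Part.mem_coe, pre_get, Option.mem_def] at h ⊢
    split_ifs at h with h1
    rw [if_pos (by omega)]
    exact h
  · intro n v
    simp only [lo, Part.mem_coe, pre_get, Option.mem_def]
    constructor
    · intro h
      simp only [PFun.coe_val, Part.mem_some_iff] at h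
      exact ⟨n+1, by simp [h]⟩
    · rintro ⟨i, h⟩
      split_ifs at h with h1
      simpa [eq_comm] using h

end RandProb

namespace RandProb

open Nat.Partrec (Code)

theorem encode_inj : ∀ c d : CodeO, c.encode = d.encode → c = d := by
  intro c
  induction c with
  | pair a b iha ihb =>
    intro d h
    cases d <;> simp only [CodeO.encode] at h <;> try omega
    rename_i x y
    have h1 := Nat.pair_eq_pair.1 (show Nat.pair a.encode b.encode = Nat.pair x.encode y.encode by omega)
    rw [iha _ h1.1, ihb _ h1.2]
  | comp a b iha ihb =>
    intro d h
    cases d <;> simp only [CodeO.encode] at h <;> try omega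
    rename_i x y
    have h1 := Nat.pair_eq_pair.1 (show Nat.pair a.encode b.encode = Nat.pair x.encode y.encode by omega)
    rw [iha _ h1.1, ihb _ h1.2]
  | prec a b iha ihb =>
    intro d h
    cases d <;> simp only [CodeO.encode] at h <;> try omega
    rename_i x y
    have h1 := Nat.pair_eq_pair.1 (show Nat.pair a.encode b.encode = Nat.pair x.encode y.encode by omega)
    rw [iha _ h1.1, ihb _ h1.2]
  | rfind' a iha =>
    intro d h
    cases d <;> simp only [CodeO.encode] at h <;> try omega
    rename_i x
    rw [iha x (by omega)]
  | _ =>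
    intro d h
    cases d <;> simp only [CodeO.encode] at h <;> first | rfl | omega

theorem encode_surj : ∀ n, ∃ c : CodeO, c.encode = n := by
  intro n
  induction n using Nat.strong_induction_on with
  | _ n ih =>
    by_cases h5 : n < 5
    · interval_cases n
      exacts [⟨.zero, rfl⟩, ⟨.succ, rfl⟩, ⟨.left, rfl⟩, ⟨.right, rfl⟩, ⟨.oracle, rfl⟩]
    · have hp := Nat.pair_unpair ((n-5)/4)
      have hl := Nat.unpair_left_le ((n-5)/4)
      have hr := Nat.unpair_right_le ((n-5)/4)
      obtain ⟨a, ha⟩ := ih ((n-5)/4).unpair.1 (by omega)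
      obtain ⟨b, hb⟩ := ih ((n-5)/4).unpair.2 (by omega)
      obtain ⟨d, hd⟩ := ih ((n-5)/4) (by omega)
      have h4 : (n-5)%4 < 4 := Nat.mod_lt _ (by norm_num)
      rcases (by omega : (n-5)%4 = 0 ∨ (n-5)%4 = 1 ∨ (n-5)%4 = 2 ∨ (n-5)%4 = 3) with h | h | h | h
      · exact ⟨.pair a b, by simp only [CodeO.encode, ha, hb, hp]; omega⟩
      · exact ⟨.prec a b, by simp only [CodeO.encode, ha, hb, hp]; omega⟩
      · exact ⟨.comp a b, by simp only [CodeO.encode, ha, hb, hp]; omega⟩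
      · exact ⟨.rfind' d, by simp only [CodeO.encode, hd]; omega⟩

/-- decoding of oracle codes -/
noncomputable def decC (n : ℕ) : CodeO := (encode_surj n).choose
@[simp] theorem encode_decC (n : ℕ) : (decC n).encode = n := (encode_surj n).choose_spec
@[simp] theorem decC_encode (c : CodeO) : decC c.encode = c := encode_inj _ _ (encode_decC _)

theorem exists_lookup : ∃ c : Code, ∀ (L : List ℕ) n,
    c.eval (Nat.pair (Encodable.encode L) n) = lo L n := by
  have h : Partrec (fun m : ℕ =>
      ((((Encodable.decode m.unpair.1 : Option (List ℕ)).getD [])[m.unpair.2]? : Option ℕ) : Part ℕ)) := by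
    apply Computable.ofOption
    apply Primrec.to_comp
    apply pr_get?
    · exact pr_getD (Primrec.decode.comp (by fun_prop)) (by fun_prop)
    · fun_prop
  obtain ⟨c, hc⟩ := Code.exists_code.1 (Partrec.nat_iff.1 h)
  refine ⟨c, fun L n => ?_⟩
  rw [hc]
  simp [lo]

/-- lookup code -/
noncomputable def lk : Code := exists_lookup.choose
theorem lk_eval (L : List ℕ) (n : ℕ) : lk.eval (Nat.pair (Encodable.encode L) n) = lo L n :=
  exists_lookup.choose_spec L n

/-- reassociate `((l,x),z)` to `(l,(x,z))` -/
def rea : Code := .pair (.comp .left .left) (.pair (.comp .right .left) .right)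
/-- reassociate `(l,(x,z))` to `((l,x),z)` -/
def rea' : Code := .pair (.pair .left (.comp .left .right)) (.comp .right .right)

theorem mem_cpair {a b : Code} {n v : ℕ} :
    v ∈ (Code.pair a b).eval n ↔ ∃ x ∈ a.eval n, ∃ y ∈ b.eval n, Nat.pair x y = v := mem_seq_pair
theorem mem_ccomp {a b : Code} {n v : ℕ} :
    v ∈ (Code.comp a b).eval n ↔ ∃ x ∈ b.eval n, v ∈ a.eval x := Part.mem_bind_iff
theorem mem_czero {n v : ℕ} : v ∈ Code.zero.eval n ↔ v = 0 := Part.mem_some_iff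
theorem mem_csucc {n v : ℕ} : v ∈ Code.succ.eval n ↔ v = n + 1 := Part.mem_some_iff
theorem mem_cleft {n v : ℕ} : v ∈ Code.left.eval n ↔ v = n.unpair.1 := Part.mem_some_iff
theorem mem_cright {n v : ℕ} : v ∈ Code.right.eval n ↔ v = n.unpair.2 := Part.mem_some_iff
theorem mem_cprec0 {a b : Code} {x v : ℕ} :
    v ∈ (Code.prec a b).eval (Nat.pair x 0) ↔ v ∈ a.eval x := by
  rw [Code.eval_prec_zero]
theorem mem_cprec1 {a b : Code} {x m v : ℕ} :
    v ∈ (Code.prec a b).eval (Nat.pair x (m+1)) ↔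
      ∃ i ∈ (Code.prec a b).eval (Nat.pair x m), v ∈ b.eval (Nat.pair x (Nat.pair m i)) := by
  rw [← Nat.succ_eq_add_one, Code.eval_prec_succ]; exact Part.mem_bind_iff
theorem mem_crfind {a : Code} {n v : ℕ} :
    v ∈ (Code.rfind' a).eval n ↔ ∃ w, ((∃ x ∈ a.eval (Nat.pair n.unpair.1 (w + n.unpair.2)), x = 0)
      ∧ ∀ m, m < w → ∃ y ∈ a.eval (Nat.pair n.unpair.1 (m + n.unpair.2)), y ≠ 0)
      ∧ w + n.unpair.2 = v := by
  refine (Part.mem_map_iff _).trans (exists_congr fun w => and_congr_left fun _ => ?_)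
  refine Nat.mem_rfind.trans (and_congr ?_ (forall_congr' fun m => forall_congr' fun _ => ?_))
  · refine (Part.mem_map_iff _).trans (exists_congr fun x => and_congr_right fun _ => ?_)
    simp
  · refine (Part.mem_map_iff _).trans (exists_congr fun x => and_congr_right fun _ => ?_)
    simp

theorem mem_pair {P : ℕ →. ℕ} {a b : CodeO} {n v : ℕ} :
    v ∈ evalP P (.pair a b) n ↔ ∃ x ∈ evalP P a n, ∃ y ∈ evalP P b n, Nat.pair x y = v := mem_seq_pair
theorem mem_zero {P : ℕ →. ℕ} {n v : ℕ} : v ∈ evalP P .zero n ↔ v = 0 := Part.mem_some_iff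
theorem mem_succ {P : ℕ →. ℕ} {n v : ℕ} : v ∈ evalP P .succ n ↔ v = n + 1 := Part.mem_some_iff
theorem mem_left {P : ℕ →. ℕ} {n v : ℕ} : v ∈ evalP P .left n ↔ v = n.unpair.1 := Part.mem_some_iff
theorem mem_right {P : ℕ →. ℕ} {n v : ℕ} : v ∈ evalP P .right n ↔ v = n.unpair.2 := Part.mem_some_iff
theorem mem_prec0 {P : ℕ →. ℕ} {a b : CodeO} {x v : ℕ} :
    v ∈ evalP P (.prec a b) (Nat.pair x 0) ↔ v ∈ evalP P a x := by
  simp [evalP, Nat.unpaired]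
theorem mem_prec1 {P : ℕ →. ℕ} {a b : CodeO} {x m v : ℕ} :
    v ∈ evalP P (.prec a b) (Nat.pair x (m+1)) ↔
      ∃ i ∈ evalP P (.prec a b) (Nat.pair x m), v ∈ evalP P b (Nat.pair x (Nat.pair m i)) := by
  simp only [evalP, Nat.unpaired, Nat.unpair_pair]
  exact Part.mem_bind_iff

theorem rea_eval (l x z v : ℕ) : v ∈ rea.eval (Nat.pair (Nat.pair l x) z) ↔
    v = Nat.pair l (Nat.pair x z) := by
  simp [rea, mem_cpair, mem_ccomp, mem_cleft, mem_cright, eq_comm]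

theorem rea'_eval (l n v : ℕ) : v ∈ rea'.eval (Nat.pair l n) ↔
    v = Nat.pair (Nat.pair l n.unpair.1) n.unpair.2 := by
  simp [rea', mem_cpair, mem_ccomp, mem_cleft, mem_cright, eq_comm]

/-- translation -/
noncomputable def tr : CodeO → Code
  | .zero => .zero
  | .succ => .comp .succ .right
  | .left => .comp .left .right
  | .right => .comp .right .right
  | .oracle => lk
  | .pair a b => .pair (tr a) (tr b)
  | .comp a b => .comp (tr a) (.pair .left (tr b))
  | .prec a b => .comp (.prec (tr a) (.comp (tr b) rea)) rea'
  | .rfind' a => .comp (.rfind' (.comp (tr a) rea)) rea'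

theorem tr_mem (L : List ℕ) (c : CodeO) : ∀ n v, v ∈ (tr c).eval (Nat.pair (Encodable.encode L) n) ↔
    v ∈ evalP (lo L) c n := by
  induction c with
  | zero => intro n v; rw [tr, mem_czero, mem_zero]
  | succ => intro n v; simp [tr, mem_ccomp, mem_csucc, mem_cright, mem_succ]
  | left => intro n v; simp [tr, mem_ccomp, mem_cleft, mem_cright, mem_left]
  | right => intro n v; simp [tr, mem_ccomp, mem_cright, mem_right]
  | oracle => intro n v; rw [tr, lk_eval]; rfl
  | pair a b iha ihb =>
    intro n v
    simp only [tr, mem_cpair, mem_pair, iha, ihb]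
  | comp a b iha ihb =>
    intro n v
    simp only [tr, mem_ccomp, mem_cpair, mem_comp, mem_cleft, ihb]
    constructor
    · rintro ⟨x, ⟨y, rfl, z, hz, rfl⟩, h⟩
      simp only [Nat.unpair_pair, iha] at h
      exact ⟨z, hz, h⟩
    · rintro ⟨z, hz, h⟩
      exact ⟨_, ⟨_, rfl, z, hz, rfl⟩, by simpa [iha] using h⟩
  | prec a b iha ihb =>
    intro n v
    simp only [tr, mem_ccomp, rea'_eval, exists_eq_left]
    conv_rhs => rw [← Nat.pair_unpair n]
    generalize n.unpair.1 = x
    generalize n.unpair.2 = m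
    induction m generalizing v with
    | zero => rw [mem_cprec0, mem_prec0, iha]
    | succ m ih =>
      simp only [mem_cprec1, mem_prec1, ih, mem_ccomp, rea_eval, exists_eq_left, ihb]
  | rfind' a iha =>
    intro n v
    simp only [tr, mem_ccomp, rea'_eval, exists_eq_left, mem_crfind, mem_rfind', rea_eval,
      Nat.unpair_pair, iha]

theorem tr_eval (L : List ℕ) (c : CodeO) (n : ℕ) : (tr c).eval (Nat.pair (Encodable.encode L) n) =
    evalP (lo L) c n := Part.ext (tr_mem L c n)

@[fun_prop] theorem pc_pair {α} [Primcodable α] {f g : α → Code} (hf : Primrec f) (hg : Primrec g) :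
    Primrec fun a => Code.pair (f a) (g a) := Code.primrec₂_pair.comp hf hg
@[fun_prop] theorem pc_comp {α} [Primcodable α] {f g : α → Code} (hf : Primrec f) (hg : Primrec g) :
    Primrec fun a => Code.comp (f a) (g a) := Code.primrec₂_comp.comp hf hg
@[fun_prop] theorem pc_prec {α} [Primcodable α] {f g : α → Code} (hf : Primrec f) (hg : Primrec g) :
    Primrec fun a => Code.prec (f a) (g a) := Code.primrec₂_prec.comp hf hg
@[fun_prop] theorem pc_rfind {α} [Primcodable α] {f : α → Code} (hf : Primrec f) :
    Primrec fun a => Code.rfind' (f a) := Code.primrec_rfind'.comp hf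

/-- translation on code numbers -/
noncomputable def trN (n : ℕ) : Code := tr (decC n)

@[fun_prop] theorem primrec_trN : Primrec trN := by
  let g : Unit → List Code → Option Code := fun _ L =>
    some (if L.length = 0 then tr .zero else if L.length = 1 then tr .succ else
      if L.length = 2 then tr .left else if L.length = 3 then tr .right else
      if L.length = 4 then tr .oracle else
      if (L.length - 5) % 4 = 0 then
        .pair (L[((L.length-5)/4).unpair.1]?.getD .zero) (L[((L.length-5)/4).unpair.2]?.getD .zero)
      else if (L.length - 5) % 4 = 1 then
        .comp (.prec (L[((L.length-5)/4).unpair.1]?.getD .zero)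
          (.comp (L[((L.length-5)/4).unpair.2]?.getD .zero) rea)) rea'
      else if (L.length - 5) % 4 = 2 then
        .comp (L[((L.length-5)/4).unpair.1]?.getD .zero)
          (.pair .left (L[((L.length-5)/4).unpair.2]?.getD .zero))
      else .comp (.rfind' (.comp (L[((L.length-5)/4)]?.getD .zero) rea)) rea')
  have hg : Primrec₂ g := by
    show Primrec fun p : Unit × List Code => g p.1 p.2
    simp only [g]
    fun_prop
  have := Primrec.nat_strong_rec (fun (_ : Unit) n => trN n) hg ?_
  · exact (this.comp (Primrec.const ()) Primrec.id : Primrec fun n : ℕ => trN n)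
  · intro _ n
    obtain ⟨c, rfl⟩ := encode_surj n
    have hget : ∀ d : CodeO, d.encode < c.encode →
        ((List.range c.encode).map trN)[d.encode]?.getD .zero = tr d := by
      intro d hd
      simp [hd, trN]
    have hlt : ∀ P k, Nat.unpair P = (k : ℕ × ℕ) → k.1 ≤ P ∧ k.2 ≤ P := by
      rintro P k rfl; exact ⟨Nat.unpair_left_le P, Nat.unpair_right_le P⟩
    simp only [g, List.length_map, List.length_range]
    congr 1
    show _ = tr (decC c.encode)
    rw [decC_encode]
    cases c with
    | zero => simp [CodeO.encode]
    | succ => simp [CodeO.encode]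
    | left => simp [CodeO.encode]
    | right => simp [CodeO.encode]
    | oracle => simp [CodeO.encode]
    | pair a b =>
      have h1 := Nat.left_le_pair a.encode b.encode
      have h2 := Nat.right_le_pair a.encode b.encode
      have e1 := hget a (by simp only [CodeO.encode]; omega)
      have e2 := hget b (by simp only [CodeO.encode]; omega)
      have hP : ((CodeO.pair a b).encode - 5) / 4 = Nat.pair a.encode b.encode := by
        simp only [CodeO.encode]; omega
      rw [hP, Nat.unpair_pair, e1, e2]
      rw [if_neg, if_neg, if_neg, if_neg, if_neg, if_pos, tr] <;> simp only [CodeO.encode] <;> omega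
    | comp a b =>
      have h1 := Nat.left_le_pair a.encode b.encode
      have h2 := Nat.right_le_pair a.encode b.encode
      have e1 := hget a (by simp only [CodeO.encode]; omega)
      have e2 := hget b (by simp only [CodeO.encode]; omega)
      have hP : ((CodeO.comp a b).encode - 5) / 4 = Nat.pair a.encode b.encode := by
        simp only [CodeO.encode]; omega
      rw [hP, Nat.unpair_pair, e1, e2]
      rw [if_neg, if_neg, if_neg, if_neg, if_neg, if_neg, if_neg, if_pos, tr] <;>
        simp only [CodeO.encode] <;> omega
    | prec a b =>
      have h1 := Nat.left_le_pair a.encode b.encode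
      have h2 := Nat.right_le_pair a.encode b.encode
      have e1 := hget a (by simp only [CodeO.encode]; omega)
      have e2 := hget b (by simp only [CodeO.encode]; omega)
      have hP : ((CodeO.prec a b).encode - 5) / 4 = Nat.pair a.encode b.encode := by
        simp only [CodeO.encode]; omega
      rw [hP, Nat.unpair_pair, e1, e2]
      rw [if_neg, if_neg, if_neg, if_neg, if_neg, if_neg, if_pos, tr] <;>
        simp only [CodeO.encode] <;> omega
    | rfind' a =>
      have e1 := hget a (by simp only [CodeO.encode]; omega)
      have hP : ((CodeO.rfind' a).encode - 5) / 4 = a.encode := by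
        simp only [CodeO.encode]; omega
      rw [hP, e1]
      rw [if_neg, if_neg, if_neg, if_neg, if_neg, if_neg, if_neg, if_neg, tr] <;>
        simp only [CodeO.encode] <;> omega

/-- Stage evaluation. The length of the list codes prefix length and stage. -/
noncomputable def st (e : ℕ) (L : List ℕ) (n : ℕ) : Option ℕ :=
  Code.evaln L.length.unpair.2 (trN e)
    (Nat.pair (Encodable.encode (L.take L.length.unpair.1)) n)

@[fun_prop] theorem pr_evaln {α} [Primcodable α] {k : α → ℕ} {c : α → Code} {n : α → ℕ}
    (hk : Primrec k) (hc : Primrec c) (hn : Primrec n) :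
    Primrec fun a => Code.evaln (k a) (c a) (n a) :=
  Code.primrec_evaln.comp ((hk.pair hc).pair hn)

@[fun_prop] theorem pr_trN {α} [Primcodable α] {k : α → ℕ} (hk : Primrec k) :
    Primrec fun a => trN (k a) := primrec_trN.comp hk

@[fun_prop] theorem pr_st {α} [Primcodable α] {e : α → ℕ} {L : α → List ℕ} {n : α → ℕ}
    (he : Primrec e) (hL : Primrec L) (hn : Primrec n) :
    Primrec fun a => st (e a) (L a) (n a) := by
  unfold st; fun_prop

theorem mem_eval_st (O : ℕ → ℕ) (c : CodeO) (n v : ℕ) :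
    v ∈ c.eval O n ↔ ∃ k, st c.encode (pre O k) n = some v := by
  have key : ∀ j s, st c.encode (pre O (Nat.pair j s)) n =
      Code.evaln s (tr c) (Nat.pair (Encodable.encode (pre O j)) n) := by
    intro j s
    have : min j (Nat.pair j s) = j := min_eq_left (Nat.left_le_pair j s)
    simp [st, pre_take, trN, this]
  rw [mem_eval_iff]
  constructor
  · rintro ⟨k, h⟩
    rw [← tr_eval] at h
    obtain ⟨s, hs⟩ := Code.evaln_complete.1 h
    exact ⟨Nat.pair k s, by rw [key]; exact hs⟩
  · rintro ⟨k, h⟩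
    rw [← Nat.pair_unpair k, key] at h
    exact ⟨k.unpair.1, by rw [← tr_eval]; exact Code.evaln_sound h⟩

/-- Monotone halting predicate. -/
def hb (e : ℕ) (L : List ℕ) (n : ℕ) : Prop := ∃ j < L.length + 1, (st e (L.take j) n).isSome = true

@[fun_prop] theorem pp_hb {α} [Primcodable α] {e : α → ℕ} {L : α → List ℕ} {n : α → ℕ}
    (he : Primrec e) (hL : Primrec L) (hn : Primrec n) :
    PrimrecPred fun a => hb (e a) (L a) (n a) := by
  unfold hb; fun_prop

theorem hb_mono {e : ℕ} {O : ℕ → ℕ} {i j n : ℕ} (hij : i ≤ j) (h : hb e (pre O i) n) :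
    hb e (pre O j) n := by
  obtain ⟨k, hk, h⟩ := h
  simp only [pre_length] at hk
  refine ⟨k, by simp; omega, ?_⟩
  rw [pre_take, min_eq_left (by omega)] at h ⊢
  exact h

theorem dom_iff_hb (O : ℕ → ℕ) (c : CodeO) (n : ℕ) :
    (c.eval O n).Dom ↔ ∃ k, hb c.encode (pre O k) n := by
  rw [Part.dom_iff_mem]
  simp only [mem_eval_st, hb, pre_length, pre_take]
  constructor
  · rintro ⟨v, k, h⟩
    exact ⟨k, k, by omega, by simp [h]⟩
  · rintro ⟨k, j, hj, h⟩
    obtain ⟨v, hv⟩ := Option.isSome_iff_exists.1 h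
    exact ⟨v, _, hv⟩

end RandProb

namespace RandProb

open Nat.Partrec (Code)

/-- embed ordinary codes -/
def emb : Code → CodeO
  | .zero => .zero
  | .succ => .succ
  | .left => .left
  | .right => .right
  | .pair a b => .pair (emb a) (emb b)
  | .comp a b => .comp (emb a) (emb b)
  | .prec a b => .prec (emb a) (emb b)
  | .rfind' a => .rfind' (emb a)

theorem mem_emb (P : ℕ →. ℕ) (c : Code) : ∀ n v, v ∈ evalP P (emb c) n ↔ v ∈ c.eval n := by
  induction c with
  | zero => intro n v; rw [emb, mem_czero, mem_zero]
  | succ => intro n v; rw [emb, mem_csucc, mem_succ]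
  | left => intro n v; rw [emb, mem_cleft, mem_left]
  | right => intro n v; rw [emb, mem_cright, mem_right]
  | pair a b iha ihb => intro n v; simp only [emb, mem_cpair, mem_pair, iha, ihb]
  | comp a b iha ihb => intro n v; simp only [emb, mem_ccomp, mem_comp, iha, ihb]
  | prec a b iha ihb =>
    intro n v
    rw [← Nat.pair_unpair n, emb]
    generalize n.unpair.1 = x
    generalize n.unpair.2 = m
    induction m generalizing v with
    | zero => rw [mem_cprec0, mem_prec0, iha]
    | succ m ih => simp only [mem_cprec1, mem_prec1, ih, ihb]
  | rfind' a iha => intro n v; simp only [emb, mem_crfind, mem_rfind', iha]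

theorem exists_codeO_primrec {f : ℕ → ℕ} (hf : Primrec f) :
    ∃ c : CodeO, ∀ P n v, v ∈ evalP P c n ↔ v = f n := by
  obtain ⟨c, hc⟩ := Code.exists_code.1 (Partrec.nat_iff.1 hf.to_comp.partrec)
  refine ⟨emb c, fun P n v => ?_⟩
  rw [mem_emb, hc]
  exact Part.mem_some_iff

theorem mem_oracle {O : ℕ → ℕ} {n v : ℕ} : v ∈ evalP (O : ℕ →. ℕ) .oracle n ↔ v = O n :=
  Part.mem_some_iff

theorem exists_pre_code : ∃ c : CodeO, ∀ (O : ℕ → ℕ) n v, v ∈ evalP (O : ℕ →. ℕ) c n ↔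
    v = Encodable.encode (pre O n.unpair.2) := by
  obtain ⟨z, hz⟩ := exists_codeO_primrec (f := fun _ => Encodable.encode ([] : List ℕ)) (by fun_prop)
  obtain ⟨F, hF⟩ := exists_codeO_primrec (f := fun m => Encodable.encode
    (((Encodable.decode m.unpair.1 : Option (List ℕ)).getD []) ++ [m.unpair.2]))
    (by
      have : Primrec fun m : ℕ => (Encodable.decode m.unpair.1 : Option (List ℕ)) :=
        Primrec.decode.comp (by fun_prop)
      fun_prop)
  refine ⟨.prec z (.comp F (.pair (.comp .right .right) (.comp .oracle (.comp .left .right)))), ?_⟩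
  intro O n v
  rw [← Nat.pair_unpair n]
  generalize n.unpair.1 = x
  generalize n.unpair.2 = m
  induction m generalizing v with
  | zero => rw [mem_prec0, hz]; simp [pre]
  | succ m ih =>
    simp [mem_prec1, ih, mem_comp, hF, mem_pair, mem_right, mem_oracle, mem_left, pre_succ]

/-- General construction of oracle codes by unbounded search. -/
theorem gen {g : List ℕ → ℕ → Option ℕ} (hg : Primrec fun p : List ℕ × ℕ => g p.1 p.2) :
    ∃ c : CodeO, ∀ O n, c.eval O n = Nat.rfindOpt (fun k => g (pre O k) n) := by
  obtain ⟨p, hp⟩ := exists_pre_code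
  have hdec : Primrec fun m : ℕ => (Encodable.decode m.unpair.1 : Option (List ℕ)) :=
        Primrec.decode.comp (by fun_prop)
  have h1 : Primrec fun m : ℕ => g ((Encodable.decode m.unpair.1 : Option (List ℕ)).getD []) m.unpair.2 :=
    Primrec.comp hg (f := fun p : List ℕ × ℕ => g p.1 p.2) (g := fun m : ℕ => ((Encodable.decode m.unpair.1 : Option (List ℕ)).getD [], m.unpair.2)) (by fun_prop)
  obtain ⟨G, hG⟩ := exists_codeO_primrec (f := fun m =>
    if (g ((Encodable.decode m.unpair.1 : Option (List ℕ)).getD []) m.unpair.2).isSome = true then 0 else 1)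
    (by fun_prop)
  obtain ⟨H, hH⟩ := exists_codeO_primrec (f := fun m =>
    (g ((Encodable.decode m.unpair.1 : Option (List ℕ)).getD []) m.unpair.2).getD 0)
    (by fun_prop)
  refine ⟨.comp (.comp H (.pair p .left)) (.pair (.pair .left .right) (.comp (.rfind' (.comp G (.pair p .left)))
    (.pair (.pair .left .right) .zero))), fun O n => Part.ext fun v => ?_⟩
  have e1 : v ∈ Nat.rfindOpt (fun k => g (pre O k) n) ↔ ∃ k, ((g (pre O k) n).isSome = true ∧
      ∀ m < k, (g (pre O m) n).isSome = false) ∧ g (pre O k) n = some v := by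
    refine Part.mem_bind_iff.trans (exists_congr fun k => and_congr ?_ ?_)
    · refine Nat.mem_rfind.trans (and_congr ?_ (forall_congr' fun m => forall_congr' fun _ => ?_))
      · exact Part.mem_some_iff.trans eq_comm
      · refine Part.mem_some_iff.trans eq_comm
    · simp
  rw [← evalP_total, e1]
  simp only [mem_comp, mem_pair, hp, hG, hH, mem_left, mem_right, mem_rfind', mem_zero]
  simp only [exists_eq_left, Nat.unpair_pair, Nat.pair_unpair, exists_eq_left', Encodable.encodek,
    Option.getD_some, add_zero, exists_eq_right]
  constructor
  · rintro ⟨x, ⟨y, ⟨h1, h2⟩, rfl⟩, rfl⟩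
    simp only [Nat.unpair_pair]
    refine ⟨y, ⟨?_, fun m hm => ?_⟩, ?_⟩
    · by_contra hc
      simp [hc] at h1
    · have := h2 m hm
      by_contra hc
      simp [hc] at this
    · by_cases hc : (g (pre O y) n).isSome
      · obtain ⟨w, hw⟩ := Option.isSome_iff_exists.1 hc
        simp [hw]
      · simp [hc] at h1
  · rintro ⟨k, ⟨h1, h2⟩, h3⟩
    exact ⟨_, ⟨k, ⟨by simp [h1], fun m hm => by simp [h2 m hm]⟩, rfl⟩, by simp [h3]⟩

end RandProb

namespace RandProb

theorem ce_of {O : ℕ → ℕ} {P : ℕ → List ℕ → ℕ → Prop}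
    (hP : PrimrecPred fun x : ℕ × List ℕ × ℕ => P x.1 x.2.1 x.2.2) :
    CeIn O {m | ∃ a k, P a (pre O k) m} := by
  have h1 : PrimrecPred fun x : List ℕ × ℕ =>
      P x.1.length.unpair.1 (x.1.take x.1.length.unpair.2) x.2 :=
    hP.comp (f := fun x : List ℕ × ℕ =>
      (x.1.length.unpair.1, x.1.take x.1.length.unpair.2, x.2)) (by fun_prop)
  obtain ⟨c, hc⟩ := gen (g := fun L n =>
    if P L.length.unpair.1 (L.take L.length.unpair.2) n then some 0 else none) (pr_ite h1 (by fun_prop) (by fun_prop))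
  refine ⟨c, Set.ext fun m => ?_⟩
  simp only [Set.mem_ofPred_eq, hc, Nat.rfindOpt_dom]
  constructor
  · rintro ⟨a, k, h⟩
    refine ⟨Nat.pair a k, 0, ?_⟩
    have : min k (Nat.pair a k) = k := min_eq_left (Nat.right_le_pair a k)
    simp [pre_take, this, h]
  · rintro ⟨k, v, h⟩
    simp only [Option.mem_def, Option.ite_none_right_eq_some] at h
    rw [pre_take] at h
    exact ⟨_, _, h.1⟩

/-- constant codes -/
def constO : ℕ → CodeO
  | 0 => .zero
  | n + 1 => .comp .succ (constO n)

theorem mem_constO (P : ℕ →. ℕ) (m n v : ℕ) : v ∈ evalP P (constO m) n ↔ v = m := by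
  induction m generalizing v with
  | zero => rw [constO, mem_zero]
  | succ m ih => simp [constO, mem_comp, ih, mem_succ]

@[fun_prop] theorem pr_constO {α} [Primcodable α] {f : α → ℕ} (hf : Primrec f) :
    Primrec fun a => (constO (f a)).encode := by
  have : Primrec fun n : ℕ => (constO n).encode := by
    refine (Primrec.nat_rec₁ (α := ℕ) 0 (f := fun _ i => 2 * (2 * Nat.pair 1 i + 1) + 5) ?_).of_eq ?_
    · show Primrec fun p : ℕ × ℕ => _
      fun_prop
    · intro n
      induction n with
      | zero => rfl
      | succ n ih => simp only [constO, CodeO.encode, ← ih]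
  exact this.comp hf

theorem jump_eq_one {O : ℕ → ℕ} (c : CodeO) : jump O c.encode = 1 ↔ (c.eval O c.encode).Dom := by
  unfold jump
  constructor
  · intro h
    split_ifs at h with h1
    obtain ⟨d, hd, h2⟩ := h1
    rwa [encode_inj _ _ hd] at h2
  · intro h
    rw [if_pos ⟨c, rfl, h⟩]

theorem jump_zero_or_one (O : ℕ → ℕ) (e : ℕ) : jump O e = 0 ∨ jump O e = 1 := by
  unfold jump; split_ifs <;> simp

theorem ce_reduce {O : ℕ → ℕ} {S : Set ℕ} (hS : CeIn O S) :
    ∃ s : ℕ → ℕ, Primrec s ∧ ∀ m, m ∈ S ↔ jump O (s m) = 1 := by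
  obtain ⟨c, rfl⟩ := hS
  refine ⟨fun m => (CodeO.comp c (constO m)).encode, ?_, fun m => ?_⟩
  · simp only [CodeO.encode]; fun_prop
  · rw [jump_eq_one, Set.mem_ofPred_eq, Part.dom_iff_mem, Part.dom_iff_mem]
    refine exists_congr fun v => ?_
    rw [← evalP_total, ← evalP_total, mem_comp]
    simp [mem_constO]

theorem ce_jump {O : ℕ → ℕ} {S : Set ℕ} (hS : CeIn O S) :
    CeIn (jump O) {m | ∃ a, Nat.pair m a ∉ S} := by
  obtain ⟨s, hs, h⟩ := ce_reduce hS
  have : PrimrecPred fun x : ℕ × List ℕ × ℕ => x.2.1[s (Nat.pair x.2.2 x.1)]? = some 0 := by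
    fun_prop
  convert ce_of (O := jump O) (P := fun a L m => L[s (Nat.pair m a)]? = some 0) this using 1
  ext m
  simp only [Set.mem_ofPred_eq, h, pre_get]
  refine exists_congr fun a => ?_
  rcases jump_zero_or_one O (s (Nat.pair m a)) with h | h
  · simp only [h]
    simpa using ⟨_, Nat.lt_succ_self _⟩
  · simp [h]

theorem ce_sigma3 {R : ℕ → ℕ → ℕ → ℕ → Prop}
    (hR : PrimrecPred fun x : ℕ × ℕ × ℕ × ℕ => R x.1 x.2.1 x.2.2.1 x.2.2.2) :
    CeIn (iterJump 2) {m | ∃ a, ∀ b, ∃ k, R m a b k} := by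
  have h0 : CeIn (iterJump 0) {x | ∃ k, R x.unpair.1.unpair.1 x.unpair.1.unpair.2 x.unpair.2 k} := by
    have : PrimrecPred fun x : ℕ × List ℕ × ℕ =>
        R x.2.2.unpair.1.unpair.1 x.2.2.unpair.1.unpair.2 x.2.2.unpair.2 x.1 :=
      hR.comp (f := fun x : ℕ × List ℕ × ℕ =>
        (x.2.2.unpair.1.unpair.1, x.2.2.unpair.1.unpair.2, x.2.2.unpair.2, x.1)) (by fun_prop)
    convert ce_of (O := iterJump 0) (P := fun a L m =>
      R m.unpair.1.unpair.1 m.unpair.1.unpair.2 m.unpair.2 a) this using 1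
    ext m; simp
  have h2 := ce_jump (ce_jump h0)
  have e : {m | ∃ a, ∀ b, ∃ k, R m a b k} = {m | ∃ a, Nat.pair m a ∉ {m | ∃ a, Nat.pair m a ∉
      {x | ∃ k, R x.unpair.1.unpair.1 x.unpair.1.unpair.2 x.unpair.2 k}}} := by
    ext m
    simp
  rw [e]
  exact h2

theorem ce_jump_form {O : ℕ → ℕ} {S : Set ℕ} (hS : CeIn (jump O) S) :
    ∃ P : ℕ → ℕ → List ℕ → Prop, (PrimrecPred fun x : ℕ × ℕ × List ℕ => P x.1 x.2.1 x.2.2) ∧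
      ∀ m, m ∈ S ↔ ∃ a, ∀ k, P m a (pre O k) := by
  obtain ⟨c, rfl⟩ := hS
  have hdec : Primrec fun m : ℕ × ℕ × List ℕ => (Encodable.decode m.2.1.unpair.1 : Option (List ℕ)) :=
        Primrec.decode.comp (by fun_prop)
  let T : ℕ → List ℕ := fun a => (Encodable.decode a.unpair.1 : Option (List ℕ)).getD []
  have hT' : Primrec T := by
    have hdec : Primrec fun m : ℕ => (Encodable.decode m.unpair.1 : Option (List ℕ)) :=
        Primrec.decode.comp (by fun_prop)
    simp only [T]; fun_prop
  refine ⟨fun m a L => hb c.encode (T a) m ∧ ∀ i < (T a).length,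
    ((T a)[i]? = some 1 ∧ (a.unpair.2 ≤ L.length → hb i (L.take a.unpair.2) i)) ∨
    ((T a)[i]? = some 0 ∧ ¬ hb i L i), ?_, ?_⟩
  · clear_value T
    fun_prop
  · intro m
    have hj : ∀ i, jump O i = 1 ↔ ∃ k, hb i (pre O k) i := by
      intro i
      have := jump_eq_one (O := O) (decC i)
      rw [encode_decC] at this
      rw [this, dom_iff_hb, encode_decC]
    rw [Set.mem_ofPred_eq, dom_iff_hb]
    constructor
    · rintro ⟨j, h⟩
      have : ∀ i, ∃ k, jump O i = 1 → hb i (pre O k) i := by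
        intro i
        by_cases hi : jump O i = 1
        · obtain ⟨k, hk⟩ := (hj i).1 hi; exact ⟨k, fun _ => hk⟩
        · exact ⟨0, fun h => absurd h hi⟩
      choose K hK using this
      refine ⟨Nat.pair (Encodable.encode (pre (jump O) j)) ((Finset.range j).sup K), fun k => ?_⟩
      simp only [T, Nat.unpair_pair, Encodable.encodek, Option.getD_some, pre_length]
      refine ⟨h, fun i hi => ?_⟩
      rw [pre_get, if_pos hi]
      rcases jump_zero_or_one O i with h | h
      · right
        refine ⟨by rw [h], fun hh => ?_⟩
        have := (hj i).2 ⟨_, hh⟩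
        omega
      · left
        refine ⟨by rw [h], fun hk => ?_⟩
        rw [pre_take, min_eq_left hk]
        exact hb_mono (Finset.le_sup (f := K) (Finset.mem_range.2 hi)) (hK i h)
    · rintro ⟨a, h⟩
      have e : T a = pre (jump O) (T a).length := by
        apply List.ext_getElem?
        intro i
        rw [pre_get]
        split_ifs with hi
        · rcases (h a.unpair.2).2 i hi with ⟨h1, h2⟩ | ⟨h1, h2⟩
          · rw [h1, (hj i).2 ⟨a.unpair.2, by simpa [pre_take] using h2⟩]
          · rw [h1]
            rcases jump_zero_or_one O i with h3 | h3
            · rw [h3]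
            · obtain ⟨k, hk⟩ := (hj i).1 h3
              rcases (h k).2 i hi with ⟨h4, h5⟩ | ⟨h4, h5⟩
              · rw [h1] at h4; simp at h4
              · exact absurd hk h5
        · simpa using hi
      exact ⟨(T a).length, e ▸ (h 0).1⟩

theorem ce_two_form {S : Set ℕ} (hS : CeIn (iterJump 2) S) :
    ∃ R : ℕ → ℕ → ℕ → ℕ → Prop,
      (PrimrecPred fun x : ℕ × ℕ × ℕ × ℕ => R x.1 x.2.1 x.2.2.1 x.2.2.2) ∧
      ∀ m, m ∈ S ↔ ∃ a, ∀ b, ∃ k, R m a b k := by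
  obtain ⟨P, hP, h⟩ := ce_jump_form (O := iterJump 1) hS
  have h1 : CeIn (iterJump 1) {x | ∃ _a k : ℕ, ¬ P x.unpair.1 x.unpair.2 (pre (iterJump 1) k)} := by
    have : PrimrecPred fun x : ℕ × List ℕ × ℕ => ¬ P x.2.2.unpair.1 x.2.2.unpair.2 x.2.1 :=
      (hP.comp (f := fun x : ℕ × List ℕ × ℕ => (x.2.2.unpair.1, x.2.2.unpair.2, x.2.1))
        (by fun_prop)).not
    exact ce_of (P := fun a L x => ¬ P x.unpair.1 x.unpair.2 L) this
  obtain ⟨Q, hQ, h'⟩ := ce_jump_form (O := iterJump 0) h1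
  refine ⟨fun m a b k => ¬ Q (Nat.pair m a) b (pre (iterJump 0) k), ?_, fun m => ?_⟩
  · have e : (fun k => pre (iterJump 0) k) = fun k => (List.range k).map (fun _ => 0) := rfl
    have h3 : Primrec fun k => pre (iterJump 0) k := by rw [e]; fun_prop
    have h4 : Primrec fun x : ℕ × ℕ × ℕ × ℕ => pre (iterJump 0) x.2.2.2 := h3.comp (by fun_prop)
    exact (hQ.comp (f := fun x : ℕ × ℕ × ℕ × ℕ => (Nat.pair x.1 x.2.1, x.2.2.1,
      pre (iterJump 0) x.2.2.2)) (by fun_prop)).not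
  · rw [h]
    refine exists_congr fun a => ?_
    have h5 := h' (Nat.pair m a)
    simp only [Set.mem_ofPred_eq, Nat.unpair_pair] at h5
    constructor
    · intro h6 b
      by_contra hc
      push Not at hc
      obtain ⟨_, k, h7⟩ := h5.2 ⟨b, hc⟩
      exact h7 (h6 k)
    · intro h6 k
      by_contra hc
      obtain ⟨b, hb⟩ := h5.1 ⟨0, k, hc⟩
      obtain ⟨k', hk'⟩ := h6 b
      exact hk' (hb k')

end RandProb

namespace RandProb

/-! ### Reading codes of rationals -/

/-- positive part of numerator -/
def qP (m : ℕ) : ℕ := if m.unpair.1 % 2 = 1 then 0 else (m.unpair.1 + 1) / 2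
/-- negative part of numerator -/
def qN (m : ℕ) : ℕ := if m.unpair.1 % 2 = 1 then (m.unpair.1 + 1) / 2 else 0
/-- denominator -/
def qD (m : ℕ) : ℕ := m.unpair.2
/-- valid rational code -/
def isQ (m : ℕ) : Prop := 0 < qD m ∧ ∀ d < qD m + 1, (qP m + qN m) % d = 0 → qD m % d = 0 → d = 1

section
variable {α : Type*} [Primcodable α] {f : α → ℕ}
@[fun_prop] theorem pr_qP (hf : Primrec f) : Primrec fun a => qP (f a) := by
  unfold qP; fun_prop
@[fun_prop] theorem pr_qN (hf : Primrec f) : Primrec fun a => qN (f a) := by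
  unfold qN; fun_prop
@[fun_prop] theorem pr_qD (hf : Primrec f) : Primrec fun a => qD (f a) := by
  unfold qD; fun_prop
@[fun_prop] theorem pp_isQ (hf : Primrec f) : PrimrecPred fun a => isQ (f a) := by
  unfold isQ; fun_prop
end

theorem encode_rat (q : ℚ) : Encodable.encode q = Nat.pair (Equiv.intEquivNat q.num) q.den := rfl

theorem qD_encode (q : ℚ) : qD (Encodable.encode q) = q.den := by
  rw [encode_rat, qD, Nat.unpair_pair]

theorem qPN_encode (q : ℚ) : (q.num : ℤ) = qP (Encodable.encode q) - qN (Encodable.encode q) ∧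
    q.num.natAbs = qP (Encodable.encode q) + qN (Encodable.encode q) := by
  rw [encode_rat, qP, qN, Nat.unpair_pair]
  rcases h : q.num with n | n
  · have : Equiv.intEquivNat (Int.ofNat n) = 2 * n := rfl
    simp only [this]
    have h1 : ¬ (2 * n) % 2 = 1 := by omega
    rw [if_neg h1, if_neg h1]
    constructor
    · simp; omega
    · simp; omega
  · have : Equiv.intEquivNat (Int.negSucc n) = 2 * n + 1 := rfl
    simp only [this]
    have h1 : (2 * n + 1) % 2 = 1 := by omega
    rw [if_pos h1, if_pos h1]
    constructor
    · omega
    · simp; omega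

theorem isQ_encode (q : ℚ) : isQ (Encodable.encode q) := by
  have h := qPN_encode q
  refine ⟨by rw [qD_encode]; exact q.den_pos, fun d _ h1 h2 => ?_⟩
  rw [← h.2] at h1
  rw [qD_encode] at h2
  have := Nat.dvd_gcd (Nat.dvd_of_mod_eq_zero h1) (Nat.dvd_of_mod_eq_zero h2)
  rw [q.reduced] at this
  exact Nat.dvd_one.1 this

theorem exists_of_isQ {m : ℕ} (h : isQ m) : ∃ q : ℚ, Encodable.encode q = m := by
  obtain ⟨h0, h1⟩ := h
  let z : ℤ := Equiv.intEquivNat.symm m.unpair.1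
  have hz : z.natAbs = qP m + qN m := by
    obtain ⟨w, hw⟩ : ∃ w : ℤ, m.unpair.1 = Equiv.intEquivNat w := ⟨z, by simp [z]⟩
    simp only [z, qP, qN, hw, Equiv.symm_apply_apply]
    rcases w with n | n
    · have : Equiv.intEquivNat (Int.ofNat n) = 2 * n := rfl
      rw [this, if_neg (by omega), if_neg (by omega)]; simp; omega
    · have : Equiv.intEquivNat (Int.negSucc n) = 2 * n + 1 := rfl
      rw [this, if_pos (by omega), if_pos (by omega)]; simp; omega
  have hc : z.natAbs.Coprime (qD m) := by
    rw [hz]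
    have hd := Nat.gcd_dvd (qP m + qN m) (qD m)
    exact h1 _ (Nat.lt_succ_of_le (Nat.le_of_dvd h0 hd.2)) (Nat.mod_eq_zero_of_dvd hd.1)
      (Nat.mod_eq_zero_of_dvd hd.2)
  refine ⟨⟨z, qD m, h0.ne', hc⟩, ?_⟩
  rw [encode_rat]
  simp only [z, Equiv.apply_symm_apply, qD, Nat.pair_unpair]

theorem rat_val (q : ℚ) : (q : ℝ) * qD (Encodable.encode q) =
    qP (Encodable.encode q) - qN (Encodable.encode q) := by
  have h := (qPN_encode q).1
  have h2 : ((q.num : ℤ) : ℝ) = qP (Encodable.encode q) - qN (Encodable.encode q) := by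
    rw [h]; push_cast; rfl
  rw [← h2, qD_encode]
  have := Rat.mul_den_eq_num q
  exact_mod_cast this

theorem qD_pos (q : ℚ) : (0 : ℝ) < qD (Encodable.encode q) := by
  rw [qD_encode]; exact_mod_cast q.den_pos

/-- `q * D + B < A` -/
def qlt (m A B D : ℕ) : Prop := qP m * D + B * qD m < A * qD m + qN m * D
/-- `A < q * D + B` -/
def qgt (m A B D : ℕ) : Prop := A * qD m + qN m * D < qP m * D + B * qD m

section
variable {α : Type*} [Primcodable α] {f A B D : α → ℕ}
@[fun_prop] theorem pp_qlt (hf : Primrec f) (hA : Primrec A) (hB : Primrec B) (hD : Primrec D) :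
    PrimrecPred fun a => qlt (f a) (A a) (B a) (D a) := by
  unfold qlt; fun_prop
@[fun_prop] theorem pp_qgt (hf : Primrec f) (hA : Primrec A) (hB : Primrec B) (hD : Primrec D) :
    PrimrecPred fun a => qgt (f a) (A a) (B a) (D a) := by
  unfold qgt; fun_prop
end

theorem qlt_iff (q : ℚ) (A B D : ℕ) : qlt (Encodable.encode q) A B D ↔ (q : ℝ) * D + B < A := by
  have h := rat_val q
  have hp := qD_pos q
  unfold qlt
  rw [← Nat.cast_lt (α := ℝ), ← mul_lt_mul_iff_left₀ hp (c := (A : ℝ)) (b := (q : ℝ) * D + B)]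
  push_cast
  have : ((q : ℝ) * D + B) * qD (Encodable.encode q) = (qP (Encodable.encode q) - qN (Encodable.encode q)) * D
    + B * qD (Encodable.encode q) := by rw [← h]; ring
  rw [this]
  constructor <;> intro h <;> linarith

theorem qgt_iff (q : ℚ) (A B D : ℕ) : qgt (Encodable.encode q) A B D ↔ (A : ℝ) < (q : ℝ) * D + B := by
  have h := rat_val q
  have hp := qD_pos q
  unfold qgt
  rw [← Nat.cast_lt (α := ℝ), ← mul_lt_mul_iff_left₀ hp (b := (A : ℝ)) (c := (q : ℝ) * D + B)]
  push_cast
  have : ((q : ℝ) * D + B) * qD (Encodable.encode q) = (qP (Encodable.encode q) - qN (Encodable.encode q)) * D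
    + B * qD (Encodable.encode q) := by rw [← h]; ring
  rw [this]
  constructor <;> intro h <;> linarith

/-! ### Approximations of left-c.e. reals -/

/-- approximation value -/
noncomputable def ap (O : ℕ → ℕ) (g : List ℕ → ℕ) (s : ℕ) : ℝ := (g (pre O s) : ℝ) / 2 ^ s

/-- `g` gives a computable approximation from below. -/
structure IsApx (O : ℕ → ℕ) (α : ℝ) (g : List ℕ → ℕ) : Prop where
  pr : Primrec g
  zero : g (pre O 0) = 0
  mono : Monotone (ap O g)
  le : ∀ s, ap O g s ≤ α
  lt : 0 < α → ∀ s, ap O g s < α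
  sup : ∀ x < α, ∃ s, x < ap O g s

theorem bcount_lt_iff {P : ℕ → Prop} {n : ℕ} (hP : ∀ i j, i ≤ j → P j → P i) {j : ℕ} :
    j < n ∧ P j ↔ j < bcount P n := by
  rw [bcount_eq]
  constructor
  · rintro ⟨h1, h2⟩
    have : Finset.range (j+1) ⊆ (Finset.range n).filter P := by
      intro i hi
      simp only [Finset.mem_range, Finset.mem_filter] at hi ⊢
      exact ⟨by omega, hP i j (by omega) h2⟩
    have := Finset.card_le_card this
    simpa using this
  · intro h
    by_contra hc
    have : (Finset.range n).filter P ⊆ Finset.range j := by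
      intro i hi
      simp only [Finset.mem_range, Finset.mem_filter] at hi ⊢
      by_contra h3
      exact hc ⟨by omega, hP j i (by omega) hi.2⟩
    have := Finset.card_le_card this
    simp at this; omega

theorem lce_form {O : ℕ → ℕ} {α : ℝ} (h0 : 0 ≤ α) (h : LeftCeIn O α) : ∃ g, IsApx O α g := by
  obtain ⟨c, hc⟩ := h
  have hc' : ∀ q : ℚ, (q : ℝ) < α ↔ ∃ k, hb c.encode (pre O k) (Encodable.encode q) := by
    intro q
    rw [← dom_iff_hb]
    have := Set.ext_iff.1 hc (Encodable.encode q)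
    simp only [Set.mem_ofPred_eq] at this
    rw [← this]
    simp
  let P : List ℕ → ℕ → Prop := fun L j =>
    ∃ m < L.length, isQ m ∧ hb c.encode L m ∧ ¬ qlt m j 0 (2 ^ L.length)
  have hP : ∀ s j, P (pre O s) j ↔ ∃ q : ℚ, Encodable.encode q < s ∧
      hb c.encode (pre O s) (Encodable.encode q) ∧ (j : ℝ) ≤ q * 2 ^ s := by
    intro s j
    simp only [P, pre_length]
    constructor
    · rintro ⟨m, h1, h2, h3, h4⟩
      obtain ⟨q, rfl⟩ := exists_of_isQ h2
      rw [qlt_iff] at h4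
      push_cast at h4
      exact ⟨q, h1, h3, by linarith⟩
    · rintro ⟨q, h1, h2, h3⟩
      refine ⟨_, h1, isQ_encode q, h2, ?_⟩
      rw [qlt_iff]
      push_cast
      linarith
  let g : List ℕ → ℕ := fun L => bcount (fun j => P L (j+1)) (L.length * 2 ^ L.length)
  have gspec : ∀ s j, j + 1 ≤ g (pre O s) ↔ j + 1 ≤ s * 2 ^ s ∧ P (pre O s) (j+1) := by
    intro s j
    have := bcount_lt_iff (P := fun j => P (pre O s) (j+1)) (n := s * 2 ^ s) (j := j) (by
      intro i j hij h
      simp only [hP] at h ⊢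
      obtain ⟨q, h1, h2, h3⟩ := h
      refine ⟨q, h1, h2, le_trans ?_ h3⟩
      exact_mod_cast Nat.succ_le_succ hij)
    simp only [g, pre_length]
    rw [Nat.succ_le_iff, Nat.succ_le_iff, ← this]
  have hle : ∀ s, 0 < g (pre O s) → ap O g s < α := by
    intro s h
    obtain ⟨j, hj⟩ := Nat.exists_eq_succ_of_ne_zero h.ne'
    obtain ⟨h1, h2⟩ := (gspec s j).1 (by omega)
    obtain ⟨q, h3, h4, h5⟩ := (hP _ _).1 h2
    have := (hc' q).2 ⟨_, h4⟩
    refine lt_of_le_of_lt ?_ this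
    unfold ap
    rw [div_le_iff₀ (by positivity), hj]
    exact h5
  have hg2 : ∀ s, 2 * g (pre O s) ≤ g (pre O (s+1)) := by
    intro s
    rcases Nat.eq_zero_or_pos (g (pre O s)) with h | h
    · omega
    obtain ⟨j, hj⟩ := Nat.exists_eq_succ_of_ne_zero h.ne'
    obtain ⟨h1, h2⟩ := (gspec s j).1 (by omega)
    rw [hj]
    have : 2 * (j + 1) = (2 * j + 1) + 1 := by ring
    rw [Nat.succ_eq_add_one, this, gspec]
    constructor
    · rw [pow_succ]; nlinarith [Nat.pow_pos (n := s) (show 0 < 2 by norm_num)]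
    · rw [hP] at h2 ⊢
      obtain ⟨q, h3, h4, h5⟩ := h2
      refine ⟨q, by omega, hb_mono (Nat.le_succ _) h4, ?_⟩
      push_cast at h5 ⊢
      rw [pow_succ]
      linarith
  have hmono : Monotone (ap O g) := by
    refine monotone_nat_of_le_succ fun s => ?_
    unfold ap
    rw [div_le_div_iff₀ (by positivity) (by positivity), pow_succ]
    have : (2 * g (pre O s) : ℝ) ≤ g (pre O (s+1)) := by exact_mod_cast hg2 s
    have h2 : (0:ℝ) < 2 ^ s := by positivity
    nlinarith
  refine ⟨g, ?_, by simp [g, bcount], hmono, ?_, ?_, ?_⟩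
  · simp only [g, P]
    fun_prop
  · intro s
    rcases Nat.eq_zero_or_pos (g (pre O s)) with h | h
    · simpa [ap, h] using h0
    · exact (hle s h).le
  · intro hpos s
    rcases Nat.eq_zero_or_pos (g (pre O s)) with h | h
    · simpa [ap, h] using hpos
    · exact hle s h
  · intro x hx
    by_cases hx0 : x < 0
    · exact ⟨0, lt_of_lt_of_le hx0 (by unfold ap; positivity)⟩
    push Not at hx0
    obtain ⟨q, hq1, hq2⟩ := exists_rat_btwn hx
    obtain ⟨k, hk⟩ := (hc' q).1 hq2
    obtain ⟨n1, hn1⟩ := exists_nat_gt (q : ℝ)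
    obtain ⟨n2, hn2⟩ := exists_pow_lt_of_lt_one (sub_pos.2 hq1) (show (1/2:ℝ) < 1 by norm_num)
    let s := k + (Encodable.encode q + 1) + n1 + n2
    have h2s : (0:ℝ) < 2 ^ s := by positivity
    have hs2 : (1/2:ℝ)^s ≤ (1/2:ℝ)^n2 := pow_le_pow_of_le_one (by norm_num) (by norm_num) (by omega)
    have hpow : (1/2:ℝ)^s * 2 ^ s = 1 := by rw [← mul_pow]; norm_num
    refine ⟨s, ?_⟩
    have hqx : (q : ℝ) * 2 ^ s - 1 > x * 2 ^ s := by nlinarith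
    have key : (⌊(q:ℝ) * 2 ^ s⌋₊ : ℝ) ≤ g (pre O s) := by
      rcases Nat.eq_zero_or_pos ⌊(q:ℝ) * 2 ^ s⌋₊ with h | h
      · rw [h]; simp
      obtain ⟨j, hj⟩ := Nat.exists_eq_succ_of_ne_zero h.ne'
      rw [hj]
      have hjq : ((j + 1 : ℕ) : ℝ) ≤ q * 2 ^ s := by
        rw [← Nat.succ_eq_add_one, ← hj]; exact Nat.floor_le (by nlinarith)
      exact_mod_cast (gspec s j).2 ⟨by
        have h1 : (q : ℝ) * 2 ^ s ≤ s * 2 ^ s := by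
          apply mul_le_mul_of_nonneg_right _ h2s.le
          refine le_trans hn1.le ?_
          exact_mod_cast (by omega : n1 ≤ s)
        exact_mod_cast hjq.trans h1, (hP _ _).2 ⟨q, by omega, hb_mono (by omega) hk, hjq⟩⟩
    unfold ap
    rw [lt_div_iff₀ h2s]
    have := Nat.lt_floor_add_one ((q:ℝ) * 2 ^ s)
    linarith

theorem lce_of_sup {O : ℕ → ℕ} {γ : ℝ} {A B : List ℕ → ℕ} {D : ℕ} (hA : Primrec A) (hB : Primrec B)
    (hD : 0 < D) (hle : ∀ t, ((A (pre O t) : ℝ) - B (pre O t)) / 2 ^ t ≤ γ * D)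
    (hsup : ∀ x < γ, ∃ t, x * D < ((A (pre O t) : ℝ) - B (pre O t)) / 2 ^ t) : LeftCeIn O γ := by
  have hP : PrimrecPred fun x : ℕ × List ℕ × ℕ => isQ x.2.2 ∧
      qlt x.2.2 (A x.2.1) (B x.2.1) (D * 2 ^ x.2.1.length) := by fun_prop
  convert ce_of (O := O) (P := fun a L m => isQ m ∧ qlt m (A L) (B L) (D * 2 ^ L.length)) hP using 0
  refine iff_of_eq (congrArg (CeIn O) (Set.ext fun m => ?_))
  simp only [Set.mem_ofPred_eq, pre_length]
  have hDr : (0:ℝ) < D := by exact_mod_cast hD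
  have key : ∀ (q : ℚ) t, qlt (Encodable.encode q) (A (pre O t)) (B (pre O t)) (D * 2 ^ t) ↔
      (q:ℝ) * D < ((A (pre O t) : ℝ) - B (pre O t)) / 2 ^ t := by
    intro q t
    rw [qlt_iff, lt_div_iff₀ (by positivity)]
    push_cast
    constructor <;> intro h <;> linarith
  constructor
  · rintro ⟨q, rfl, hq⟩
    obtain ⟨t, ht⟩ := hsup q hq
    exact ⟨0, t, isQ_encode q, (key q t).2 ht⟩
  · rintro ⟨_, t, hm, h⟩
    obtain ⟨q, rfl⟩ := exists_of_isQ hm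
    exact ⟨q, rfl, lt_of_mul_lt_mul_right (((key q t).1 h).trans_le (hle t)) hDr.le⟩

end RandProb

namespace RandProb

/-! ### The measure on Cantor space -/

/-- value of an initial segment -/
def vv (X : Cantor) : ℕ → ℕ
  | 0 => 0
  | n + 1 => 2 * vv X n + cond (X n) 1 0

theorem vv_lt (X : Cantor) (n : ℕ) : vv X n < 2 ^ n := by
  induction n with
  | zero => simp [vv]
  | succ n ih => rw [vv, pow_succ]; cases X n <;> simp <;> omega

theorem vv_inj (X Y : Cantor) (n : ℕ) : vv X n = vv Y n ↔ ∀ i < n, X i = Y i := by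
  induction n with
  | zero => simp [vv]
  | succ n ih =>
    have : (∀ i < n + 1, X i = Y i) ↔ (∀ i < n, X i = Y i) ∧ X n = Y n := by
      simp only [Nat.lt_succ_iff_lt_or_eq, or_imp, forall_and, forall_eq]
    rw [this, ← ih, vv, vv]
    cases hx : X n <;> cases hy : Y n <;> simp <;> omega

theorem floor_two (y : ℝ) : ⌊y * 2⌋ / 2 = ⌊y⌋ := by
  have := Int.floor_div_natCast (k := ℝ) (y * 2) 2
  simp at this
  exact this.symm

theorem vv_digits {x : ℝ} (hx : x ∈ Set.Ico (0:ℝ) 1) (n : ℕ) :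
    (vv (digits x) n : ℤ) = ⌊x * 2 ^ n⌋ := by
  induction n with
  | zero => simp [vv]; rw [eq_comm, Int.floor_eq_zero_iff]; exact hx
  | succ n ih =>
    rw [vv]
    push_cast
    rw [ih]
    have h1 : ⌊x * 2 ^ (n+1)⌋ / 2 = ⌊x * 2 ^ n⌋ := by
      have := floor_two (x * 2 ^ n)
      rwa [mul_assoc, ← pow_succ] at this
    unfold digits
    by_cases h : ⌊x * 2 ^ (n+1)⌋ % 2 = 1
    · simp [h]; omega
    · simp [h]; omega

/-- value `k`-prefix equals `j` -/
def cyv (n j : ℕ) : Set Cantor := {X | vv X n = j}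

theorem measurable_vv (n : ℕ) : Measurable fun X : Cantor => vv X n := by
  induction n with
  | zero => exact measurable_const
  | succ n ih =>
    show Measurable fun X : Cantor => 2 * vv X n + cond (X n) 1 0
    have : Measurable fun X : Cantor => cond (X n) 1 0 :=
      (measurable_from_top (f := fun b : Bool => cond b 1 0)).comp (measurable_pi_apply n)
    exact (ih.const_mul 2).add this

theorem measurable_digits : Measurable digits := by
  refine measurable_pi_lambda _ fun n => ?_
  unfold digits
  have h1 : Measurable fun x : ℝ => ⌊x * 2 ^ (n+1)⌋ := by fun_prop
  exact (measurable_from_top (f := fun z : ℤ => decide (z % 2 = 1))).comp h1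

instance : IsProbabilityMeasure mu := by
  constructor
  rw [mu, Measure.map_apply measurable_digits MeasurableSet.univ]
  simp

theorem mu_apply {S : Set Cantor} (hS : MeasurableSet S) :
    mu S = volume {x | x ∈ Set.Ico (0:ℝ) 1 ∧ digits x ∈ S} := by
  rw [mu, Measure.map_apply measurable_digits hS, Measure.restrict_apply (measurable_digits hS)]
  congr 1
  ext x
  simp [and_comm]

theorem measurableSet_cyv (n j : ℕ) : MeasurableSet (cyv n j) :=
  measurable_vv n (measurableSet_singleton j)

theorem mu_cyv {n j : ℕ} (hj : j < 2 ^ n) : mu (cyv n j) = ENNReal.ofReal ((1/2:ℝ) ^ n) := by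
  rw [mu_apply (measurableSet_cyv n j)]
  have h2 : (0:ℝ) < 2 ^ n := by positivity
  have hj' : (j:ℝ) + 1 ≤ 2 ^ n := by exact_mod_cast hj
  have : {x | x ∈ Set.Ico (0:ℝ) 1 ∧ digits x ∈ cyv n j} = Set.Ico ((j:ℝ) / 2 ^ n) ((j+1:ℝ)/2^n) := by
    ext x
    simp only [Set.mem_ofPred_eq, cyv, Set.mem_Ico, div_le_iff₀ h2, lt_div_iff₀ h2]
    constructor
    · rintro ⟨hx, h⟩
      have := vv_digits hx n
      rw [h, eq_comm, Int.floor_eq_iff] at this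
      exact_mod_cast this
    · rintro ⟨h1, h3⟩
      have hj0 : (0:ℝ) ≤ j := by positivity
      have hx : x ∈ Set.Ico (0:ℝ) 1 := by
        constructor
        · by_contra hc; push Not at hc; nlinarith
        · by_contra hc; push Not at hc; nlinarith
      refine ⟨hx, ?_⟩
      have := vv_digits hx n
      have h4 : ⌊x * 2 ^ n⌋ = (j:ℤ) := by rw [Int.floor_eq_iff]; exact ⟨by exact_mod_cast h1, by exact_mod_cast h3⟩
      rw [h4] at this
      exact_mod_cast this
  rw [this, Real.volume_Ico]
  congr 1
  rw [one_div, inv_pow]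
  field_simp
  ring

/-- cylinder -/
def cy (X : Cantor) (n : ℕ) : Set Cantor := {Y | ∀ i < n, Y i = X i}

theorem cy_eq (X : Cantor) (n : ℕ) : cy X n = cyv n (vv X n) := by
  ext Y; simp [cy, cyv, vv_inj]

theorem mu_cy (X : Cantor) (n : ℕ) : mu (cy X n) = ENNReal.ofReal ((1/2:ℝ) ^ n) := by
  rw [cy_eq, mu_cyv (vv_lt X n)]

theorem measurableSet_cy (X : Cantor) (n : ℕ) : MeasurableSet (cy X n) := by
  rw [cy_eq]; exact measurableSet_cyv _ _

theorem measure_ext {μ ν : Measure Cantor} [IsFiniteMeasure μ]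
    (h : ∀ X n, μ (cy X n) = ν (cy X n)) : μ = ν := by
  let C : Set (Set Cantor) := {S | ∃ X n, S = cy X n}
  have hgen : (MeasurableSpace.pi : MeasurableSpace Cantor) = MeasurableSpace.generateFrom C := by
    apply le_antisymm
    · refine iSup_le fun i => ?_
      rw [← measurable_iff_comap_le]
      refine @measurable_to_bool _ (MeasurableSpace.generateFrom C) _ ?_
      have : (fun b : Cantor => b i) ⁻¹' {true} =
          ⋃ j ∈ {j : ℕ | ∃ X : Cantor, vv X (i+1) = j ∧ X i = true}, cyv (i+1) j := by
        ext Y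
        simp only [Set.mem_preimage, Set.mem_singleton_iff, Set.mem_ofPred_eq, Set.mem_iUnion, cyv,
          exists_prop, exists_eq_right']
        constructor
        · intro h; exact ⟨Y, rfl, h⟩
        · rintro ⟨X, h1, h2⟩
          rw [← h2, ((vv_inj X Y (i+1)).1 h1 i (by omega))]
      rw [this]
      refine @MeasurableSet.biUnion _ _ (MeasurableSpace.generateFrom C) _ _ (Set.to_countable _) ?_
      rintro j ⟨X, rfl, _⟩
      exact MeasurableSpace.measurableSet_generateFrom ⟨X, i+1, (cy_eq X _).symm⟩
    · refine MeasurableSpace.generateFrom_le ?_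
      rintro _ ⟨X, n, rfl⟩
      exact measurableSet_cy X n
  refine ext_of_generate_finite C hgen ?_ ?_ ?_
  · rintro _ ⟨X, n, rfl⟩ _ ⟨Y, m, rfl⟩ ⟨Z, hZ1, hZ2⟩
    refine ⟨Z, max n m, ?_⟩
    ext W
    simp only [cy, Set.mem_inter_iff, Set.mem_ofPred_eq] at *
    constructor
    · rintro ⟨h1, h2⟩ i hi
      rcases lt_max_iff.1 hi with h | h
      · rw [h1 i h, hZ1 i h]
      · rw [h2 i h, hZ2 i h]
    · intro h1
      exact ⟨fun i hi => by rw [h1 i (lt_max_of_lt_left hi), hZ1 i hi],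
        fun i hi => by rw [h1 i (lt_max_of_lt_right hi), hZ2 i hi]⟩
  · rintro _ ⟨X, n, rfl⟩; exact h X n
  · have := h (fun _ => false) 0
    simpa [cy] using this

/-- prepend a bit -/
def consB (b : Bool) (X : Cantor) : Cantor := fun n => if n = 0 then b else X (n - 1)

theorem measurable_consB (b : Bool) : Measurable (consB b) := by
  refine measurable_pi_lambda _ fun n => ?_
  unfold consB
  by_cases h : n = 0
  · simp [h]
  · simp only [h, if_false]; exact measurable_pi_apply _

theorem measurableSet_bit (n : ℕ) (b : Bool) : MeasurableSet {X : Cantor | X n = b} :=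
  (measurable_pi_apply n : Measurable fun X : Cantor => X n) (measurableSet_singleton b)

theorem ofReal_half_pow (n : ℕ) : ENNReal.ofReal ((1/2:ℝ)^(n+1)) =
    ENNReal.ofReal (1/2) * ENNReal.ofReal ((1/2:ℝ)^n) := by
  rw [pow_succ, mul_comm, ENNReal.ofReal_mul (by norm_num)]

theorem mu_consB {S : Set Cantor} (hS : MeasurableSet S) (b : Bool) :
    mu (S ∩ {X | X 0 = b}) = ENNReal.ofReal (1/2) * mu (consB b ⁻¹' S) := by
  have : mu.restrict {X | X 0 = b} = ENNReal.ofReal (1/2) • (mu.map (consB b)) := by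
    apply measure_ext
    intro X n
    rw [Measure.restrict_apply (measurableSet_cy X n), Measure.smul_apply,
      Measure.map_apply (measurable_consB b) (measurableSet_cy X n), smul_eq_mul]
    cases n with
    | zero =>
      have h1 : cy X 0 ∩ {X | X 0 = b} = cy (fun _ => b) 1 := by
        ext Y; simp [cy]
      have h2 : consB b ⁻¹' (cy X 0) = cy X 0 := by ext Y; simp [cy]
      rw [h1, h2, mu_cy, mu_cy, ofReal_half_pow]
    | succ n =>
      by_cases hb : X 0 = b
      · have h1 : cy X (n+1) ∩ {X | X 0 = b} = cy X (n+1) := by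
          ext Y
          simp only [cy, Set.mem_inter_iff, Set.mem_ofPred_eq, and_iff_left_iff_imp]
          intro h; rw [h 0 (by omega), hb]
        have h2 : consB b ⁻¹' (cy X (n+1)) = cy (fun i => X (i+1)) n := by
          ext Y
          simp only [cy, Set.mem_preimage, Set.mem_ofPred_eq, consB]
          constructor
          · intro h i hi
            have := h (i+1) (by omega)
            simpa using this
          · intro h i hi
            cases i with
            | zero => simp [hb]
            | succ i => simpa using h i (by omega)
        rw [h1, h2, mu_cy, mu_cy, ofReal_half_pow]
      · have h1 : cy X (n+1) ∩ {X | X 0 = b} = ∅ := by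
          ext Y
          simp only [cy, Set.mem_inter_iff, Set.mem_ofPred_eq, Set.mem_empty_iff_false, iff_false]
          rintro ⟨h, h'⟩; rw [h 0 (by omega)] at h'; exact hb h'
        have h2 : consB b ⁻¹' (cy X (n+1)) = ∅ := by
          ext Y
          simp only [cy, Set.mem_preimage, Set.mem_ofPred_eq, consB, Set.mem_empty_iff_false, iff_false]
          intro h
          have := h 0 (by omega)
          simp at this; exact hb this.symm
        rw [h1, h2]; simp
  rw [← Measure.restrict_apply hS, this, Measure.smul_apply,
      Measure.map_apply (measurable_consB b) hS, smul_eq_mul]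

theorem prepend_cons (b : Bool) (ρ : List Bool) (X : Cantor) :
    prepend (b :: ρ) X = consB b (prepend ρ X) := by
  ext n
  cases n with
  | zero => simp [prepend, consB]
  | succ n => simp [prepend, consB]

theorem prepend_nil (X : Cantor) : prepend [] X = X := by
  ext n; simp [prepend]

theorem measurable_prepend (ρ : List Bool) : Measurable (prepend ρ) := by
  induction ρ with
  | nil =>
    have : prepend [] = id := funext prepend_nil
    rw [this]; exact measurable_id
  | cons b ρ ih =>
    have : prepend (b :: ρ) = consB b ∘ prepend ρ := funext (prepend_cons b ρ)
    rw [this]; exact (measurable_consB b).comp ih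

theorem initSeg_eq_iff (X : Cantor) (n : ℕ) (ρ : List Bool) (h : ρ.length = n) :
    initSeg X n = ρ ↔ ∀ i < n, X i = ρ.getD i false := by
  subst h
  constructor
  · intro h i hi
    have : (initSeg X ρ.length).getD i false = ρ.getD i false := by rw [h]
    rw [← this]; simp [initSeg, hi]
  · intro h
    apply List.ext_getElem
    · simp [initSeg]
    · intro i h1 h2
      simp only [initSeg, List.getElem_map, List.getElem_range]
      rw [h i h2]; simp [h2]

theorem measurableSet_extends (ρ : List Bool) : MeasurableSet {X | Extends X ρ} := by
  have : {X | Extends X ρ} = cy (fun i => ρ.getD i false) ρ.length := by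
    ext X; exact initSeg_eq_iff X _ ρ rfl
  rw [this]; exact measurableSet_cy _ _

theorem mu_prepend (ρ : List Bool) : ∀ {S : Set Cantor}, MeasurableSet S →
    mu (S ∩ {X | Extends X ρ}) = ENNReal.ofReal ((1/2:ℝ) ^ ρ.length) * mu (prepend ρ ⁻¹' S) := by
  induction ρ with
  | nil =>
    intro S hS
    have : prepend [] = id := funext prepend_nil
    simp [Extends, initSeg, this]
  | cons b ρ ih =>
    intro S hS
    have h1 : S ∩ {X | Extends X (b :: ρ)} = (S ∩ {X | Extends X (b :: ρ)}) ∩ {X | X 0 = b} := by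
      ext X
      simp only [Set.mem_inter_iff, Set.mem_ofPred_eq]
      refine ⟨fun h => ⟨h, ?_⟩, fun h => h.1⟩
      have := (initSeg_eq_iff X _ _ rfl).1 h.2 0 (by simp)
      simpa using this
    rw [h1, mu_consB (hS.inter (measurableSet_extends _))]
    have h2 : consB b ⁻¹' (S ∩ {X | Extends X (b :: ρ)}) = (consB b ⁻¹' S) ∩ {X | Extends X ρ} := by
      ext X
      simp only [Set.mem_preimage, Set.mem_inter_iff, Set.mem_ofPred_eq, and_congr_right_iff, Extends]
      intro _
      rw [initSeg_eq_iff _ _ _ rfl, initSeg_eq_iff _ _ _ rfl]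
      constructor
      · intro h i hi
        have := h (i+1) (by simpa using hi)
        simpa [consB] using this
      · intro h i hi
        cases i with
        | zero => simp [consB]
        | succ i => simpa [consB] using h i (by simpa using hi)
    rw [h2, ih (measurable_consB b hS), List.length_cons, ofReal_half_pow, mul_assoc]
    have : prepend (b :: ρ) = consB b ∘ prepend ρ := funext (prepend_cons b ρ)
    rw [this, Set.preimage_comp]

/-- interleaving -/
def inter (p : Cantor × Cantor) : Cantor := fun n => if n % 2 = 0 then p.1 (n / 2) else p.2 (n / 2)

theorem measurable_inter : Measurable inter := by
  refine measurable_pi_lambda _ fun n => ?_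
  unfold inter
  by_cases h : n % 2 = 0
  · simp only [h, if_true]; exact (measurable_pi_apply _).comp measurable_fst
  · simp only [h, if_false]; exact (measurable_pi_apply _).comp measurable_snd

theorem map_inter : (mu.prod mu).map inter = mu := by
  apply measure_ext
  intro X n
  rw [Measure.map_apply measurable_inter (measurableSet_cy X n), mu_cy]
  have : inter ⁻¹' (cy X n) = cy (fun i => X (2*i)) ((n+1)/2) ×ˢ cy (fun i => X (2*i+1)) (n/2) := by
    ext ⟨Y, Z⟩
    simp only [cy, Set.mem_preimage, Set.mem_ofPred_eq, Set.mem_prod, inter]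
    constructor
    · intro h
      constructor
      · intro i hi
        have := h (2*i) (by omega)
        simpa using this
      · intro i hi
        have := h (2*i+1) (by omega)
        rw [if_neg (by omega)] at this
        rw [← this]; congr 1; omega
    · rintro ⟨h1, h2⟩ i hi
      split_ifs with h
      · rw [h1 (i/2) (by omega)]; congr 1; omega
      · rw [h2 (i/2) (by omega)]; congr 1; omega
  rw [this, Measure.prod_prod, mu_cy, mu_cy, ← ENNReal.ofReal_mul (by positivity), ← pow_add]
  congr 2
  omega

/-- string of length `k` with value `j` -/
def strOf (k j : ℕ) : List Bool := (List.range k).map fun i => decide (j / 2 ^ (k - 1 - i) % 2 = 1)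

@[fun_prop] theorem pr_strOf {α : Type*} [Primcodable α] {f g : α → ℕ} (hf : Primrec f)
    (hg : Primrec g) : Primrec fun a => strOf (f a) (g a) := by
  unfold strOf; fun_prop

theorem strOf_vv (X : Cantor) (k : ℕ) : strOf k (vv X k) = initSeg X k := by
  have key : ∀ d n, n + 1 + d = k → decide (vv X k / 2 ^ d % 2 = 1) = X n := by
    have h1 : ∀ d m, vv X (m + d) / 2 ^ d = vv X m := by
      intro d m
      induction d with
      | zero => simp
      | succ d ih =>
        rw [← add_assoc, vv, pow_succ, mul_comm (2^d) 2, ← Nat.div_div_eq_div_mul]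
        have : (2 * vv X (m + d) + cond (X (m + d)) 1 0) / 2 = vv X (m+d) := by
          cases X (m+d) <;> simp <;> omega
        rw [this, ih]
    intro d n hd
    rw [← hd, h1, vv]
    cases X n <;> simp <;> omega
  unfold strOf initSeg
  apply List.map_congr_left
  intro i hi
  rw [List.mem_range] at hi
  exact key _ _ (by omega)

theorem measurableSet_initSeg (Q : List Bool → Prop) (k : ℕ) :
    MeasurableSet {X | Q (initSeg X k)} := by
  have : {X | Q (initSeg X k)} = (fun X => vv X k) ⁻¹' {j | Q (strOf k j)} := by
    ext X; simp [strOf_vv]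
  rw [this]
  exact measurable_vv k (MeasurableSet.of_discrete)

theorem muR_count (Q : List Bool → Prop) (k : ℕ) :
    muR {X | Q (initSeg X k)} = (bcount (fun j => Q (strOf k j)) (2 ^ k) : ℝ) / 2 ^ k := by
  have h1 : {X | Q (initSeg X k)} = ⋃ j ∈ (Finset.range (2^k)).filter (fun j => Q (strOf k j)), cyv k j := by
    ext X
    simp only [Set.mem_ofPred_eq, Finset.mem_filter, Finset.mem_range, Set.mem_iUnion, cyv,
      exists_prop, exists_eq_right']
    rw [strOf_vv]
    simp [vv_lt]
  rw [muR, h1, measure_biUnion_finset, Finset.sum_congr rfl (fun j hj => mu_cyv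
    (Finset.mem_range.1 (Finset.mem_filter.1 hj).1)), Finset.sum_const, bcount_eq]
  · simp only [nsmul_eq_mul, ENNReal.toReal_mul, ENNReal.toReal_natCast]
    rw [ENNReal.toReal_ofReal (by positivity), one_div, inv_pow]; rfl
  · intro i _ j _ hij
    refine Set.disjoint_left.2 fun X h1 h2 => hij ?_
    rw [← show vv X k = i from h1]; exact h2
  · intro j _; exact measurableSet_cyv k j

end RandProb

namespace RandProb

/-! ### Sigma-3 classes -/

theorem initSeg_take (X : Cantor) (k j : ℕ) : (initSeg X k).take j = initSeg X (min j k) := by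
  unfold initSeg
  rw [← List.map_take, List.take_range]

@[simp] theorem initSeg_length (X : Cantor) (k : ℕ) : (initSeg X k).length = k := by
  simp [initSeg]

def class3 (R : ℕ → ℕ → List Bool → Prop) : Set Cantor := {X | ∃ a, ∀ b, ∃ k, R a b (initSeg X k)}

/-- primitive recursive matrix -/
def PR3 (R : ℕ → ℕ → List Bool → Prop) : Prop :=
  PrimrecPred fun x : ℕ × ℕ × List Bool => R x.1 x.2.1 x.2.2

theorem measurableSet_class3 (R : ℕ → ℕ → List Bool → Prop) : MeasurableSet (class3 R) := by
  have : class3 R = ⋃ a, ⋂ b, ⋃ k, {X | R a b (initSeg X k)} := by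
    ext X; simp [class3]
  rw [this]
  exact MeasurableSet.iUnion fun a => MeasurableSet.iInter fun b => MeasurableSet.iUnion fun k =>
    measurableSet_initSeg _ k

def Q3 (R : ℕ → ℕ → List Bool → Prop) (N b k : ℕ) (τ : List Bool) : Prop :=
  ∃ a < N, ∀ b' < b, ∃ j < k, R a b' (τ.take j)

theorem Q3_iff (R : ℕ → ℕ → List Bool → Prop) (N b k : ℕ) (X : Cantor) :
    Q3 R N b k (initSeg X k) ↔ ∃ a < N, ∀ b' < b, ∃ j < k, R a b' (initSeg X j) := by
  unfold Q3
  refine exists_congr fun a => and_congr_right fun _ => forall₂_congr fun b' _ =>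
    exists_congr fun j => and_congr_right fun hj => ?_
  rw [initSeg_take, min_eq_left hj.le]

theorem muR_tendsto_iUnion {s : ℕ → Set Cantor} (h : Monotone s) :
    Filter.Tendsto (fun n => muR (s n)) Filter.atTop (nhds (muR (⋃ n, s n))) :=
  (ENNReal.tendsto_toReal (measure_ne_top _ _)).comp (tendsto_measure_iUnion_atTop h)

theorem muR_tendsto_iInter {s : ℕ → Set Cantor} (hm : ∀ n, MeasurableSet (s n)) (h : Antitone s) :
    Filter.Tendsto (fun n => muR (s n)) Filter.atTop (nhds (muR (⋂ n, s n))) :=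
  (ENNReal.tendsto_toReal (measure_ne_top _ _)).comp
    (tendsto_measure_iInter_atTop (fun i => (hm i).nullMeasurableSet) h ⟨0, measure_ne_top _ _⟩)

theorem muR_mono {S T : Set Cantor} (h : S ⊆ T) : muR S ≤ muR T :=
  ENNReal.toReal_mono (measure_ne_top _ _) (measure_mono h)

theorem muR_nonneg (S : Set Cantor) : 0 ≤ muR S := ENNReal.toReal_nonneg
theorem muR_le_one (S : Set Cantor) : muR S ≤ 1 := by
  have := ENNReal.toReal_mono ENNReal.one_ne_top (prob_le_one (μ := mu) (s := S))
  simpa [muR] using this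

theorem leftCe_class3 {R : ℕ → ℕ → List Bool → Prop} (hR : PR3 R) :
    LeftCeIn (iterJump 2) (muR (class3 R)) := by
  let T : ℕ → ℕ → Set Cantor := fun N b => ⋃ k, {X | Q3 R N b k (initSeg X k)}
  let V : ℕ → Set Cantor := fun N => ⋂ b, T N b
  have hk : ∀ N b, Monotone fun k => {X | Q3 R N b k (initSeg X k)} := by
    intro N b k k' h X
    simp only [Set.mem_ofPred_eq, Q3_iff]
    rintro ⟨a, ha, h'⟩
    refine ⟨a, ha, fun b' hb => ?_⟩
    obtain ⟨j, hj, h''⟩ := h' b' hb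
    exact ⟨j, by omega, h''⟩
  have hTm : ∀ N b, MeasurableSet (T N b) := fun N b =>
    MeasurableSet.iUnion fun k => measurableSet_initSeg _ k
  have hT : ∀ N, Antitone (T N) := by
    intro N b b' h X
    simp only [T, Set.mem_iUnion, Set.mem_ofPred_eq, Q3_iff]
    rintro ⟨k, a, ha, h'⟩
    exact ⟨k, a, ha, fun c hc => h' c (by omega)⟩
  have hV : Monotone V := by
    intro N N' h X
    simp only [V, T, Set.mem_iInter, Set.mem_iUnion, Set.mem_ofPred_eq, Q3_iff]
    intro h' b
    obtain ⟨k, a, ha, h''⟩ := h' b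
    exact ⟨k, a, by omega, h''⟩
  have hcl : class3 R = ⋃ N, V N := by
    ext X
    simp only [class3, V, T, Set.mem_iInter, Set.mem_iUnion, Set.mem_ofPred_eq, Q3_iff]
    constructor
    · rintro ⟨a, h⟩
      choose f hf using h
      refine ⟨a + 1, fun b => ⟨(Finset.range b).sup f + 1, a, by omega, fun b' hb => ⟨f b', ?_, hf b'⟩⟩⟩
      exact Nat.lt_succ_of_le (Finset.le_sup (f := f) (Finset.mem_range.2 hb))
    · rintro ⟨N, h⟩
      choose f g hg h using h
      by_contra hc
      push Not at hc
      choose B hB using hc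
      have := h ((Finset.range N).sup B + 1) (B (g ((Finset.range N).sup B + 1)))
        (Nat.lt_succ_of_le (Finset.le_sup (f := B) (Finset.mem_range.2 (hg _))))
      obtain ⟨j, _, hj⟩ := this
      exact hB _ _ hj
  obtain ⟨cnt, hcnt⟩ : ∃ cnt : ℕ → ℕ → ℕ → ℕ, cnt = fun N b k => bcount (fun j => Q3 R N b k (strOf k j)) (2 ^ k) := ⟨_, rfl⟩
  have hc : ∀ N b k, muR {X | Q3 R N b k (initSeg X k)} = cnt N b k / 2 ^ k := by
    subst hcnt; exact fun N b k => muR_count _ k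
  have h1 : PrimrecPred fun x : ℕ × ℕ × ℕ × ℕ =>
      isQ x.1 ∧ qlt x.1 x.2.1.unpair.2.unpair.1 0 (2 ^ x.2.1.unpair.2.unpair.2) ∧
      x.2.1.unpair.2.unpair.1 * 2 ^ x.2.2.2 ≤ cnt x.2.1.unpair.1 x.2.2.1 x.2.2.2 *
        2 ^ x.2.1.unpair.2.unpair.2 := by
    have hQ : PrimrecPred fun x : (ℕ × ℕ × ℕ) × List Bool => Q3 R x.1.1 x.1.2.1 x.1.2.2 x.2 := by
      unfold Q3
      refine pp_ex (by fun_prop) (pp_all (by fun_prop) (pp_ex (by fun_prop) ?_))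
      exact hR.comp (f := fun p : ((((ℕ × ℕ × ℕ) × List Bool) × ℕ) × ℕ) × ℕ =>
        (p.1.1.2, p.1.2, p.1.1.1.2.take p.2)) (by fun_prop)
    have hcp : Primrec fun x : ℕ × ℕ × ℕ × ℕ => cnt x.2.1.unpair.1 x.2.2.1 x.2.2.2 := by
      subst hcnt
      refine pr_bcount (f := fun x : ℕ × ℕ × ℕ × ℕ => 2 ^ x.2.2.2) (by fun_prop) ?_
      exact hQ.comp (f := fun p : (ℕ × ℕ × ℕ × ℕ) × ℕ => ((p.1.2.1.unpair.1, p.1.2.2.1, p.1.2.2.2),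
        strOf p.1.2.2.2 p.2)) (by fun_prop)
    exact PrimrecPred.and (by fun_prop) (PrimrecPred.and (by fun_prop)
      (pp_le (by fun_prop) (pr_mul hcp (by fun_prop))))
  have h2 := ce_sigma3 (R := fun m a b k => isQ m ∧ qlt m a.unpair.2.unpair.1 0 (2 ^ a.unpair.2.unpair.2) ∧
      a.unpair.2.unpair.1 * 2 ^ k ≤ cnt a.unpair.1 b k * 2 ^ a.unpair.2.unpair.2) h1
  unfold LeftCeIn
  have e : {m | ∃ q : ℚ, Encodable.encode q = m ∧ (q : ℝ) < muR (class3 R)} =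
    {m | ∃ a : ℕ, ∀ b, ∃ k, isQ m ∧ qlt m a.unpair.2.unpair.1 0 (2 ^ a.unpair.2.unpair.2) ∧
      a.unpair.2.unpair.1 * 2 ^ k ≤ cnt a.unpair.1 b k * 2 ^ a.unpair.2.unpair.2} := by
    have hle : ∀ (A B : ℕ) (k s : ℕ), A * 2 ^ k ≤ B * 2 ^ s ↔ (A:ℝ) / 2 ^ s ≤ B / 2 ^ k := by
      intro A B k s
      rw [div_le_div_iff₀ (by positivity) (by positivity)]
      exact_mod_cast Iff.rfl
    ext m
    constructor
    · rintro ⟨q, rfl, hq⟩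
      rw [hcl] at hq
      obtain ⟨N, hN⟩ := ((muR_tendsto_iUnion hV).eventually (lt_mem_nhds hq)).exists
      have : ∃ A s : ℕ, (q:ℝ) < (A:ℝ) / 2 ^ s ∧ ((A:ℝ)/2^s < muR (V N) ∨ A = 0) := by
        by_cases h0 : (q:ℝ) < 0
        · exact ⟨0, 0, by simpa using h0, Or.inr rfl⟩
        · push Not at h0
          obtain ⟨s, hs⟩ := exists_pow_lt_of_lt_one (sub_pos.2 hN) (by norm_num : (1/2:ℝ) < 1)
          have h2 : (0:ℝ) < 2 ^ s := by positivity
          refine ⟨⌊(q:ℝ) * 2 ^ s⌋₊ + 1, s, ?_, Or.inl ?_⟩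
          · rw [lt_div_iff₀ h2]; push_cast; exact Nat.lt_floor_add_one _
          · rw [div_lt_iff₀ h2]; push_cast
            have := Nat.floor_le (mul_nonneg h0 h2.le)
            rw [one_div, inv_pow, inv_lt_iff_one_lt_mul₀ h2] at hs
            nlinarith
      obtain ⟨A, s, h1, h2⟩ := this
      refine ⟨Nat.pair N (Nat.pair A s), fun b => ?_⟩
      simp only [Nat.unpair_pair]
      have : ∃ k, (A:ℝ) / 2 ^ s ≤ cnt N b k / 2 ^ k := by
        rcases h2 with h2 | h2
        · have h3 : (A:ℝ)/2^s < muR (T N b) := h2.trans_le (muR_mono (Set.iInter_subset _ b))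
          obtain ⟨k, hk⟩ := ((muR_tendsto_iUnion (hk N b)).eventually (lt_mem_nhds h3)).exists
          rw [hc] at hk
          exact ⟨k, hk.le⟩
        · exact ⟨0, by rw [h2]; simp⟩
      obtain ⟨k, hk⟩ := this
      refine ⟨k, isQ_encode q, ?_, (hle _ _ _ _).2 hk⟩
      rw [qlt_iff]; rw [lt_div_iff₀ (by positivity)] at h1; push_cast; linarith
    · rintro ⟨a, ha⟩
      obtain ⟨_, hQ, hl, _⟩ := ha 0
      obtain ⟨q, rfl⟩ := exists_of_isQ hQ
      refine ⟨q, rfl, ?_⟩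
      rw [qlt_iff] at hl
      have h3 : muR (V a.unpair.1) ≤ muR (class3 R) := by
        rw [hcl]; exact muR_mono (Set.subset_iUnion V _)
      have h4 : (a.unpair.2.unpair.1 : ℝ) / 2 ^ a.unpair.2.unpair.2 ≤ muR (V a.unpair.1) := by
        refine ge_of_tendsto' (muR_tendsto_iInter (hTm _) (hT a.unpair.1)) fun b => ?_
        obtain ⟨k, _, _, hk⟩ := ha b
        rw [hle, ← hc] at hk
        exact hk.trans (muR_mono (Set.subset_iUnion (fun k => {X | Q3 R a.unpair.1 b k (initSeg X k)}) k))
      refine lt_of_lt_of_le ?_ (h4.trans h3)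
      rw [lt_div_iff₀ (by positivity)]; push_cast at hl; linarith
  rw [e]; exact h2

end RandProb

open Nat.Partrec (Code)
namespace RandProb

/-! ### `COF` and `COM` are Sigma-3 classes -/

/-- bits to numbers -/
def bN (L : List Bool) : List ℕ := L.map fun b => if b = true then 1 else 0

@[fun_prop] theorem pr_bN {α} [Primcodable α] {f : α → List Bool} (hf : Primrec f) :
    Primrec fun a => bN (f a) := by
  unfold bN; fun_prop

theorem bN_initSeg (X : Cantor) (k : ℕ) : bN (initSeg X k) = pre (oX X) k := by
  simp only [bN, initSeg, pre, List.map_map]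
  refine List.map_congr_left fun i _ => ?_
  simp only [oX, Function.comp]
  cases X i <;> simp

theorem mem_domSet (c : CodeO) (X : Cantor) (n : ℕ) :
    n ∈ domSet c X ↔ ∃ k, hb c.encode (bN (initSeg X k)) n := by
  simp only [bN_initSeg]
  exact dom_iff_hb _ _ _

theorem hb_init_mono {e : ℕ} {X : Cantor} {i j n : ℕ} (hij : i ≤ j) (h : hb e (bN (initSeg X i)) n) :
    hb e (bN (initSeg X j)) n := by
  rw [bN_initSeg] at *; exact hb_mono hij h

def IsC3 (S : Set Cantor) : Prop := ∃ R, PR3 R ∧ S = class3 R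

theorem IsC3.meas {S : Set Cantor} (h : IsC3 S) : MeasurableSet S := by
  obtain ⟨R, _, rfl⟩ := h; exact measurableSet_class3 R

theorem IsC3.lce {S : Set Cantor} (h : IsC3 S) : LeftCeIn (iterJump 2) (muR S) := by
  obtain ⟨R, hR, rfl⟩ := h; exact leftCe_class3 hR

theorem IsC3.diff {S : Set Cantor} (h : IsC3 S) (σ : List Bool) :
    IsC3 (S \ {X | Extends X σ}) := by
  obtain ⟨R, hR, rfl⟩ := h
  refine ⟨fun a b L => ¬ (L.take σ.length = σ) ∧ σ.length ≤ L.length ∧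
    ∃ j < L.length + 1, R a b (L.take j), ?_, ?_⟩
  · refine PrimrecPred.and (by fun_prop) (PrimrecPred.and (by fun_prop) (pp_ex (by fun_prop) ?_))
    exact hR.comp (f := fun p : (ℕ × ℕ × List Bool) × ℕ => (p.1.1, p.1.2.1, p.1.2.2.take p.2))
      (by fun_prop)
  · ext X
    simp only [class3, Set.mem_sdiff, Set.mem_ofPred_eq, initSeg_length, initSeg_take, Extends]
    constructor
    · rintro ⟨⟨a, h⟩, h2⟩
      refine ⟨a, fun b => ?_⟩
      obtain ⟨k, hk⟩ := h b
      refine ⟨max k σ.length, ?_, le_max_right _ _, k, by omega, ?_⟩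
      · rwa [min_eq_left (le_max_right _ _)]
      · rwa [min_eq_left (le_max_left _ _)]
    · rintro ⟨a, h⟩
      refine ⟨⟨a, fun b => ?_⟩, ?_⟩
      · obtain ⟨k, _, _, j, _, hj⟩ := h b
        exact ⟨_, hj⟩
      · obtain ⟨k, h1, h2, _⟩ := h 0
        rwa [min_eq_left h2] at h1

theorem cof_c3 (c : CodeO) : IsC3 (COF c) := by
  refine ⟨fun a b L => b < a ∨ hb c.encode (bN L) b, ?_, ?_⟩
  · unfold PR3; fun_prop
  · ext X
    simp only [COF, class3, Set.mem_ofPred_eq]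
    constructor
    · intro h
      obtain ⟨N, hN⟩ := h.bddAbove
      refine ⟨N + 1, fun b => ?_⟩
      by_cases hb' : b ∈ domSet c X
      · obtain ⟨k, hk⟩ := (mem_domSet c X b).1 hb'
        exact ⟨k, Or.inr hk⟩
      · exact ⟨0, Or.inl (Nat.lt_succ_of_le (hN hb'))⟩
    · rintro ⟨N, h⟩
      refine (Set.finite_lt_nat N).subset fun b hb' => ?_
      by_contra hN
      obtain ⟨k, hk⟩ := h b
      rcases hk with hk | hk
      · exact hN hk
      · exact hb' ((mem_domSet c X b).2 ⟨k, hk⟩)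

theorem com_iff (P : ℕ → Prop) : ComputablePred P ↔
    ∃ e : Code, ∀ n, e.eval n = Part.some (if P n then 1 else 0) := by
  constructor
  · rintro ⟨hd, h⟩
    have : Computable fun n => if P n then 1 else 0 := by
      refine (Computable.cond h (Computable.const 1) (Computable.const 0)).of_eq fun n => ?_
      by_cases hP : P n <;> simp [hP]
    obtain ⟨e, he⟩ := Code.exists_code.1 (Partrec.nat_iff.1 this)
    exact ⟨e, fun n => by rw [he, PFun.coe_val]; congr⟩
  · rintro ⟨e, he⟩
    have h1 : Computable fun n => if P n then 1 else 0 :=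
      Partrec.nat_iff.2 (Code.exists_code.2 ⟨e, funext he⟩)
    refine ⟨fun n => Classical.propDecidable _, ?_⟩
    refine ((Primrec.beq (α := ℕ)).to_comp.comp h1 (Computable.const 1)).of_eq fun n => ?_
    by_cases hP : P n <;> simp [hP]

theorem com_c3 (c : CodeO) : IsC3 (COM c) := by
  refine ⟨fun a b L => b.unpair.2 ≤ L.length ∧
    ((Code.evaln L.length (Denumerable.ofNat Code a) b.unpair.1 = some 1 ∧
      hb c.encode (bN L) b.unpair.1) ∨
    (Code.evaln L.length (Denumerable.ofNat Code a) b.unpair.1 = some 0 ∧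
      ¬ hb c.encode (bN (L.take b.unpair.2)) b.unpair.1)), ?_, ?_⟩
  · unfold PR3
    have : Primrec (Denumerable.ofNat Code) := Primrec.ofNat Code
    have h2 : Primrec fun x : ℕ × ℕ × List Bool => Denumerable.ofNat Code x.1 := this.comp Primrec.fst
    fun_prop
  · ext X
    simp only [COM, class3, Set.mem_ofPred_eq, com_iff, initSeg_length, initSeg_take]
    constructor
    · rintro ⟨e, he⟩
      refine ⟨Encodable.encode e, fun b => ?_⟩
      rw [Denumerable.ofNat_encode]
      generalize b.unpair.1 = n
      generalize b.unpair.2 = m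
      have h1 : (if n ∈ domSet c X then 1 else 0) ∈ e.eval n := by rw [he]; exact Part.mem_some _
      obtain ⟨k, hk⟩ := Code.evaln_complete.1 h1
      by_cases hn : n ∈ domSet c X
      · obtain ⟨k', hk'⟩ := (mem_domSet c X n).1 hn
        refine ⟨max (max k k') m, le_max_right _ _, Or.inl ⟨?_, ?_⟩⟩
        · rw [if_pos hn] at hk
          exact Code.evaln_mono (by omega) hk
        · exact hb_init_mono (by omega) hk'
      · rw [if_neg hn] at hk
        have h2 : Code.evaln (max k m) e n = some 0 := Code.evaln_mono (by omega) hk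
        refine ⟨max k m, le_max_right _ _, Or.inr ⟨h2, ?_⟩⟩
        intro h; exact hn ((mem_domSet c X n).2 ⟨_, h⟩)
    · rintro ⟨a, h⟩
      refine ⟨Denumerable.ofNat Code a, fun n => ?_⟩
      generalize Denumerable.ofNat Code a = e at *
      by_cases hn : n ∈ domSet c X
      · obtain ⟨m, hm⟩ := (mem_domSet c X n).1 hn
        obtain ⟨k, h1, h2⟩ := h (Nat.pair n m)
        simp only [Nat.unpair_pair] at h1 h2
        rw [min_eq_left h1] at h2
        rcases h2 with h2 | h2
        · rw [if_pos hn]; exact Part.eq_some_iff.2 (Code.evaln_sound h2.1)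
        · exact absurd hm h2.2
      · obtain ⟨k, h1, h2⟩ := h (Nat.pair n 0)
        simp only [Nat.unpair_pair] at h1 h2
        rcases h2 with h2 | h2
        · exact absurd ((mem_domSet c X n).2 ⟨_, h2.2⟩) hn
        · rw [if_neg hn]; exact Part.eq_some_iff.2 (Code.evaln_sound h2.1)

end RandProb

open Nat.Partrec (Code)
namespace RandProb

/-! ### Machines realizing Sigma-3 classes -/

theorem mu_fix_le (N : ℕ) : ∀ (E : Set ℕ) (W : Cantor),
    mu {Z | ∀ n < N, n ∈ E → Z n = W n} ≤ ENNReal.ofReal ((1/2:ℝ) ^ Nat.count (· ∈ E) N) := by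
  induction N with
  | zero => intro E W; simp
  | succ N ih =>
    intro E W
    set S : Set Cantor := {Z | ∀ n < N + 1, n ∈ E → Z n = W n} with hS
    have hm : MeasurableSet S := by
      have : S = ⋂ n, ⋂ (_ : n < N + 1), ⋂ (_ : n ∈ E), {Z : Cantor | Z n = W n} := by
        ext Z; simp [S]
      rw [this]
      exact MeasurableSet.iInter fun n => MeasurableSet.iInter fun _ => MeasurableSet.iInter fun _ =>
        measurableSet_bit _ _
    have hsub : ∀ b, consB b ⁻¹' S ⊆ {Z | ∀ n < N, n ∈ {k | k + 1 ∈ E} → Z n = (fun k => W (k+1)) n} := by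
      intro b Z hZ n hn hE
      have := hZ (n+1) (by omega) hE
      simpa [consB] using this
    have hb : ∀ b, mu (S ∩ {X | X 0 = b}) ≤ ENNReal.ofReal (1/2) *
        ENNReal.ofReal ((1/2:ℝ) ^ Nat.count (fun k => k + 1 ∈ E) N) := by
      intro b
      rw [mu_consB hm]
      gcongr
      exact (measure_mono (hsub b)).trans (ih {k | k + 1 ∈ E} fun k => W (k+1))
    rw [Nat.count_succ']
    by_cases h0 : 0 ∈ E
    · have : S ⊆ S ∩ {X | X 0 = W 0} := fun Z hZ => ⟨hZ, hZ 0 (by omega) h0⟩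
      rw [if_pos h0, ofReal_half_pow]
      exact (measure_mono this).trans (hb _)
    · have : S ⊆ (S ∩ {X | X 0 = true}) ∪ (S ∩ {X | X 0 = false}) := fun Z hZ => by
        cases h : Z 0
        · exact Or.inr ⟨hZ, h⟩
        · exact Or.inl ⟨hZ, h⟩
      rw [if_neg h0, add_zero]
      refine (measure_mono this).trans ((measure_union_le _ _).trans ((add_le_add (hb _) (hb _)).trans ?_))
      rw [← add_mul, ← ENNReal.ofReal_add (by norm_num) (by norm_num)]
      norm_num

theorem mu_fix_zero {E : Set ℕ} (hE : E.Infinite) (W : Cantor) : mu {Z | ∀ n ∈ E, Z n = W n} = 0 := by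
  have h : ∀ m : ℕ, mu {Z | ∀ n ∈ E, Z n = W n} ≤ ENNReal.ofReal ((1/2:ℝ)^m) := by
    intro m
    have := mu_fix_le (Nat.nth (· ∈ E) m) E W
    rw [Nat.count_nth_of_infinite (p := (· ∈ E)) hE] at this
    refine le_trans (measure_mono ?_) this
    exact fun Z (hZ : ∀ n ∈ E, Z n = W n) n _ hn => hZ n hn
  have ht : Filter.Tendsto (fun m : ℕ => ENNReal.ofReal ((1/2:ℝ)^m)) Filter.atTop (nhds 0) := by
    have := ENNReal.tendsto_ofReal (tendsto_pow_atTop_nhds_zero_of_lt_one (r := (1/2:ℝ)) (by norm_num) (by norm_num))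
    simpa using this
  exact le_antisymm (ge_of_tendsto' ht h) bot_le

theorem machine_of {P : List Bool → ℕ → Prop} (hP : PrimrecPred fun p : List Bool × ℕ => P p.1 p.2) :
    ∃ c : CodeO, ∀ X n, n ∈ domSet c X ↔ ∃ k, P (initSeg X k) n := by
  have hg : Primrec fun p : List ℕ × ℕ =>
      if P (p.1.map fun i => decide (i = 1)) p.2 then some 0 else (none : Option ℕ) := by
    refine pr_ite (hP.comp (f := fun p : List ℕ × ℕ => (p.1.map fun i => decide (i = 1), p.2))
      (by fun_prop)) (by fun_prop) (by fun_prop)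
  obtain ⟨c, hc⟩ := gen (g := fun L n => if P (L.map fun i => decide (i = 1)) n then some 0 else none) hg
  refine ⟨c, fun X n => ?_⟩
  have : ∀ k, (pre (oX X) k).map (fun i => decide (i = 1)) = initSeg X k := by
    intro k
    simp only [pre, initSeg, List.map_map]
    refine List.map_congr_left fun i _ => ?_
    simp only [oX, Function.comp]
    rcases Bool.eq_false_or_eq_true (X i) with h | h <;> simp [h]
  simp only [domSet, evalO, Set.mem_ofPred_eq]
  rw [hc, Nat.rfindOpt_dom]
  simp only [this, Option.mem_def, Option.ite_none_right_eq_some]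
  constructor
  · rintro ⟨k, a, h, _⟩; exact ⟨k, h⟩
  · rintro ⟨k, h⟩; exact ⟨k, 0, h, rfl⟩

def C9 (R : ℕ → ℕ → List Bool → Prop) (τ : List Bool) (a b k : ℕ) : Prop :=
  ∀ b' < b + 1, ∃ k' < k + 1, R a b' (τ.take k')

def G9 (R : ℕ → ℕ → List Bool → Prop) (τ : List Bool) (a b k : ℕ) : Prop :=
  C9 R τ a b k ∧ ∀ j < k, ¬ C9 R τ a b j

noncomputable def hh (R : ℕ → ℕ → List Bool → Prop) (τ : List Bool) (s : ℕ) : ℕ :=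
  if G9 R τ s.unpair.1 s.unpair.2.unpair.1 s.unpair.2.unpair.2 then s.unpair.1 else s

def evL (L : List Bool) : List Bool := (List.range (L.length / 2)).map fun i => (L[2 * i]?).getD false

def P9 (R : ℕ → ℕ → List Bool → Prop) (L : List Bool) (n : ℕ) : Prop :=
  L[2 * n + 1]? = some true ∨ ∃ t < L.length / 2, n < t ∧ hh R (evL L) t ≤ hh R (evL L) n

theorem pp_P9 {R : ℕ → ℕ → List Bool → Prop} (hR : PR3 R) :
    PrimrecPred fun p : List Bool × ℕ => P9 R p.1 p.2 := by
  have hC : PrimrecPred fun x : List Bool × ℕ × ℕ × ℕ => C9 R x.1 x.2.1 x.2.2.1 x.2.2.2 := by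
    unfold C9
    refine pp_all (by fun_prop) (pp_ex (by fun_prop) ?_)
    exact hR.comp (f := fun p : ((List Bool × ℕ × ℕ × ℕ) × ℕ) × ℕ =>
        (p.1.1.2.1, p.1.2, p.1.1.1.take p.2)) (by fun_prop)
  have hG : PrimrecPred fun x : List Bool × ℕ × ℕ × ℕ => G9 R x.1 x.2.1 x.2.2.1 x.2.2.2 := by
    unfold G9
    refine hC.and (pp_all (by fun_prop) (PrimrecPred.not ?_))
    exact hC.comp (f := fun p : (List Bool × ℕ × ℕ × ℕ) × ℕ => (p.1.1, p.1.2.1, p.1.2.2.1, p.2))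
      (by fun_prop)
  have hh' : Primrec fun x : List Bool × ℕ => hh R x.1 x.2 := by
    unfold hh
    refine pr_ite ?_ (by fun_prop) (by fun_prop)
    exact hG.comp (f := fun x : List Bool × ℕ => (x.1, x.2.unpair.1, x.2.unpair.2.unpair.1,
      x.2.unpair.2.unpair.2)) (by fun_prop)
  have hev : Primrec evL := by unfold evL; fun_prop
  unfold P9
  refine PrimrecPred.or (by fun_prop) (pp_ex (by fun_prop) (PrimrecPred.and (by fun_prop)
    (pp_le ?_ ?_)))
  · exact hh'.comp (f := _) (g := fun p : (List Bool × ℕ) × ℕ => (evL p.1.1, p.2)) (by fun_prop)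
  · exact hh'.comp (f := _) (g := fun p : (List Bool × ℕ) × ℕ => (evL p.1.1, p.1.2)) (by fun_prop)

/-- even part -/
def evB (X : Cantor) : Cantor := fun n => X (2 * n)

theorem evL_initSeg (X : Cantor) (k : ℕ) : evL (initSeg X k) = initSeg (evB X) (k / 2) := by
  unfold evL
  rw [initSeg_length]
  unfold initSeg
  refine List.map_congr_left fun i hi => ?_
  rw [List.mem_range] at hi
  have : 2 * i < k := by omega
  simp [this, evB]

def CC (R : ℕ → ℕ → List Bool → Prop) (Y : Cantor) (a b k : ℕ) : Prop :=
  ∀ b' < b + 1, ∃ k' < k + 1, R a b' (initSeg Y k')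

def GG (R : ℕ → ℕ → List Bool → Prop) (Y : Cantor) (a b k : ℕ) : Prop :=
  CC R Y a b k ∧ ∀ j < k, ¬ CC R Y a b j

noncomputable def hY (R : ℕ → ℕ → List Bool → Prop) (Y : Cantor) (s : ℕ) : ℕ :=
  if GG R Y s.unpair.1 s.unpair.2.unpair.1 s.unpair.2.unpair.2 then s.unpair.1 else s

theorem C9_iff (R : ℕ → ℕ → List Bool → Prop) (Y : Cantor) {l a b k : ℕ} (hk : k ≤ l) :
    C9 R (initSeg Y l) a b k ↔ CC R Y a b k := by
  unfold C9 CC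
  refine forall₂_congr fun b' _ => exists_congr fun k' => and_congr_right fun hk' => ?_
  rw [initSeg_take, min_eq_left (by omega)]

theorem hh_eq (R : ℕ → ℕ → List Bool → Prop) (Y : Cantor) {l s : ℕ} (hs : s < l) :
    hh R (initSeg Y l) s = hY R Y s := by
  have h1 : s.unpair.2.unpair.2 ≤ l :=
    (Nat.unpair_right_le _).trans ((Nat.unpair_right_le _).trans hs.le)
  have : G9 R (initSeg Y l) s.unpair.1 s.unpair.2.unpair.1 s.unpair.2.unpair.2 ↔
      GG R Y s.unpair.1 s.unpair.2.unpair.1 s.unpair.2.unpair.2 := by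
    unfold G9 GG
    rw [C9_iff R Y h1]
    refine and_congr_right fun _ => forall₂_congr fun j hj => ?_
    rw [C9_iff R Y (by omega)]
  unfold hh hY
  simp only [this]

def D9 (R : ℕ → ℕ → List Bool → Prop) (Y : Cantor) : Set ℕ := {s | ∃ t, s < t ∧ hY R Y t ≤ hY R Y s}

theorem P9_iff (R : ℕ → ℕ → List Bool → Prop) (X : Cantor) (n : ℕ) :
    (∃ k, P9 R (initSeg X k) n) ↔ X (2 * n + 1) = true ∨ n ∈ D9 R (evB X) := by
  unfold P9
  simp only [evL_initSeg, initSeg_length]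
  constructor
  · rintro ⟨k, h | ⟨t, ht, hnt, h⟩⟩
    · left
      have : 2 * n + 1 < k := by
        have := (List.getElem?_eq_some_iff.1 h).1
        simpa using this
      simpa [initSeg, this] using h
    · right
      rw [hh_eq R _ ht, hh_eq R _ (by omega)] at h
      exact ⟨t, hnt, h⟩
  · rintro (h | ⟨t, hnt, h⟩)
    · exact ⟨2 * n + 2, Or.inl (by simp [initSeg, h])⟩
    · refine ⟨2 * t + 2, Or.inr ⟨t, by omega, hnt, ?_⟩⟩
      rwa [hh_eq R _ (by omega), hh_eq R _ (by omega)]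

theorem D9_cofinite {R : ℕ → ℕ → List Bool → Prop} {Y : Cantor} (h : Y ∈ class3 R) :
    (D9 R Y)ᶜ.Finite := by
  obtain ⟨a, ha⟩ := h
  have hC : ∀ b, ∃ k, GG R Y a b k := by
    intro b
    have : ∃ k, CC R Y a b k := by
      choose f hf using ha
      refine ⟨(Finset.range (b+1)).sup f, fun b' hb => ⟨f b', ?_, hf b'⟩⟩
      exact Nat.lt_succ_of_le (Finset.le_sup (f := f) (Finset.mem_range.2 hb))
    exact ⟨Nat.find this, Nat.find_spec this, fun j hj => Nat.find_min this hj⟩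
  choose k hk using hC
  have hv : ∀ b, hY R Y (Nat.pair a (Nat.pair b (k b))) = a := by
    intro b
    unfold hY
    simp only [Nat.unpair_pair]
    rw [if_pos (hk b)]
  have hlt : ∀ s ∈ (D9 R Y)ᶜ, ∀ t, s < t → hY R Y s < hY R Y t := by
    intro s hs t ht
    by_contra hc
    exact hs ⟨t, ht, not_lt.1 hc⟩
  refine Set.Finite.of_finite_image (f := hY R Y) ((Set.finite_lt_nat a).subset ?_) ?_
  · rintro _ ⟨s, hs, rfl⟩
    have := hlt s hs (Nat.pair a (Nat.pair (s+1) (k (s+1)))) (by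
      have h1 := Nat.right_le_pair a (Nat.pair (s+1) (k (s+1)))
      have h2 := Nat.left_le_pair (s+1) (k (s+1))
      omega)
    rwa [hv] at this
  · intro s hs t ht hst
    by_contra hne
    rcases lt_or_gt_of_ne hne with h | h
    · exact absurd hst (hlt s hs t h).ne
    · exact absurd hst (hlt t ht s h).ne'

theorem D9_coinfinite {R : ℕ → ℕ → List Bool → Prop} {Y : Cantor} (h : Y ∉ class3 R) :
    (D9 R Y)ᶜ.Infinite := by
  have hfin : ∀ v, {s | hY R Y s = v}.Finite := by
    intro v
    by_contra hinf
    have hinf : {s | hY R Y s = v}.Infinite := hinf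
    apply h
    refine ⟨v, fun b => ?_⟩
    by_contra hc
    apply hinf
    -- only finitely many b' < b
    have hsub : {s | hY R Y s = v} ⊆ insert v (⋃ b' ∈ Finset.range b,
        {s | ∃ k, s = Nat.pair v (Nat.pair b' k) ∧ GG R Y v b' k}) := by
      intro s hs
      have hs : hY R Y s = v := hs
      unfold hY at hs
      split_ifs at hs with hG
      · right
        rw [hs] at hG
        simp only [Set.mem_iUnion, Finset.mem_range]
        refine ⟨s.unpair.2.unpair.1, ?_, s.unpair.2.unpair.2, ?_, hG⟩
        · by_contra hb
          obtain ⟨k', _, hk'⟩ := hG.1 b (by omega)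
          exact hc ⟨k', hk'⟩
        · rw [Nat.pair_unpair, ← hs, Nat.pair_unpair]
      · left; exact hs
    refine Set.Finite.subset (Set.Finite.insert _ (Set.Finite.biUnion (Finset.finite_toSet _)
      fun b' _ => Set.Subsingleton.finite ?_)) hsub
    rintro _ ⟨k, rfl, hk⟩ _ ⟨k', rfl, hk'⟩
    have : k = k' := by
      by_contra hne
      rcases lt_or_gt_of_ne hne with h | h
      · exact hk'.2 k h hk.1
      · exact hk.2 k' h hk'.1
    rw [this]
  rw [Set.infinite_iff_exists_gt]
  intro N
  have hex : ∃ m, ∃ s, N < s ∧ hY R Y s = m := ⟨_, N + 1, by omega, rfl⟩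
  obtain ⟨s0, hs0, hm⟩ := Nat.find_spec hex
  have hmin : ∀ s, N < s → Nat.find hex ≤ hY R Y s := fun s hs => Nat.find_min' hex ⟨s, hs, rfl⟩
  obtain ⟨s, hs, hmax⟩ := Set.Finite.exists_maximalFor id _ (hfin (Nat.find hex)) ⟨s0, hm⟩
  have h0 : s0 ≤ s := by
    rcases le_total s0 s with h | h
    · exact h
    · exact hmax hm h
  refine ⟨s, ?_, by omega⟩
  rintro ⟨t, ht, hle⟩
  have h1 : hY R Y t = Nat.find hex := le_antisymm (hle.trans_eq hs) (hmin t (by omega))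
  have : t ≤ s := hmax h1 ht.le
  omega

theorem finite_comp {S : Set ℕ} (h : Sᶜ.Finite) : ComputablePred fun n => n ∈ S := by
  have h1 : PrimrecPred fun n : ℕ => ¬ ∃ x ∈ h.toFinset.toList, x = n :=
    PrimrecPred.not (PrimrecPred.of_eq (PrimrecRel.comp (PrimrecRel.exists_mem_list (R := fun (x n : ℕ) => x = n)
      Primrec.eq) (Primrec.const h.toFinset.toList) Primrec.id) fun n => by simp)
  obtain ⟨hd, h2⟩ := h1
  refine ComputablePred.of_eq ⟨hd, h2.to_comp⟩ fun n => by simp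

theorem exists_machine {S : Set Cantor} (hS : IsC3 S) :
    ∃ c : CodeO, muR (COF c) = muR S ∧ muR (COM c) = muR S := by
  have hSm := hS.meas
  obtain ⟨R, hR, hSR⟩ := hS
  obtain ⟨c, hc⟩ := machine_of (pp_P9 hR)
  have hdom : ∀ Y Z, domSet c (inter (Y, Z)) = {n | Z n = true} ∪ D9 R Y := by
    intro Y Z
    ext n
    rw [hc, P9_iff]
    have h1 : inter (Y, Z) (2 * n + 1) = Z n := by
      unfold inter
      rw [if_neg (by omega)]
      show Z ((2 * n + 1) / 2) = Z n
      congr 1; omega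
    have h2 : evB (inter (Y, Z)) = Y := by
      funext i; unfold evB inter
      rw [if_pos (by omega)]
      show Y (2 * i / 2) = Y i
      congr 1; omega
    rw [h1, h2]; rfl
  have hsub : ∀ X, X ∈ COF c → X ∈ COM c := fun X h => finite_comp h
  have hin : ∀ Y Z, Y ∈ S → inter (Y, Z) ∈ COF c := by
    intro Y Z hY
    rw [hSR] at hY
    show (domSet c (inter (Y, Z)))ᶜ.Finite
    rw [hdom]
    exact (D9_cofinite hY).subset (Set.compl_subset_compl.2 Set.subset_union_right)
  have hout : ∀ Y, Y ∉ S → mu {Z | inter (Y, Z) ∈ COM c} = 0 := by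
    intro Y hY
    rw [hSR] at hY
    have hi := D9_coinfinite hY
    have : {Z | inter (Y, Z) ∈ COM c} ⊆ ⋃ e : Code, {Z | ∀ n ∈ (D9 R Y)ᶜ,
        Z n = (fun n => decide (e.eval n = Part.some 1)) n} := by
      intro Z hZ
      obtain ⟨e, he⟩ := (com_iff _).1 hZ
      refine Set.mem_iUnion.2 ⟨e, fun n hn => ?_⟩
      simp only [he, hdom]
      have : n ∉ D9 R Y := hn
      rcases Bool.eq_false_or_eq_true (Z n) with h | h <;> simp [h, this]
    exact measure_mono_null this (measure_iUnion_null fun e => mu_fix_zero hi _)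
  have key : ∀ T : Set Cantor, MeasurableSet T → (∀ Y Z, Y ∈ S → inter (Y, Z) ∈ T) →
      (∀ X ∈ T, X ∈ COM c) → muR T = muR S := by
    intro T hT h1 h2
    unfold muR
    congr 1
    rw [← map_inter, Measure.map_apply measurable_inter hT,
      Measure.prod_apply (measurable_inter hT), map_inter, ← lintegral_indicator_one hSm]
    refine lintegral_congr fun Y => ?_
    by_cases hY : Y ∈ S
    · have : Prod.mk Y ⁻¹' (inter ⁻¹' T) = Set.univ := Set.eq_univ_of_forall fun Z => h1 Y Z hY
      rw [this]; simp [hY]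
    · have : mu (Prod.mk Y ⁻¹' (inter ⁻¹' T)) = 0 :=
        measure_mono_null (fun Z hZ => h2 (inter (Y, Z)) hZ) (hout Y hY)
      rw [this]; simp [hY]
  exact ⟨c, key _ (cof_c3 c).meas hin hsub, key _ (com_c3 c).meas (fun Y Z h => hsub _ (hin Y Z h))
    fun _ h => h⟩

end RandProb

namespace RandProb

/-! ### Left-c.e. reals are measures of Sigma-3 classes -/

theorem initSeg_eq_vv (X Y : Cantor) (n : ℕ) : initSeg X n = initSeg Y n ↔ vv X n = vv Y n := by
  rw [vv_inj, initSeg_eq_iff X n _ (initSeg_length _ _)]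
  refine forall₂_congr fun i hi => ?_
  simp [initSeg, hi]

theorem strOf_eq (X : Cantor) {b j : ℕ} (hj : j < 2 ^ b) : strOf b j = initSeg X b ↔ j = vv X b := by
  obtain ⟨Y, hY⟩ : ∃ Y, vv Y b = j := by
    refine ⟨digits (j / 2 ^ b), ?_⟩
    have h := vv_digits (x := j / 2 ^ b) ⟨by positivity, by
      rw [div_lt_one (by positivity)]; exact_mod_cast hj⟩ b
    rw [div_mul_cancel₀ _ (by positivity), Int.floor_natCast] at h
    exact_mod_cast h
  rw [← hY, strOf_vv, initSeg_eq_vv]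

theorem exists_machine_lce {γ : ℝ} (h0 : 0 ≤ γ) (h1 : γ ≤ 1) (h : LeftCeIn (iterJump 2) γ) :
    ∃ c : CodeO, muR (COF c) = γ ∧ muR (COM c) = γ := by
  obtain ⟨R, hR, hRS⟩ := ce_two_form h
  let R' : ℕ → ℕ → List Bool → Prop := fun a b L => b ≤ L.length ∧
    (∃ k < L.length + 1, R a.unpair.1 a.unpair.2 b k) ∧
    ∃ j < 2 ^ b, strOf b j = L.take b ∧ ¬ qlt a.unpair.1 j 0 (2 ^ b)
  have hR' : PR3 R' := by
    refine PrimrecPred.and (by fun_prop) (PrimrecPred.and (pp_ex (by fun_prop) ?_) (pp_ex (by fun_prop) (by fun_prop)))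
    exact hR.comp (f := fun p : (ℕ × ℕ × List Bool) × ℕ => (p.1.1.unpair.1, p.1.1.unpair.2, p.1.2.1, p.2))
      (by fun_prop)
  have hcl : ∀ X, X ∈ class3 R' ↔ ∃ q : ℚ, (q:ℝ) < γ ∧ ∀ b, (vv X b : ℝ) ≤ q * 2 ^ b := by
    intro X
    simp only [class3, R', Set.mem_ofPred_eq, initSeg_length, initSeg_take]
    constructor
    · rintro ⟨a, ha⟩
      have hm : a.unpair.1 ∈ {m | ∃ q : ℚ, Encodable.encode q = m ∧ (q : ℝ) < γ} := by
        rw [hRS]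
        refine ⟨a.unpair.2, fun b => ?_⟩
        obtain ⟨_, _, ⟨k, _, hk⟩, _⟩ := ha b
        exact ⟨k, hk⟩
      obtain ⟨q, hq, hqγ⟩ := hm
      refine ⟨q, hqγ, fun b => ?_⟩
      obtain ⟨k, hk, _, j, hj, h1, h2⟩ := ha b
      rw [min_eq_left hk, strOf_eq X hj] at h1
      rw [← hq, qlt_iff] at h2
      rw [← h1]; push_cast at h2; linarith
    · rintro ⟨q, hq, hb⟩
      obtain ⟨a0, ha0⟩ := (hRS (Encodable.encode q)).1 ⟨q, rfl, hq⟩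
      refine ⟨Nat.pair (Encodable.encode q) a0, fun b => ?_⟩
      simp only [Nat.unpair_pair]
      obtain ⟨k, hk⟩ := ha0 b
      refine ⟨max k b, le_max_right _ _, ⟨k, by omega, hk⟩, vv X b, vv_lt X b, ?_, ?_⟩
      · rw [min_eq_left (le_max_right _ _), strOf_vv]
      · rw [qlt_iff]; have := hb b; push_cast; linarith
  have hmu : muR (class3 R') = γ := by
    rw [muR, mu_apply (measurableSet_class3 R')]
    have : {x | x ∈ Set.Ico (0:ℝ) 1 ∧ digits x ∈ class3 R'} = Set.Ico 0 γ := by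
      ext x
      simp only [Set.mem_ofPred_eq, hcl]
      constructor
      · rintro ⟨hx, q, hq, hb⟩
        refine ⟨hx.1, lt_of_le_of_lt ?_ hq⟩
        by_contra hc
        push Not at hc
        obtain ⟨s, hs⟩ := exists_pow_lt_of_lt_one (sub_pos.2 hc) (by norm_num : (1/2:ℝ) < 1)
        have h2 : (0:ℝ) < 2 ^ s := by positivity
        have h3 := hb s
        have h4 := vv_digits hx s
        have h5 : ((vv (digits x) s : ℤ) : ℝ) = ((⌊x * 2^s⌋ : ℤ) : ℝ) := by rw [h4]
        have h6 := Int.lt_floor_add_one (x * 2 ^ s)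
        rw [← h5] at h6
        push_cast at h6
        rw [one_div, inv_pow, inv_lt_iff_one_lt_mul₀ h2] at hs
        nlinarith
      · rintro ⟨hx0, hx1⟩
        have hx : x ∈ Set.Ico (0:ℝ) 1 := ⟨hx0, by linarith⟩
        obtain ⟨q, hq1, hq2⟩ := exists_rat_btwn hx1
        refine ⟨hx, q, hq2, fun b => ?_⟩
        have h4 := vv_digits hx b
        have h5 : ((vv (digits x) b : ℤ) : ℝ) = ((⌊x * 2^b⌋ : ℤ) : ℝ) := by rw [h4]
        have h6 := Int.floor_le (x * 2 ^ b)
        rw [← h5] at h6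
        push_cast at h6
        have : (0:ℝ) < 2 ^ b := by positivity
        nlinarith
    rw [this, Real.volume_Ico, sub_zero, ENNReal.toReal_ofReal h0]
  obtain ⟨c, hc1, hc2⟩ := exists_machine ⟨R', hR', rfl⟩
  exact ⟨c, hc1.trans hmu, hc2.trans hmu⟩

end RandProb

namespace RandProb

/-! ### Existence of a left-c.e. random real -/

/-- dyadic cell -/
def cell (m j : ℕ) : Set ℝ := Set.Ico ((j:ℝ) / 2 ^ m) (((j:ℝ) + 1) / 2 ^ m)

theorem mem_cell {m j : ℕ} {x : ℝ} (hx : 0 ≤ x) : x ∈ cell m j ↔ ⌊x * 2 ^ m⌋₊ = j := by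
  have h2 : (0:ℝ) < 2 ^ m := by positivity
  rw [cell, Set.mem_Ico, div_le_iff₀ h2, lt_div_iff₀ h2, Nat.floor_eq_iff (by positivity)]

theorem cell_nonneg {m j : ℕ} {x : ℝ} (h : x ∈ cell m j) : 0 ≤ x :=
  le_trans (by positivity) h.1

theorem volume_cells (m : ℕ) (F : Finset ℕ) :
    volume (⋃ j ∈ F, cell m j) = ENNReal.ofReal (F.card / 2 ^ m) := by
  rw [measure_biUnion_finset]
  · have : ∀ j, volume (cell m j) = ENNReal.ofReal (1 / 2 ^ m) := by
      intro j; rw [cell, Real.volume_Ico]; congr 1; ring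
    simp only [this, Finset.sum_const, nsmul_eq_mul]
    rw [← ENNReal.ofReal_natCast, ← ENNReal.ofReal_mul (by positivity)]
    congr 1; ring
  · intro i _ j _ hij
    refine Set.disjoint_left.2 fun x h1 h2 => hij ?_
    have h0 := cell_nonneg h1
    rw [← (mem_cell h0).1 h1, ← (mem_cell h0).1 h2]
  · intro j _; exact measurableSet_Ico

section cov
variable (U : ℕ → ℕ → ℕ → Prop)

def good (e m : ℕ) : Prop := bcount (U e m) (2 ^ m) * 2 ^ (e + 2) ≤ 2 ^ m

def cov (n j : ℕ) : Prop := 4 * (j + 1) ≤ 2 ^ n ∨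
  ∃ e < n + 1, ∃ m < n + 1, good U e m ∧ U e m (j / 2 ^ (n - m))

noncomputable def ell (n : ℕ) : ℕ := bcount (fun j => ∀ i < j + 1, cov U n i) (2 ^ n)

variable {U}

theorem lt_ell {n j : ℕ} : j < ell U n ↔ j < 2 ^ n ∧ ∀ i < j + 1, cov U n i :=
  (bcount_lt_iff fun i j hij h k hk => h k (by omega)).symm

theorem cov_succ {n j : ℕ} (h : cov U n (j / 2)) : cov U (n + 1) j := by
  rcases h with h | ⟨e, he, m, hm, hg, hU⟩
  · left; rw [pow_succ]; omega
  · right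
    refine ⟨e, by omega, m, by omega, hg, ?_⟩
    have : n + 1 - m = (n - m) + 1 := by omega
    rw [this, pow_succ, mul_comm, ← Nat.div_div_eq_div_mul]
    exact hU

theorem ell_succ (n : ℕ) : 2 * ell U n ≤ ell U (n + 1) := by
  by_contra hc
  push Not at hc
  have h0 : ell U (n+1) / 2 < ell U n := by omega
  have h1 := lt_ell.1 h0
  have : ell U (n+1) < ell U (n+1) := by
    refine lt_ell.2 ⟨by rw [pow_succ]; omega, fun i hi => cov_succ (h1.2 _ (by omega))⟩
  omega

theorem ell_four (n : ℕ) : 2 ^ n ≤ ell U (n + 2) := by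
  by_contra hc
  push Not at hc
  have : ell U (n+2) < ell U (n+2) := by
    refine lt_ell.2 ⟨?_, fun i hi => Or.inl ?_⟩ <;> rw [pow_add] <;> omega
  omega

theorem ell_not_cov {n : ℕ} (h : ell U n < 2 ^ n) : ¬ cov U n (ell U n) := by
  intro hc
  have : ell U n < ell U n := by
    refine lt_ell.2 ⟨h, fun i hi => ?_⟩
    rcases Nat.lt_succ_iff_lt_or_eq.1 hi with hi | rfl
    · exact (lt_ell.1 hi).2 i (by omega)
    · exact hc
  omega

theorem ell_le (hU : ∀ e m j, U e m (j / 2) → U e (m + 1) j) (n : ℕ) :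
    (ell U n : ℝ) / 2 ^ n ≤ 3 / 4 := by
  let B : ℕ → ℕ → Set ℝ := fun e m => {x | x ∈ Set.Ico (0:ℝ) 1 ∧ U e m ⌊x * 2 ^ m⌋₊}
  have hBmono : ∀ e, Monotone (B e) := by
    intro e
    refine monotone_nat_of_le_succ fun m x ⟨hx, h⟩ => ⟨hx, hU _ _ _ ?_⟩
    have : ⌊x * 2 ^ (m+1)⌋₊ / 2 = ⌊x * 2 ^ m⌋₊ := by
      rw [← Nat.floor_div_ofNat]
      congr 1
      ring
    rwa [this]
  have hBvol : ∀ e m, good U e m → volume (B e m) ≤ ENNReal.ofReal ((1/2)^(e+2)) := by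
    intro e m hg
    have : B e m ⊆ ⋃ j ∈ (Finset.range (2^m)).filter (U e m), cell m j := by
      rintro x ⟨hx, h⟩
      simp only [Set.mem_iUnion]
      refine ⟨⌊x * 2 ^ m⌋₊, ?_, (mem_cell hx.1).2 rfl⟩
      rw [Finset.mem_filter, Finset.mem_range]
      refine ⟨?_, h⟩
      rw [Nat.floor_lt (mul_nonneg hx.1 (by positivity))]
      push_cast
      nlinarith [hx.2, show (0:ℝ) < 2 ^ m by positivity]
    refine (measure_mono this).trans ?_
    rw [volume_cells]
    apply ENNReal.ofReal_le_ofReal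
    unfold good at hg
    rw [bcount_eq] at hg
    rw [one_div, inv_pow, div_le_iff₀ (by positivity), inv_mul_eq_div, le_div_iff₀ (by positivity)]
    exact_mod_cast hg
  let T : ℕ → ℕ → Set ℝ := fun e N => {x | ∃ m < N, good U e m ∧ x ∈ B e m}
  have hT : ∀ e N, volume (T e N) ≤ ENNReal.ofReal ((1/2)^(e+2)) := by
    intro e N
    induction N with
    | zero => 
      have : T e 0 = ∅ := by ext x; simp [T]
      rw [this]; simp
    | succ N ih =>
      by_cases hg : good U e N
      · refine le_trans (measure_mono ?_) (hBvol e N hg)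
        rintro x ⟨m, hm, _, hx⟩
        exact hBmono e (by omega) hx
      · refine le_trans (measure_mono ?_) ih
        rintro x ⟨m, hm, hg', hx⟩
        refine ⟨m, ?_, hg', hx⟩
        rcases Nat.lt_succ_iff_lt_or_eq.1 hm with h | rfl
        · exact h
        · exact absurd hg' hg
  have h2n : (0:ℝ) < 2 ^ n := by positivity
  have hle1 : (ell U n : ℝ) ≤ 2 ^ n := by
    have : ell U n ≤ 2 ^ n := by
      by_contra hc
      push Not at hc
      exact absurd (lt_ell.1 hc).1 (lt_irrefl _)
    exact_mod_cast this
  have hsub : Set.Ico (0:ℝ) (ell U n / 2 ^ n) ⊆ Set.Ico 0 (1/4) ∪ ⋃ e ∈ Finset.range (n+1), T e (n+1) := by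
    rintro x ⟨hx0, hx1⟩
    rw [lt_div_iff₀ h2n] at hx1
    have hj : ⌊x * 2 ^ n⌋₊ < ell U n := (Nat.floor_lt (by positivity)).2 hx1
    have hxlt : x < 1 := by nlinarith
    rcases (lt_ell.1 hj).2 _ (Nat.lt_succ_self _) with h | ⟨e, he, m, hm, hg, hUm⟩
    · left
      refine ⟨hx0, ?_⟩
      have h3 := Nat.lt_floor_add_one (x * 2 ^ n)
      have h4 : (4:ℝ) * (⌊x * 2 ^ n⌋₊ + 1) ≤ 2 ^ n := by exact_mod_cast h
      nlinarith
    · right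
      simp only [Set.mem_iUnion, Finset.mem_range]
      refine ⟨e, he, m, hm, hg, ⟨hx0, hxlt⟩, ?_⟩
      have : ⌊x * 2 ^ n⌋₊ / 2 ^ (n - m) = ⌊x * 2 ^ m⌋₊ := by
        have h5 := Nat.floor_div_natCast (x * 2 ^ n) (2 ^ (n - m))
        rw [← h5]
        congr 1
        push_cast
        rw [div_eq_iff (by positivity), mul_assoc, ← pow_add]
        congr 2; omega
      rwa [this] at hUm
  have hv2 : volume (Set.Ico (0:ℝ) (ell U n / 2 ^ n)) ≤ volume (Set.Ico (0:ℝ) (1/4)) +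
      ∑ e ∈ Finset.range (n+1), ENNReal.ofReal ((1/2:ℝ)^(e+2)) := by
    refine (measure_mono hsub).trans ((measure_union_le _ _).trans (add_le_add le_rfl ?_))
    exact (measure_biUnion_finset_le _ _).trans (Finset.sum_le_sum fun e _ => hT e (n+1))
  rw [Real.volume_Ico, Real.volume_Ico, ← ENNReal.ofReal_sum_of_nonneg (fun _ _ => by positivity),
    ← ENNReal.ofReal_add (by norm_num) (Finset.sum_nonneg fun _ _ => by positivity),
    ENNReal.ofReal_le_ofReal_iff (add_nonneg (by norm_num) (Finset.sum_nonneg fun _ _ => by positivity))] at hv2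
  have hs : ∑ e ∈ Finset.range (n+1), ((1:ℝ)/2)^(e+2) ≤ 1/2 := by
    have : ∀ N, ∑ e ∈ Finset.range N, ((1:ℝ)/2)^(e+2) = 1/2 - (1/2)^(N+1) := by
      intro N
      induction N with
      | zero => simp
      | succ N ih => rw [Finset.sum_range_succ, ih]; ring
    rw [this]
    have : (0:ℝ) ≤ (1/2)^(n+1+1) := by positivity
    linarith
  linarith

end cov

/-- enumeration of test cells -/
def UL (L : List ℕ) (e m j : ℕ) : Prop := ∃ w < m, isQ w.unpair.1 ∧ isQ w.unpair.2 ∧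
  hb e (L.take m) (Nat.pair (e + 2) w) ∧ qlt w.unpair.1 j 0 (2 ^ m) ∧ qgt w.unpair.2 (j + 1) 0 (2 ^ m)

@[fun_prop] theorem pp_UL {α} [Primcodable α] {L : α → List ℕ} {e m j : α → ℕ} (hL : Primrec L)
    (he : Primrec e) (hm : Primrec m) (hj : Primrec j) : PrimrecPred fun a => UL (L a) (e a) (m a) (j a) := by
  unfold UL; fun_prop

theorem pr_ell : Primrec fun L : List ℕ => ell (UL L) L.length := by
  unfold ell cov good
  fun_prop

end RandProb

namespace RandProb

def U0 (O : ℕ → ℕ) (e m j : ℕ) : Prop := UL (pre O m) e m j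

theorem UL_eq (O : ℕ → ℕ) {n e m : ℕ} (h : m ≤ n) : UL (pre O n) e m = U0 O e m := by
  funext j
  simp only [U0, UL, pre_take, min_eq_left h, min_self]

theorem ell_UL (O : ℕ → ℕ) (n : ℕ) : ell (UL (pre O n)) n = ell (U0 O) n := by
  unfold ell
  congr 1
  funext j
  refine propext (forall₂_congr fun i _ => ?_)
  unfold cov
  refine or_congr_right (exists_congr fun e => and_congr_right fun _ => exists_congr fun m =>
    and_congr_right fun hm => ?_)
  unfold good
  rw [UL_eq O (by omega)]

theorem U0_iff (O : ℕ → ℕ) (c : CodeO) (m j : ℕ) : U0 O c.encode m j ↔ ∃ p q : ℚ,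
    Encodable.encode (p, q) < m ∧ hb c.encode (pre O m) (Nat.pair (c.encode + 2) (Encodable.encode (p, q))) ∧
    (p:ℝ) < j / 2 ^ m ∧ ((j:ℝ) + 1) / 2 ^ m < q := by
  have h2 : (0:ℝ) < 2 ^ m := by positivity
  unfold U0 UL
  rw [pre_take, min_self]
  constructor
  · rintro ⟨w, hw, hp, hq, h, h3, h4⟩
    obtain ⟨p, hp⟩ := exists_of_isQ hp
    obtain ⟨q, hq⟩ := exists_of_isQ hq
    have : Encodable.encode (p, q) = w := by
      rw [Encodable.encode_prod_val, hp, hq, Nat.pair_unpair]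
    refine ⟨p, q, by rwa [this], by rwa [this], ?_, ?_⟩
    · rw [← hp, qlt_iff] at h3; push_cast at h3; rw [lt_div_iff₀ h2]; linarith
    · rw [← hq, qgt_iff] at h4; push_cast at h4; rw [div_lt_iff₀ h2]; linarith
  · rintro ⟨p, q, hw, h, h3, h4⟩
    refine ⟨_, hw, ?_, ?_, h, ?_, ?_⟩
    · rw [Encodable.encode_prod_val, Nat.unpair_pair]; exact isQ_encode p
    · rw [Encodable.encode_prod_val, Nat.unpair_pair]; exact isQ_encode q
    · rw [Encodable.encode_prod_val, Nat.unpair_pair, qlt_iff]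
      rw [lt_div_iff₀ h2] at h3; push_cast; linarith
    · rw [Encodable.encode_prod_val, Nat.unpair_pair, qgt_iff]
      rw [div_lt_iff₀ h2] at h4; push_cast; linarith

theorem U0_mono (O : ℕ → ℕ) (e m j : ℕ) (h : U0 O e m (j / 2)) : U0 O e (m + 1) j := by
  rw [← encode_decC e] at h ⊢
  rw [U0_iff] at h ⊢
  obtain ⟨p, q, h1, h2, h3, h4⟩ := h
  refine ⟨p, q, by omega, hb_mono (by omega) h2, h3.trans_le ?_, lt_of_le_of_lt ?_ h4⟩
  · rw [div_le_div_iff₀ (by positivity) (by positivity), pow_succ]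
    have : ((j/2 : ℕ) : ℝ) * 2 ≤ j := by exact_mod_cast Nat.div_mul_le_self j 2
    have h2 : (0:ℝ) < 2 ^ m := by positivity
    nlinarith
  · rw [div_le_div_iff₀ (by positivity) (by positivity), pow_succ]
    have : (j:ℝ) + 1 ≤ (((j/2 : ℕ) : ℝ) + 1) * 2 := by
      have : j + 1 ≤ (j/2 + 1) * 2 := by omega
      exact_mod_cast this
    have h2 : (0:ℝ) < 2 ^ m := by positivity
    nlinarith

theorem exists_random (O : ℕ → ℕ) : ∃ β : ℝ, 0 < β ∧ β < 1 ∧ LeftCeIn O β ∧ MLRandomIn O β := by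
  obtain ⟨u, hu⟩ : ∃ u : ℕ → ℝ, u = fun n => (ell (U0 O) n : ℝ) / 2 ^ n := ⟨_, rfl⟩
  have hle : ∀ n, u n ≤ 3 / 4 := by subst hu; exact ell_le (U0_mono O)
  have hmono : Monotone u := by
    subst hu
    refine monotone_nat_of_le_succ fun n => ?_
    rw [div_le_div_iff₀ (by positivity) (by positivity), pow_succ]
    have : (2 * ell (U0 O) n : ℝ) ≤ ell (U0 O) (n+1) := by exact_mod_cast ell_succ n
    have h2 : (0:ℝ) < 2 ^ n := by positivity
    nlinarith
  have hbdd : BddAbove (Set.range u) := ⟨3/4, by rintro _ ⟨n, rfl⟩; exact hle n⟩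
  set β := ⨆ n, u n with hβ
  have hub : ∀ n, u n ≤ β := fun n => le_ciSup hbdd n
  have hβle : β ≤ 3/4 := ciSup_le hle
  have hβ0 : 0 < β := by
    refine lt_of_lt_of_le ?_ (hub 2)
    have := ell_four (U := U0 O) 0
    rw [hu]
    have : (1:ℝ) ≤ ell (U0 O) 2 := by exact_mod_cast this
    positivity
  refine ⟨β, hβ0, by linarith, ?_, ?_⟩
  · refine lce_of_sup (A := fun L => ell (UL L) L.length) (B := fun _ => 0) (D := 1) pr_ell
      (by fun_prop) one_pos ?_ ?_
    · intro t
      have := hub t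
      rw [hu] at this
      simpa [ell_UL] using this
    · intro x hx
      obtain ⟨t, ht⟩ := exists_lt_of_lt_ciSup hx
      refine ⟨t, ?_⟩
      rw [hu] at ht
      simpa [ell_UL] using ht
  · rintro W ⟨c, hc⟩ htest
    refine ⟨c.encode + 2, ?_⟩
    rintro ⟨p, q, hmem, hp, hq⟩
    have hW : ∀ m, m ∈ W ↔ ∃ k, hb c.encode (pre O k) m := by
      intro m; rw [hc]; exact dom_iff_hb O c m
    have hgood : ∀ m, good (U0 O) c.encode m := by
      intro m
      have h1 : (⋃ j ∈ (Finset.range (2^m)).filter (U0 O c.encode m), cell m j) ⊆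
          testSet W (c.encode + 2) := by
        intro x hx
        simp only [Set.mem_iUnion, Finset.mem_filter] at hx
        obtain ⟨j, ⟨_, hj⟩, hx⟩ := hx
        obtain ⟨p, q, _, h2, h3, h4⟩ := (U0_iff O c m j).1 hj
        exact ⟨p, q, (hW _).2 ⟨_, h2⟩, lt_of_lt_of_le h3 hx.1, hx.2.trans h4⟩
      have h2 := (measure_mono h1).trans (htest _)
      rw [volume_cells, ENNReal.ofReal_le_ofReal_iff (by positivity), div_le_iff₀ (by positivity),
        inv_pow, inv_mul_eq_div, le_div_iff₀ (by positivity)] at h2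
      unfold good
      rw [bcount_eq]
      exact_mod_cast h2
    obtain ⟨k0, hk0⟩ := (hW _).1 hmem
    obtain ⟨n1, hn1⟩ := exists_lt_of_lt_ciSup hp
    obtain ⟨n2, hn2⟩ := exists_pow_lt_of_lt_one (sub_pos.2 hq) (by norm_num : (1/2:ℝ) < 1)
    set n := max (max (max k0 n1) (max n2 c.encode)) (Encodable.encode (p, q) + 1) with hn
    have hU : U0 O c.encode n (ell (U0 O) n) := by
      rw [U0_iff]
      refine ⟨p, q, by omega, hb_mono (by omega) hk0, ?_, ?_⟩
      · have h1 := hmono (show n1 ≤ n by omega)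
        have : u n = (ell (U0 O) n : ℝ) / 2 ^ n := by rw [hu]
        rw [← this]; exact hn1.trans_le h1
      · have h1 := hub n
        have h2 : u n = (ell (U0 O) n : ℝ) / 2 ^ n := by rw [hu]
        rw [h2] at h1
        have h3 : (1/2:ℝ) ^ n ≤ (1/2) ^ n2 := pow_le_pow_of_le_one (by norm_num) (by norm_num) (by omega)
        rw [add_div]
        rw [one_div, inv_pow, ← one_div] at h3
        linarith
    have hlt : ell (U0 O) n < 2 ^ n := by
      have := hle n
      rw [hu] at this
      simp only at this
      rw [div_le_iff₀ (by positivity)] at this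
      have h2 : (0:ℝ) < 2 ^ n := by positivity
      have : (ell (U0 O) n : ℝ) < 2 ^ n := by linarith
      exact_mod_cast this
    refine ell_not_cov hlt (Or.inr ⟨c.encode, by omega, n, by omega, hgood n, ?_⟩)
    simpa using hU

end RandProb

namespace RandProb

/-- `q * D + A ≤ q' * E` -/
def qle2 (m m' A D E : ℕ) : Prop :=
  qP m * D * qD m' + A * qD m * qD m' + qN m' * E * qD m ≤ qP m' * E * qD m + qN m * D * qD m'

section
variable {α : Type*} [Primcodable α] {f f' A D E : α → ℕ}
@[fun_prop] theorem pp_qle2 (hf : Primrec f) (hf' : Primrec f') (hA : Primrec A) (hD : Primrec D)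
    (hE : Primrec E) :
    PrimrecPred fun a => qle2 (f a) (f' a) (A a) (D a) (E a) := by
  unfold qle2; fun_prop
end

theorem qle2_iff (q q' : ℚ) (A D E : ℕ) : qle2 (Encodable.encode q) (Encodable.encode q') A D E ↔
    (q : ℝ) * D + A ≤ q' * E := by
  have h := rat_val q
  have hp := qD_pos q
  have h' := rat_val q'
  have hp' := qD_pos q'
  unfold qle2
  rw [← Nat.cast_le (α := ℝ), ← mul_le_mul_iff_left₀ (mul_pos hp hp') (b := (q : ℝ) * D + A)]
  push_cast
  have e1 : ((q : ℝ) * D + A) * (qD (Encodable.encode q) * qD (Encodable.encode q')) =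
    (qP (Encodable.encode q) - qN (Encodable.encode q)) * D * qD (Encodable.encode q')
    + A * qD (Encodable.encode q) * qD (Encodable.encode q') := by rw [← h]; ring
  have e2 : ((q' : ℝ) * E) * (qD (Encodable.encode q) * qD (Encodable.encode q')) =
    (qP (Encodable.encode q') - qN (Encodable.encode q')) * E * qD (Encodable.encode q) := by
      rw [← h']; ring
  rw [e1, e2]
  constructor <;> intro h <;> linarith

theorem volume_expand {β γ : ℕ → ℝ} (hγ : Monotone γ) (hβ : Monotone β) {a : ℝ} (ha : 0 < a)
    {C : ℕ → ℝ → Prop} {T : Set ℝ} (h1 : ∀ s x, C s x → β s < x)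
    (h2 : ∀ s x y, C s y → β s < x → x ≤ y → C s x) (h3 : ∀ s x, C s x → a * x + γ s ∈ T) :
    volume {x | ∃ s, C s x} ≤ ENNReal.ofReal a⁻¹ * volume T := by
  obtain ⟨E, hE⟩ : ∃ E : Set ℝ, E = {x | ∃ s, C s x} := ⟨_, rfl⟩
  have hex : ∀ x ∈ E, ∃ s, C s x := fun x hx => by rw [hE] at hx; exact hx
  obtain ⟨φ, hφ⟩ : ∃ φ : ℝ → ℝ, φ = fun x => a * x + γ (if h : ∃ s, C s x then Nat.find h else 0) :=
    ⟨_, rfl⟩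
  have key : ∀ x ∈ E, ∀ y ∈ E, x < y → a * (y - x) ≤ φ y - φ x := by
    intro x hx y hy hxy
    have hx' := hex x hx
    have hy' := hex y hy
    have : Nat.find hx' ≤ Nat.find hy' := by
      by_contra hlt
      push Not at hlt
      refine Nat.find_min hx' hlt (h2 _ x y (Nat.find_spec hy') ?_ hxy.le)
      exact lt_of_le_of_lt (hβ hlt.le) (h1 _ _ (Nat.find_spec hx'))
    have := hγ this
    simp only [hφ, dif_pos hx', dif_pos hy']
    linarith
  have hT : φ '' E ⊆ T := by
    rintro _ ⟨x, hx, rfl⟩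
    simp only [hφ, dif_pos (hex x hx)]
    exact h3 _ _ (Nat.find_spec (hex x hx))
  have key2 : ∀ x ∈ E, ∀ y ∈ E, a * |x - y| ≤ |φ x - φ y| := by
    intro x hx y hy
    rcases lt_trichotomy x y with h | h | h
    · have := key x hx y hy h
      rw [abs_sub_comm, abs_of_pos (sub_pos.2 h), abs_sub_comm]
      exact this.trans (le_abs_self _)
    · subst h; simp
    · have := key y hy x hx h
      rw [abs_of_pos (sub_pos.2 h)]
      exact this.trans (le_abs_self _)
  have hinj : Set.InjOn φ E := by
    intro x hx y hy h
    have := key2 x hx y hy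
    rw [h, sub_self, abs_zero] at this
    have h4 : |x - y| ≤ 0 := by
      by_contra h5; push Not at h5; nlinarith
    exact sub_eq_zero.1 (abs_nonpos_iff.1 h4)
  have hlip : LipschitzOnWith (Real.toNNReal a⁻¹) (Function.invFunOn φ E) (φ '' E) := by
    refine LipschitzOnWith.of_dist_le_mul ?_
    rintro _ ⟨x, hx, rfl⟩ _ ⟨y, hy, rfl⟩
    rw [hinj.leftInvOn_invFunOn hx, hinj.leftInvOn_invFunOn hy, Real.dist_eq, Real.dist_eq,
      Real.coe_toNNReal _ (by positivity), inv_mul_eq_div, le_div_iff₀ ha, mul_comm]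
    exact key2 x hx y hy
  have h5 := hlip.hausdorffMeasure_image_le (d := 1) zero_le_one
  rw [hinj.invFunOn_image subset_rfl, hausdorffMeasure_real, ENNReal.rpow_one] at h5
  rw [← hE]
  exact h5.trans (mul_le_mul_right (measure_mono hT) _)

theorem random_lemma {O : ℕ → ℕ} {α β γ : ℝ} {k : ℕ} (hβ0 : 0 < β) (hβ : LeftCeIn O β)
    (hr : MLRandomIn O β) (hγ0 : 0 ≤ γ) (hγ : LeftCeIn O γ) (hα : α = (1/2)^k * β + γ) :
    MLRandomIn O α := by
  obtain ⟨gβ, Hβ⟩ := lce_form hβ0.le hβ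
  obtain ⟨gγ, Hγ⟩ := lce_form hγ0 hγ
  have hprβ := Hβ.pr
  have hprγ := Hγ.pr
  rintro W ⟨c, hc⟩ htest
  have hW : ∀ m, m ∈ W ↔ ∃ k, hb c.encode (pre O k) m := by
    intro m; rw [hc]; exact dom_iff_hb O c m
  obtain ⟨P, hP⟩ : ∃ P : ℕ → List ℕ → ℕ → Prop, P = fun w L m =>
    isQ w.unpair.1 ∧ isQ w.unpair.2 ∧ isQ m.unpair.2.unpair.1 ∧ isQ m.unpair.2.unpair.2 ∧
    hb c.encode L (Nat.pair (m.unpair.1 + k) w) ∧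
    qlt w.unpair.1 (gβ L + 2^k * gγ L) 0 (2^k * 2^L.length) ∧
    ¬ qlt m.unpair.2.unpair.1 (gβ L) 0 (2^L.length) ∧
    qle2 m.unpair.2.unpair.2 w.unpair.2 (2^k * gγ L) (2^L.length) (2^k*2^L.length) := ⟨_, rfl⟩
  have hPP : PrimrecPred fun x : ℕ × List ℕ × ℕ => P x.1 x.2.1 x.2.2 := by
    rw [hP]; fun_prop
  have hce := ce_of (O := O) hPP
  obtain ⟨C, hC⟩ : ∃ C : ℕ → ℕ → ℝ → Prop, C = fun i s x => ap O gβ s < x ∧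
    ∃ p' q' : ℚ, hb c.encode (pre O s) (Nat.pair (i + k) (Encodable.encode (p', q'))) ∧
      (p' : ℝ) < (1/2)^k * ap O gβ s + ap O gγ s ∧ (1/2)^k * x + ap O gγ s < q' := ⟨_, rfl⟩
  have e1 : ∀ (p' : ℚ) (s : ℕ), qlt (Encodable.encode p') (gβ (pre O s) + 2^k * gγ (pre O s)) 0 (2^k * 2^s) ↔
      (p' : ℝ) < (1/2)^k * ap O gβ s + ap O gγ s := by
    intro p' s
    have h2 : (0:ℝ) < 2^k * 2 ^ s := by positivity
    have h3 : (1/2:ℝ)^k * ap O gβ s + ap O gγ s = (gβ (pre O s) + 2^k * gγ (pre O s)) / (2^k * 2^s) := by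
      unfold ap; rw [one_div, inv_pow]; field_simp
    rw [qlt_iff, h3, lt_div_iff₀ h2]; push_cast; rw [add_zero]
  have e2 : ∀ (p : ℚ) (s : ℕ), ¬ qlt (Encodable.encode p) (gβ (pre O s)) 0 (2^s) ↔ ap O gβ s ≤ p := by
    intro p s
    rw [qlt_iff, ap, div_le_iff₀ (by positivity)]; push_cast; rw [add_zero, not_lt]
  have e3 : ∀ (q q' : ℚ) (s : ℕ), qle2 (Encodable.encode q) (Encodable.encode q') (2^k * gγ (pre O s)) (2^s) (2^k*2^s)
      ↔ (1/2)^k * (q:ℝ) + ap O gγ s ≤ q' := by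
    intro q q' s
    have h3 : (1/2)^k * (q:ℝ) + ap O gγ s = (q * 2 ^ s + 2^k * gγ (pre O s)) / (2^k * 2^s) := by
      unfold ap; rw [one_div, inv_pow]; field_simp
    rw [qle2_iff, h3, div_le_iff₀ (by positivity)]; push_cast; rfl
  have hset : ∀ i, testSet {m | ∃ a k, P a (pre O k) m} i = {x | ∃ s, C i s x} := by
    intro i
    ext x
    simp only [testSet, Set.mem_ofPred_eq, hP, hC, Nat.unpair_pair, Encodable.encode_prod_val, pre_length]
    constructor
    · rintro ⟨p, q, ⟨w, s, hq1, hq2, -, -, h1, h2, h3, h4⟩, hx1, hx2⟩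
      obtain ⟨p', hp'⟩ := exists_of_isQ hq1
      obtain ⟨q', hq'⟩ := exists_of_isQ hq2
      rw [← hp', e1] at h2
      rw [e2] at h3
      rw [← hq', e3] at h4
      refine ⟨s, h3.trans_lt hx1, p', q', ?_, h2, lt_of_lt_of_le ?_ h4⟩
      · rwa [hp', hq', Nat.pair_unpair]
      · have : (0:ℝ) < (1/2)^k := by positivity
        gcongr
    · rintro ⟨s, hx, p', q', h1, h2, h3⟩
      have ha : (0:ℝ) < (1/2)^k := by positivity
      obtain ⟨p, hp1, hp2⟩ := exists_rat_btwn hx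
      obtain ⟨q, hq1, hq2⟩ := exists_rat_btwn (show x < (q' - ap O gγ s) / (1/2)^k by
        rw [lt_div_iff₀ ha]; linarith)
      rw [lt_div_iff₀ ha] at hq2
      refine ⟨p, q, ⟨Nat.pair (Encodable.encode p') (Encodable.encode q'), s, ?_⟩, hp2, hq1⟩
      simp only [Nat.unpair_pair, e1, e2, e3]
      exact ⟨isQ_encode _, isQ_encode _, isQ_encode _, isQ_encode _, h1, h2, hp1.le, by linarith⟩
  have hvol : ∀ i, volume (testSet {m | ∃ a k, P a (pre O k) m} i) ≤ ENNReal.ofReal ((2:ℝ)⁻¹^i) := by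
    intro i
    rw [hset]
    have ha : (0:ℝ) < (1/2)^k := by positivity
    refine (volume_expand (T := testSet W (i+k)) Hγ.mono Hβ.mono ha ?_ ?_ ?_).trans
      ((mul_le_mul_right (htest (i+k)) _).trans ?_)
    · intro s x h; rw [hC] at h; exact h.1
    · intro s x y h hx hxy
      rw [hC] at h ⊢
      obtain ⟨-, p', q', h1, h2, h3⟩ := h
      refine ⟨hx, p', q', h1, h2, lt_of_le_of_lt ?_ h3⟩
      gcongr
    · intro s x h
      rw [hC] at h
      obtain ⟨hx, p', q', h1, h2, h3⟩ := h
      refine ⟨p', q', (hW _).2 ⟨s, h1⟩, h2.trans ?_, h3⟩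
      gcongr
    · rw [← ENNReal.ofReal_mul (by positivity)]
      refine ENNReal.ofReal_le_ofReal (le_of_eq ?_)
      rw [pow_add, one_div, inv_pow, inv_pow, inv_inv]; field_simp
  obtain ⟨i, hi⟩ := hr _ hce hvol
  refine ⟨i + k, fun hα' => hi ?_⟩
  obtain ⟨p', q', h1, h2, h3⟩ := hα'
  rw [hset, hC]
  obtain ⟨k0, hk0⟩ := (hW _).1 h1
  have ha : (0:ℝ) < (1/2)^k := by positivity
  have hε : 0 < α - p' := sub_pos.2 h2
  obtain ⟨s1, hs1⟩ := Hβ.sup (β - (α - p')/2) (by linarith)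
  obtain ⟨s2, hs2⟩ := Hγ.sup (γ - (α - p')/2) (by linarith)
  obtain ⟨s, hs⟩ : ∃ s, s = max k0 (max s1 s2) := ⟨_, rfl⟩
  have m1 := Hβ.mono (show s1 ≤ s by omega)
  have m2 := Hγ.mono (show s2 ≤ s by omega)
  have ha1 : (1/2:ℝ)^k ≤ 1 := pow_le_one₀ (by norm_num) (by norm_num)
  refine ⟨s, Hβ.lt hβ0 s, p', q', hb_mono (by omega) hk0, ?_, ?_⟩
  · have : (1/2:ℝ)^k * (β - ap O gβ s) ≤ 1 * (β - ap O gβ s) :=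
      mul_le_mul_of_nonneg_right ha1 (by linarith [Hβ.le s])
    linarith
  · have := Hγ.le s
    linarith

end RandProb

namespace RandProb

theorem volume_ks {α β : ℕ → ℝ} (hα : Monotone α) (hβ : Monotone β) {c : ℝ} (hc : 0 < c)
    (h0 : 0 ≤ β 0) (h1 : ∀ s, β s ≤ 1) :
    volume {x | ∃ s, α s < x ∧ ∃ t ≤ s, x < α t + c * (β s - β t)} ≤ ENNReal.ofReal c := by
  obtain ⟨r, hr0, hrs⟩ : ∃ r : ℕ → ℝ, r 0 = α 0 ∧
      ∀ s, r (s+1) = max (r s + c * (β (s+1) - β s)) (α (s+1)) :=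
    ⟨fun s => Nat.rec (α 0) (fun s v => max (v + c * (β (s+1) - β s)) (α (s+1))) s, rfl, fun s => rfl⟩
  have hra : ∀ s, α s ≤ r s := by
    intro s; cases s with
    | zero => exact hr0.ge
    | succ s => rw [hrs]; exact le_max_right _ _
  have hrt : ∀ t s, t ≤ s → α t + c * (β s - β t) ≤ r s := by
    intro t s hts
    induction s, hts using Nat.le_induction with
    | base => simpa using hra t
    | succ s hs ih =>
      rw [hrs]; refine le_trans ?_ (le_max_left _ _); nlinarith
  have hsub : {x | ∃ s, α s < x ∧ ∃ t ≤ s, x < α t + c * (β s - β t)} ⊆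
      ⋃ j, Set.Ico (r j) (r j + c * (β (j+1) - β j)) := by
    rintro x ⟨s, hx, t, hts, hxt⟩
    have hex : ∃ s, x < r s := ⟨s, hxt.trans_le (hrt t s hts)⟩
    have hle : Nat.find hex ≤ s := Nat.find_min' hex (hxt.trans_le (hrt t s hts))
    have hspec := Nat.find_spec hex
    have hmin := fun m => Nat.find_min hex (m := m)
    generalize Nat.find hex = n at hle hspec hmin
    cases n with
    | zero =>
      rw [hr0] at hspec
      have := hα (Nat.zero_le s)
      linarith
    | succ j =>
      have h2 := hmin j (by omega)
      push Not at h2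
      refine Set.mem_iUnion.2 ⟨j, h2, ?_⟩
      rw [hrs, lt_max_iff] at hspec
      rcases hspec with h | h
      · exact h
      · have := hα hle
        linarith
  refine (measure_mono hsub).trans ((measure_iUnion_le _).trans (ENNReal.tsum_le_of_sum_range_le fun n => ?_))
  simp only [Real.volume_Ico, add_sub_cancel_left]
  rw [← ENNReal.ofReal_sum_of_nonneg]
  · refine ENNReal.ofReal_le_ofReal ?_
    rw [← Finset.mul_sum, Finset.sum_range_sub]
    have := h1 n
    nlinarith
  · intro j _
    have := hβ (Nat.le_succ j)
    exact mul_nonneg hc.le (sub_nonneg.2 this)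

theorem kucera_slaman {O : ℕ → ℕ} {α β : ℝ} (hα0 : 0 < α) (hα : LeftCeIn O α)
    (hr : MLRandomIn O α) (hβ0 : 0 ≤ β) (hβ1 : β ≤ 1) (hβ : LeftCeIn O β) :
    ∃ K, ∀ k, K ≤ k → LeftCeIn O ((2^k * α - β) / (2^k - 1)) := by
  obtain ⟨gα, Hα⟩ := lce_form hα0.le hα
  obtain ⟨gβ, Hβ⟩ := lce_form hβ0 hβ
  have hprβ := Hβ.pr
  have hprα := Hα.pr
  obtain ⟨P, hP⟩ : ∃ P : ℕ → List ℕ → ℕ → Prop, P = fun t L m =>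
    t ≤ L.length ∧ isQ m.unpair.2.unpair.1 ∧ isQ m.unpair.2.unpair.2 ∧
    ¬ qlt m.unpair.2.unpair.1 (gα L) 0 (2^L.length) ∧
    ¬ qgt m.unpair.2.unpair.2 (2^m.unpair.1 * 2^L.length * gα (L.take t) + 2^t * gβ L)
      (2^L.length * gβ (L.take t)) (2^m.unpair.1 * 2^t * 2^L.length) := ⟨_, rfl⟩
  have hPP : PrimrecPred fun x : ℕ × List ℕ × ℕ => P x.1 x.2.1 x.2.2 := by
    rw [hP]; fun_prop
  have hce := ce_of (O := O) hPP
  have e2 : ∀ (p : ℚ) (s : ℕ), ¬ qlt (Encodable.encode p) (gα (pre O s)) 0 (2^s) ↔ ap O gα s ≤ p := by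
    intro p s
    rw [qlt_iff, ap, div_le_iff₀ (by positivity)]; push_cast; rw [add_zero, not_lt]
  have e3 : ∀ (q : ℚ) (i s t : ℕ), t ≤ s → (¬ qgt (Encodable.encode q)
      (2^i * 2^s * gα ((pre O s).take t) + 2^t * gβ (pre O s))
      (2^s * gβ ((pre O s).take t)) (2^i * 2^t * 2^s)
      ↔ (q:ℝ) ≤ ap O gα t + (2:ℝ)⁻¹^i * (ap O gβ s - ap O gβ t)) := by
    intro q i s t hts
    have h3 : ap O gα t + (2:ℝ)⁻¹^i * (ap O gβ s - ap O gβ t) =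
      ((2^i * 2^s * gα (pre O t) + 2^t * gβ (pre O s)) - 2^s * gβ (pre O t)) / (2^i * 2^t * 2^s) := by
      unfold ap; rw [inv_pow]; field_simp; ring
    rw [pre_take, min_eq_left hts, qgt_iff, h3, le_div_iff₀ (by positivity)]; push_cast
    rw [not_lt]
    constructor <;> intro h <;> linarith
  have hset : ∀ i, testSet {m | ∃ a k, P a (pre O k) m} i =
      {x | ∃ s, ap O gα s < x ∧ ∃ t ≤ s, x < ap O gα t + (2:ℝ)⁻¹^i * (ap O gβ s - ap O gβ t)} := by
    intro i
    ext x
    simp only [testSet, Set.mem_ofPred_eq, hP, Nat.unpair_pair, Encodable.encode_prod_val, pre_length]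
    constructor
    · rintro ⟨p, q, ⟨t, s, hts, -, -, h1, h2⟩, hx1, hx2⟩
      rw [e2] at h1
      rw [e3 _ _ _ _ hts] at h2
      exact ⟨s, h1.trans_lt hx1, t, hts, hx2.trans_le h2⟩
    · rintro ⟨s, hx, t, hts, hx2⟩
      obtain ⟨p, hp1, hp2⟩ := exists_rat_btwn hx
      obtain ⟨q, hq1, hq2⟩ := exists_rat_btwn hx2
      refine ⟨p, q, ⟨t, s, hts, isQ_encode _, isQ_encode _, ?_, ?_⟩, hp2, hq1⟩
      · rw [e2]; exact hp1.le
      · rw [e3 _ _ _ _ hts]; exact hq2.le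
  have hz : 0 ≤ ap O gβ 0 := by unfold ap; positivity
  obtain ⟨i, hi⟩ := hr _ hce (fun i => by
    rw [hset]
    exact volume_ks Hα.mono Hβ.mono (by positivity) hz (fun s => (Hβ.le s).trans hβ1))
  rw [hset] at hi
  simp only [Set.mem_ofPred_eq] at hi
  push Not at hi
  have key : ∀ t, (2:ℝ)⁻¹^i * (β - ap O gβ t) ≤ α - ap O gα t := by
    intro t
    by_contra hlt
    push Not at hlt
    have hc : (0:ℝ) < 2⁻¹^i := by positivity
    obtain ⟨s, hs⟩ := Hβ.sup (ap O gβ t + (α - ap O gα t) / 2⁻¹^i) (by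
      rw [← lt_sub_iff_add_lt', div_lt_iff₀ hc]; linarith)
    have hα' := Hα.lt hα0
    have m1 := Hβ.mono (le_max_left s t)
    have := hi (max s t) (hα' _) t (le_max_right _ _)
    rw [← lt_sub_iff_add_lt', div_lt_iff₀ hc] at hs
    nlinarith
  refine ⟨i + 1, fun k hk => ?_⟩
  have h2k : (2:ℝ) ≤ 2^k := by
    calc (2:ℝ) = 2^1 := by norm_num
      _ ≤ 2^k := pow_le_pow_right₀ (by norm_num) (by omega)
  have h2n : 2 ≤ 2^k := by exact_mod_cast h2k
  have hD : ((2^k - 1 : ℕ) : ℝ) = 2^k - 1 := by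
    rw [Nat.cast_sub (by omega)]; push_cast; rfl
  have hval : (2^k * α - β) / (2^k - 1) * ((2^k - 1 : ℕ) : ℝ) = 2^k * α - β := by
    rw [hD, div_mul_cancel₀]; linarith
  have hap : ∀ t, (((2^k * gα (pre O t) : ℕ) : ℝ) - gβ (pre O t)) / 2^t = 2^k * ap O gα t - ap O gβ t := by
    intro t; unfold ap; push_cast; ring
  refine lce_of_sup (A := fun L => 2^k * gα L) (B := gβ) (D := 2^k - 1) (by fun_prop) hprβ
    (by omega) ?_ ?_
  · intro t
    rw [hval]
    simp only [hap]
    have h3 := key t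
    have h4 := Hβ.le t
    have h5 : (2:ℝ)^i ≤ 2^k := pow_le_pow_right₀ (by norm_num) (by omega)
    rw [inv_pow, inv_mul_le_iff₀ (by positivity)] at h3
    have h6 := Hα.le t
    nlinarith
  · intro x hx
    have hDp : (0:ℝ) < ((2^k - 1 : ℕ) : ℝ) := by rw [hD]; linarith
    have h3 : x * ((2^k - 1 : ℕ) : ℝ) < 2^k * α - β := by
      rw [← hval]; exact mul_lt_mul_of_pos_right hx hDp
    obtain ⟨t, ht⟩ := Hα.sup (α - (2^k * α - β - x * ((2^k - 1 : ℕ) : ℝ)) / 2^k) (by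
      have : 0 < (2^k * α - β - x * ((2^k - 1 : ℕ) : ℝ)) / 2^k := by
        apply div_pos <;> linarith
      linarith)
    refine ⟨t, ?_⟩
    simp only [hap]
    have h4 := Hβ.le t
    rw [sub_lt_comm, lt_div_iff₀ (by positivity)] at ht
    linarith

end RandProb

namespace RandProb

def shL (L : List ℕ) (d : ℕ) : List ℕ := (List.range (L.length - d)).map fun i => (L[i + d]?).getD 0

theorem shL_pre (O : ℕ → ℕ) (k d : ℕ) : shL (pre O k) d = pre (fun i => O (i + d)) (k - d) := by
  unfold shL
  rw [pre_length]
  unfold pre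
  refine List.map_congr_left fun i hi => ?_
  have : i < k - d := List.mem_range.1 hi
  rw [List.getElem?_map, List.getElem?_range (by omega)]
  rfl

theorem rfindOpt_eq {f : ℕ → Option ℕ} {p : Part ℕ} (h : ∀ v, v ∈ p ↔ ∃ k, f k = some v) :
    Nat.rfindOpt f = p := by
  ext v
  constructor
  · intro hv
    obtain ⟨k, hk⟩ := Nat.rfindOpt_spec hv
    exact (h v).2 ⟨k, hk⟩
  · intro hv
    obtain ⟨k, hk⟩ := (h v).1 hv
    have hd : (Nat.rfindOpt f).Dom := Nat.rfindOpt_dom.2 ⟨k, v, hk⟩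
    obtain ⟨w, hw⟩ := Part.dom_iff_mem.1 hd
    obtain ⟨k', hk'⟩ := Nat.rfindOpt_spec hw
    have := (h w).2 ⟨k', hk'⟩
    rwa [Part.mem_unique hv this]

theorem dispatch {E D : List ℕ → ℕ} (hE : Primrec E) (hD : Primrec D) :
    ∃ u : CodeO, ∀ (O : ℕ → ℕ) (e d : ℕ), (∀ k, D (pre O k) ≤ k ↔ d ≤ k) →
      (∀ k, d ≤ k → E (pre O k) = e ∧ D (pre O k) = d) →
      ∀ n, u.eval O n = (decC e).eval (fun i => O (i + d)) n := by
  have hg : Primrec fun p : List ℕ × ℕ => if D p.1 ≤ p.1.length then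
      st (E p.1) (shL p.1 (D p.1)) p.2 else none := by
    unfold shL
    fun_prop
  obtain ⟨u, hu⟩ := gen (g := fun L n => if D L ≤ L.length then st (E L) (shL L (D L)) n else none) hg
  refine ⟨u, fun O e d h1 h2 n => ?_⟩
  rw [hu]
  refine rfindOpt_eq fun v => ?_
  rw [mem_eval_st, encode_decC]
  constructor
  · rintro ⟨k, hk⟩
    obtain ⟨h3, h4⟩ := h2 (k + d) (by omega)
    refine ⟨k + d, ?_⟩
    rw [pre_length, if_pos ((h1 _).2 (by omega)), h3, h4, shL_pre, Nat.add_sub_cancel]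
    exact hk
  · rintro ⟨k, hk⟩
    rw [pre_length] at hk
    by_cases hd : d ≤ k
    · obtain ⟨h3, h4⟩ := h2 k hd
      rw [if_pos ((h1 _).2 hd), h3, h4, shL_pre] at hk
      exact ⟨_, hk⟩
    · rw [if_neg (fun h => hd ((h1 _).1 h))] at hk
      exact absurd hk (by simp)

theorem oX_shift (ρ : List Bool) (X : Cantor) : (fun i => oX (prepend ρ X) (i + ρ.length)) = oX X := by
  funext i
  simp [oX, prepend]

theorem pre_getD {O : ℕ → ℕ} {i k : ℕ} (h : i < k) : ((pre O k)[i]?).getD 0 = O i := by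
  unfold pre
  rw [List.getElem?_map, List.getElem?_range h]
  rfl

def sig (e : ℕ) : List Bool := ((List.range e).map fun _ => false) ++ [true]

theorem sig_length (e : ℕ) : (sig e).length = e + 1 := by simp [sig]

theorem oX_sig (e : ℕ) (X : Cantor) {i : ℕ} (h : i < e + 1) :
    oX (prepend (sig e) X) i = if i < e then 0 else 1 := by
  unfold oX prepend
  rw [sig_length, if_pos h]
  by_cases h2 : i < e
  · rw [if_pos h2]; simp [sig, List.getElem?_append, h2]
  · have : i = e := by omega
    subst this
    simp [sig]

theorem sig_inj {e e' : ℕ} (h : sig e <+: sig e') : e = e' := by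
  by_contra hne
  have hl := h.length_le
  rw [sig_length, sig_length] at hl
  have h1 : (sig e)[e]? = some true := by simp [sig]
  have h2 : (sig e')[e]? = some true := by
    obtain ⟨t, ht⟩ := h
    rw [← ht, List.getElem?_append_left (by rw [sig_length]; omega), h1]
  have h3 : (sig e')[e]? = some false := by
    have : e < e' := by omega
    simp [sig, List.getElem?_append, this]
  rw [h3] at h2
  simp at h2

theorem exists_universal : ∃ u, UniversalOM u := by
  obtain ⟨E, hE⟩ : ∃ E : List ℕ → ℕ, E = fun L =>
    bcount (fun j => ∀ i < j + 1, (L[i]?).getD 0 = 0) L.length := ⟨_, rfl⟩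
  have hEp : Primrec E := by rw [hE]; fun_prop
  obtain ⟨u, hu⟩ := dispatch hEp (D := fun L => E L + 1) (by fun_prop)
  have hval : ∀ e X k, E (pre (oX (prepend (sig e) X)) k) = min e k := by
    intro e X k
    have hj : ∀ j, j < E (pre (oX (prepend (sig e) X)) k) ↔ j < min e k := by
      intro j
      simp only [hE]
      rw [← bcount_lt_iff (fun i j hij h i' hi' => h i' (by omega)), pre_length, lt_min_iff]
      constructor
      · rintro ⟨h1, h2⟩
        refine ⟨?_, h1⟩
        by_contra hlt
        have := h2 e (by omega)
        rw [pre_getD (by omega), oX_sig e X (by omega)] at this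
        simp at this
      · rintro ⟨h1, h2⟩
        refine ⟨h2, fun i hi => ?_⟩
        rw [pre_getD (by omega), oX_sig e X (by omega), if_pos (by omega)]
    have h1 := hj (min e k)
    have h2 := hj (E (pre (oX (prepend (sig e) X)) k))
    omega
  refine ⟨u, fun c => sig c.encode, ⟨fun e => Encodable.encode (sig e), ?_, fun c => rfl⟩, ?_, ?_⟩
  · refine Primrec.to_comp (Primrec.encode.comp ?_)
    unfold sig; fun_prop
  · rintro _ ⟨c, rfl⟩ _ ⟨d, rfl⟩ h
    exact congrArg sig (sig_inj h)
  · intro c X n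
    have h3 := hu (oX (prepend (sig c.encode) X)) c.encode (c.encode + 1) ?_ ?_ n
    · unfold evalO
      rw [h3, decC_encode, ← sig_length, oX_shift]
    · intro k
      simp only [hval]; omega
    · intro k hk
      simp only [hval]
      omega

theorem exists_step (c d : CodeO) : ∃ e : CodeO, (∀ X n, evalO (consB false X) e n = evalO X c n) ∧
    ∀ X n, evalO (consB true X) e n = evalO X d n := by
  obtain ⟨u, hu⟩ := dispatch (E := fun L => if (L[0]?).getD 0 = 1 then d.encode else c.encode)
    (D := fun _ => 1) (by fun_prop) (by fun_prop)
  have key : ∀ b X, consB b X = prepend [b] X := by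
    intro b X; rw [prepend_cons, prepend_nil]
  have key0 : ∀ b X, oX (prepend [b] X) 0 = cond b 1 0 := by
    intro b X; simp [oX, prepend]
  refine ⟨u, fun X n => ?_, fun X n => ?_⟩
  · have := hu (oX (prepend [false] X)) c.encode 1 (fun k => Iff.rfl) (fun k hk => by
      rw [pre_getD (by omega), key0]; simp) n
    unfold evalO
    rw [key, this, decC_encode]
    have h2 := oX_shift [false] X
    simp only [List.length_singleton] at h2
    rw [h2]
  · have := hu (oX (prepend [true] X)) d.encode 1 (fun k => Iff.rfl) (fun k hk => by
      rw [pre_getD (by omega), key0]; simp) n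
    unfold evalO
    rw [key, this, decC_encode]
    have h2 := oX_shift [true] X
    simp only [List.length_singleton] at h2
    rw [h2]

theorem universal_step {c e : CodeO} (hc : UniversalOM c)
    (h : ∀ X n, evalO (consB false X) e n = evalO X c n) : UniversalOM e := by
  obtain ⟨σ, ⟨f, hf, hfe⟩, hpf, hev⟩ := hc
  refine ⟨fun c => false :: σ c, ⟨fun n => Nat.pair (Encodable.encode false) (f n) + 1, ?_, ?_⟩, ?_, ?_⟩
  · have : Primrec fun m : ℕ => Nat.pair (Encodable.encode false) m + 1 := by fun_prop
    exact this.to_comp.comp hf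
  · intro c
    simp only [hfe]; rfl
  · rintro _ ⟨c, rfl⟩ _ ⟨d, rfl⟩ h
    simp only [List.cons_prefix_cons, true_and] at h
    have := hpf _ ⟨c, rfl⟩ _ ⟨d, rfl⟩ h
    exact congrArg _ this
  · intro c X n
    rw [prepend_cons, h, hev]

/-- Oracles for which the domain has property `Q`. -/
def gs (Q : Set ℕ → Prop) (c : CodeO) : Set Cantor := {X | Q (domSet c X)}

theorem muR_split {S : Set Cantor} (hS : MeasurableSet S) :
    muR S = 1/2 * muR (consB false ⁻¹' S) + 1/2 * muR (consB true ⁻¹' S) := by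
  have h1 : S = (S ∩ {X | X 0 = false}) ∪ (S ∩ {X | X 0 = true}) := by
    ext X
    rcases Bool.eq_false_or_eq_true (X 0) with h | h <;> simp [h]
  have h2 : Disjoint (S ∩ {X : Cantor | X 0 = false}) (S ∩ {X | X 0 = true}) := by
    rw [Set.disjoint_left]
    rintro X ⟨_, h⟩ ⟨_, h'⟩
    simp only [Set.mem_ofPred_eq] at h h'
    rw [h] at h'; simp at h'
  have h3 : mu S = ENNReal.ofReal (1/2) * mu (consB false ⁻¹' S) +
      ENNReal.ofReal (1/2) * mu (consB true ⁻¹' S) := by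
    conv_lhs => rw [h1]
    rw [measure_union h2 (hS.inter (measurableSet_bit 0 true)), mu_consB hS, mu_consB hS]
  unfold muR
  rw [h3, ENNReal.toReal_add, ENNReal.toReal_mul, ENNReal.toReal_mul, ENNReal.toReal_ofReal (by norm_num)]
  · exact ENNReal.mul_ne_top ENNReal.ofReal_ne_top (measure_ne_top _ _)
  · exact ENNReal.mul_ne_top ENNReal.ofReal_ne_top (measure_ne_top _ _)

theorem gs_pre {Q : Set ℕ → Prop} {c e : CodeO} {φ : Cantor → Cantor}
    (h : ∀ X n, evalO (φ X) e n = evalO X c n) : φ ⁻¹' gs Q e = gs Q c := by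
  ext X
  simp only [gs, Set.mem_preimage, Set.mem_ofPred_eq, domSet, h]

theorem partA {Q : Set ℕ → Prop} (hQ : ∀ c, IsC3 (gs Q c))
    (hQm : ∀ γ, 0 ≤ γ → γ ≤ 1 → LeftCeIn (iterJump 2) γ → ∃ c, muR (gs Q c) = γ)
    {u : CodeO} (hu : UniversalOM u) :
    NRandom 3 (muR (gs Q u)) ∧ LeftCeIn (iterJump 2) (muR (gs Q u)) := by
  refine ⟨?_, (hQ u).lce⟩
  obtain ⟨β, hβ0, hβ1, hβ, hr⟩ := exists_random (iterJump 2)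
  obtain ⟨c, hc⟩ := hQm β hβ0.le hβ1.le hβ
  obtain ⟨σ, -, -, hev⟩ := hu
  have hm := (hQ u).meas
  refine random_lemma (k := (σ c).length) hβ0 hβ hr (muR_nonneg _) ((hQ u).diff (σ c)).lce ?_
  have h1 := mu_prepend (σ c) hm
  rw [gs_pre (fun X n => hev c X n)] at h1
  have h2 := measure_inter_add_sdiff (μ := mu) (gs Q u) (measurableSet_extends (σ c))
  rw [h1] at h2
  unfold muR at hc ⊢
  rw [← h2, ENNReal.toReal_add, ENNReal.toReal_mul, ENNReal.toReal_ofReal (by positivity), hc]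
  · exact ENNReal.mul_ne_top ENNReal.ofReal_ne_top (measure_ne_top _ _)
  · exact measure_ne_top _ _

theorem partB {Q : Set ℕ → Prop} (hQ : ∀ c, IsC3 (gs Q c))
    (hQm : ∀ γ, 0 ≤ γ → γ ≤ 1 → LeftCeIn (iterJump 2) γ → ∃ c, muR (gs Q c) = γ)
    {α : ℝ} (h0 : 0 < α) (h1 : α < 1) (hr : NRandom 3 α) (hα : LeftCeIn (iterJump 2) α) :
    ∃ u, UniversalOM u ∧ muR (gs Q u) = α := by
  obtain ⟨u0, hu0⟩ := exists_universal
  obtain ⟨K, hK⟩ := kucera_slaman h0 hα hr (muR_nonneg (gs Q u0)) (muR_le_one _) (hQ u0).lce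
  have hb0 := muR_nonneg (gs Q u0)
  have hb1 := muR_le_one (gs Q u0)
  obtain ⟨β, hβ⟩ : ∃ β, β = muR (gs Q u0) := ⟨_, rfl⟩
  rw [← hβ] at hK hb0 hb1
  obtain ⟨n1, hn1⟩ := pow_unbounded_of_one_lt (1/α) (by norm_num : (1:ℝ) < 2)
  obtain ⟨n2, hn2⟩ := pow_unbounded_of_one_lt (1/(1-α)) (by norm_num : (1:ℝ) < 2)
  obtain ⟨k, hk⟩ : ∃ k, k = max (max K 1) (max n1 n2) := ⟨_, rfl⟩
  have hk1 : (2:ℝ)^n1 ≤ 2^k := pow_le_pow_right₀ (by norm_num) (by omega)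
  have hk2 : (2:ℝ)^n2 ≤ 2^k := pow_le_pow_right₀ (by norm_num) (by omega)
  have hk3 : (2:ℝ)^1 ≤ 2^k := pow_le_pow_right₀ (by norm_num) (by omega)
  have hka : 1 < 2^k * α := by
    have := hn1.trans_le hk1
    rwa [div_lt_iff₀ h0] at this
  have hkb : 1 < 2^k * (1 - α) := by
    have := hn2.trans_le hk2
    rwa [div_lt_iff₀ (by linarith)] at this
  have hD : (0:ℝ) < 2^k - 1 := by linarith
  obtain ⟨γ, hγ⟩ : ∃ γ, γ = (2^k * α - β) / (2^k - 1) := ⟨_, rfl⟩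
  have hγl : LeftCeIn (iterJump 2) γ := by rw [hγ]; exact hK k (by omega)
  obtain ⟨d, hd⟩ := hQm γ (by rw [hγ]; apply div_nonneg <;> linarith)
    (by rw [hγ, div_le_one hD]; linarith) hγl
  have iter : ∀ j : ℕ, ∃ u, UniversalOM u ∧ muR (gs Q u) = (1/2)^j * β + (1 - (1/2)^j) * γ := by
    intro j
    induction j with
    | zero => exact ⟨u0, hu0, by simp [hβ]⟩
    | succ j ih =>
      obtain ⟨c, hc, hcv⟩ := ih
      obtain ⟨e, he1, he2⟩ := exists_step c d
      refine ⟨e, universal_step hc he1, ?_⟩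
      rw [muR_split (hQ e).meas, gs_pre he1, gs_pre he2, hcv, hd]
      ring
  obtain ⟨u, hu, huv⟩ := iter k
  refine ⟨u, hu, ?_⟩
  rw [huv, hγ, one_div, inv_pow]
  have : (2:ℝ)^k - 1 ≠ 0 := hD.ne'
  field_simp
  ring

/-- **Cofiniteness and computability probabilities for universal oracle machines.**
For a universal oracle machine, the probability of computing a function with cofinite
domain (respectively, with computable domain) is a 3-random `∅''`-left-c.e. real.
Conversely, every 3-random `∅''`-left-c.e. real in `(0,1)` is the cofiniteness
probability of some universal oracle machine, and also the computability probability of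
some universal oracle machine. -/
theorem cof_com_probability_characterization :
    (∀ u : CodeO, UniversalOM u →
        (NRandom 3 (muR (COF u)) ∧ LeftCeIn (iterJump 2) (muR (COF u))) ∧
        (NRandom 3 (muR (COM u)) ∧ LeftCeIn (iterJump 2) (muR (COM u)))) ∧
    (∀ α : ℝ, 0 < α → α < 1 → NRandom 3 α → LeftCeIn (iterJump 2) α →
        (∃ u : CodeO, UniversalOM u ∧ muR (COF u) = α) ∧
        (∃ v : CodeO, UniversalOM v ∧ muR (COM v) = α)) := by
  have eF : ∀ γ, 0 ≤ γ → γ ≤ 1 → LeftCeIn (iterJump 2) γ →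
      ∃ c, muR (gs (fun D => Dᶜ.Finite) c) = γ := fun γ h0 h1 h => by
    obtain ⟨c, hc, _⟩ := exists_machine_lce h0 h1 h
    exact ⟨c, hc⟩
  have eM : ∀ γ, 0 ≤ γ → γ ≤ 1 → LeftCeIn (iterJump 2) γ →
      ∃ c, muR (gs (fun D => ComputablePred fun n => n ∈ D) c) = γ := fun γ h0 h1 h => by
    obtain ⟨c, _, hc⟩ := exists_machine_lce h0 h1 h
    exact ⟨c, hc⟩
  exact ⟨fun u hu => ⟨partA (Q := fun D => Dᶜ.Finite) cof_c3 eF hu, partA (Q := fun D => ComputablePred fun n => n ∈ D) com_c3 eM hu⟩,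
    fun α h0 h1 hr hα => ⟨partB (Q := fun D => Dᶜ.Finite) cof_c3 eF h0 h1 hr hα, partB (Q := fun D => ComputablePred fun n => n ∈ D) com_c3 eM h0 h1 hr hα⟩⟩

end RandProb
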